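/- (Free stable limits.) Let f be entire of strip type with parameter M ≥ 0, with m = 0 and σ = 0 in its data (C, 0, c, 0, (α_j)), and with infinitely many α_j ≠ 0. Define n_{f,+}(r) = #{j : α_j ≠ 0, 0 < Re(1/α_j) < r}, n_{f,−}(r) = #{j : α_j ≠ 0, −r < Re(1/α_j) < 0}, and n_f = n_{f,+} + n_{f,−}. Assume there are α ∈ (0,2) and θ ∈ [0,1] such that n_f(x·r)/n_f(r) → x^α as r → ∞ for every x > 0, and n_{f,+}(r)/n_f(r) → θ as r → ∞. Let b_n = inf{b > 0 : n_f(b) ≥ n}, let E_n → E be a convergent real sequence, and for n with b_n > M set a_n = E_n − c·b_n/n + (1/n)·Σ_j (b_n·α_j)³/(1+(b_n·α_j)²) and f_n(z) = exp(−a_n·z)·f(b_n·z/n). Let Σ_{α,θ} be the finite positive measure on ℝ with Lebesgue density x ↦ α·(θ·1_{x>0} + (1−θ)·1_{x<0})·|x|^{1−α}/(1+x²), and let ν be the free infinitely divisible measure with Lévy pair (0, Σ_{α,θ}). Then ⟦A_{n,f_n}⟧ ⇒ ν_E, where ν_E is the pushforward of ν under x ↦ x + E. -/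

import Mathlib

/-!
Free stable limits of Appell polynomials, by following the logarithmic derivative along
characteristics.

Write `x_j = b_n α_j`. Multiplying an entire function by `1 - c z` applies `1 - c D` to its Appell
polynomials (`appell_mul`), so up to a constant `A_{n,f_n}` is the limit, as the finite set `F`
grows, of `∏_{j ∈ F} (1 - (x_j/n) D) (X - e)^n`, with a real shift `e` depending on `n` and `F`
(`appell_prod`, `appell_lim`, `SD.appell_AA`). It is enough to show that the normalised logarithmic
derivative `q = p'/(n p)` of these polynomials tends to the Cauchy transform `G` of `ν_E`, uniformly
on compact subsets of the upper half-plane.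

For real `x` the operator `1 - (x/n) D` keeps the upper half-plane free of roots (`LH.tt`), and on
such polynomials `q` satisfies a priori bounds: it lies in a disc and is Lipschitz (`LH.nq_disc`,
`LH.nq_lip`). If `q ≈ u` at `z`, then after applying the operator `q ≈ u` at the point
`z + (1/n) x/(1 - x u)`, and the errors of all steps add up to `O(1/n)` (`char_step`, `char_main`).
Starting from `(X - e)^n` at `z = 1/u + e`, the end point of this discrete characteristic is
`1/u + e + (1/n) ∑_j x_j/(1 - x_j u)`. With the centring of the theorem it converges to
`R(u) + 1/u + E`: a layer-cake formula (`layer_cake`) turns the sum into an integral against the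
counting function, regular variation gives the pointwise limit of the integrand, and a Potter bound
allows dominated convergence (`sum_limit`, `SD.potter`, `SD.Rlim`, `SD.Z_lim`). Taking `u = G(z)`
gives `q(z) → G(z)` when all `α_j` are real (`SD.nq_lim`).

In general the `α_j` are first replaced by their real parts. A conjugate pair satisfies
`(1 - (x/n) D)(1 - (x̄/n) D) = (1 - (Re x/n) D)² + (Im x/n)² D²`. The strip condition gives
`|Im α_j| ≤ M |α_j|²`, and with it the last term is, relative to the first, at most a constant times
`|α_j|²`, which is summable (`pert_mod`, `pert_large`). All but finitely many pairs therefore change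
the polynomial by a relative error of at most `1/2`. After taking logarithms and dividing by `n`
this disappears (`QQ.pert`), and the remaining finitely many factors are restored one at a time
(`QQ.step`, `SD.QQ_AA`). The bounds are uniform in the truncation, so they pass to the Appell
polynomials themselves (`SD.appell_nq`).

Finally, locally uniform convergence of `q` in the upper half-plane forces the roots towards the
real line there and, the roots being symmetric under conjugation, everywhere (`WC.near`). Testing
at `iY` for large `Y` gives tightness (`WC.tight`), and smoothing a test function with the Poisson
kernel expresses its integral through `Im q` (`WC.HH_lim`); together these yield the weak limit
(`WC.weak`).
-/
open Complex Filter Topology Polynomial MeasureTheory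

/-- The `n`-th Appell polynomial of an entire function `f`:
`A_{n,f}(z) = ∑_{k=0}^n f^{(k)}(0)·C(n,k)·z^{n-k}`. -/
noncomputable def appell (f : ℂ → ℂ) (n : ℕ) : Polynomial ℂ :=
  ∑ k ∈ Finset.range (n + 1),
    Polynomial.C (iteratedDeriv k f 0 * (n.choose k : ℂ)) * Polynomial.X ^ (n - k)

/-- The Cauchy transform `G_μ(z) = ∫ 1/(z−t) dμ(t)`. -/
noncomputable def cauchyG (μ : Measure ℝ) (z : ℂ) : ℂ :=
  ∫ t : ℝ, 1 / (z - (t : ℂ)) ∂μ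

/-- The `R`-transform `R_{c,Σ}(u) = c + ∫ (u+x)/(1−x·u) dΣ(x)`. -/
noncomputable def Rtrans (c : ℝ) (lev : Measure ℝ) (u : ℂ) : ℂ :=
  (c : ℂ) + ∫ x : ℝ, (u + (x : ℂ)) / (1 - (x : ℂ) * u) ∂lev

/-- `n_{f,+}(r)`: the number of reciprocal roots `1/α_j` with real part in `(0, r)`. -/
noncomputable def nfPlus (α : ℕ → ℂ) (r : ℝ) : ℕ :=
  Set.ncard {j : ℕ | α j ≠ 0 ∧ 0 < (1 / α j).re ∧ (1 / α j).re < r}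

/-- `n_{f,−}(r)`: the number of reciprocal roots `1/α_j` with real part in `(−r, 0)`. -/
noncomputable def nfMinus (α : ℕ → ℂ) (r : ℝ) : ℕ :=
  Set.ncard {j : ℕ | α j ≠ 0 ∧ -r < (1 / α j).re ∧ (1 / α j).re < 0}

/-- `n_f = n_{f,+} + n_{f,−}`. -/
noncomputable def nfAll (α : ℕ → ℂ) (r : ℝ) : ℕ := nfPlus α r + nfMinus α r

/-- `b_n = inf{b > 0 : n_f(b) ≥ n}`. -/
noncomputable def bseq (α : ℕ → ℂ) (n : ℕ) : ℝ :=
  sInf {b : ℝ | 0 < b ∧ n ≤ nfAll α b}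

/-- The weighted Lévy measure `Σ_{α,θ}` of a free `α`-stable law, with density
`x ↦ α·(θ·1_{x>0} + (1−θ)·1_{x<0})·|x|^{1−α}/(1+x²)`. -/
noncomputable def stableLevy (a θ : ℝ) : Measure ℝ :=
  volume.withDensity fun x : ℝ =>
    ENNReal.ofReal (a * ((if 0 < x then θ else 0) + (if x < 0 then 1 - θ else 0)) *
      |x| ^ (1 - a) / (1 + x ^ 2))

/-! ### Logarithmic derivatives of polynomials without roots in the upper half-plane -/

/-- `LH p`: the polynomial `p` has no root in the open upper half-plane. -/
def LH (p : ℂ[X]) : Prop := ∀ z : ℂ, 0 < z.im → p.eval z ≠ 0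

/-- The normalised logarithmic derivative `p'/(n p)`. -/
noncomputable def nq (n : ℕ) (p : ℂ[X]) (z : ℂ) : ℂ :=
  p.derivative.eval z / (n * p.eval z)

/-- The derivative of `nq n p`, written as a sum over the roots. -/
noncomputable def nq1 (n : ℕ) (p : ℂ[X]) (z : ℂ) : ℂ :=
  -(1 / (n : ℂ)) * (p.roots.map fun t => 1 / (z - t) ^ 2).sum

/-- The operator `1 - c D` on polynomials. -/
noncomputable def TT (c : ℂ) (p : ℂ[X]) : ℂ[X] := p - C c * derivative p

theorem LH.ne_zero {p : ℂ[X]} (h : LH p) : p ≠ 0 := by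
  rintro rfl
  exact h I (by simp) (by simp)

theorem LH.root_im {p : ℂ[X]} (h : LH p) {t : ℂ} (ht : t ∈ p.roots) : t.im ≤ 0 := by
  by_contra hc
  exact h t (not_le.1 hc) ((mem_roots h.ne_zero).1 ht)

theorem ms_norm_sum_le (s : Multiset ℂ) (F : ℂ → ℂ) (B : ℝ) (h : ∀ t ∈ s, ‖F t‖ ≤ B) :
    ‖(s.map F).sum‖ ≤ s.card * B := by
  induction s using Multiset.induction_on with
  | empty => simp
  | cons t s ih =>
    simp only [Multiset.map_cons, Multiset.sum_cons, Multiset.card_cons]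
    have h1 := ih (fun t ht => h t (Multiset.mem_cons_of_mem ht))
    have h2 := h t (Multiset.mem_cons_self t s)
    calc _ ≤ ‖F t‖ + ‖(s.map F).sum‖ := norm_add_le _ _
      _ ≤ _ := by push_cast; linarith

/-- If each `F t` is bounded by a multiple of `-Im (G t)`, so is the sum of the `F t`. There is no
loss by the triangle inequality, since the imaginary parts have one sign. -/
theorem ms_re_sum_le (s : Multiset ℂ) (F : ℂ → ℂ) (G : ℂ → ℂ) (B : ℝ)
    (h : ∀ t ∈ s, ‖F t‖ ≤ -(G t).im * B) :
    ‖(s.map F).sum‖ ≤ -((s.map G).sum).im * B := by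
  induction s using Multiset.induction_on with
  | empty => simp
  | cons t s ih =>
    simp only [Multiset.map_cons, Multiset.sum_cons, add_im]
    have h1 := ih (fun t ht => h t (Multiset.mem_cons_of_mem ht))
    have h2 := h t (Multiset.mem_cons_self t s)
    calc _ ≤ ‖F t‖ + ‖(s.map F).sum‖ := norm_add_le _ _
      _ ≤ _ := by linarith

theorem ms_sum_const_mul_add (s : Multiset ℂ) (F : ℂ → ℂ) (c : ℂ) :
    (s.map (fun t => F t + c)).sum = (s.map F).sum + s.card * c := by
  simp [Multiset.sum_map_add]

theorem sub_norm_ge {z t : ℂ} (ht : t.im ≤ 0) : z.im ≤ ‖z - t‖ := by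
  have := (le_abs_self _).trans (abs_im_le_norm (z - t))
  simp at this; linarith

theorem sub_ne {z t : ℂ} (hz : 0 < z.im) (ht : t.im ≤ 0) : z - t ≠ 0 := by
  have := sub_norm_ge (z := z) ht
  intro h; rw [h] at this; simp at this; linarith

theorem inv_im_eq (w : ℂ) : (1 / w).im = -w.im / ‖w‖ ^ 2 := by
  rw [one_div, inv_im, normSq_eq_norm_sq]

/-- For `Im t ≤ 0 < y = Im z` the point `1/(z-t)` lies in the disc of centre `-i/(2y)` and
radius `1/(2y)`. -/
theorem disc_term {z t : ℂ} (hz : 0 < z.im) (ht : t.im ≤ 0) :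
    ‖1 / (z - t)‖ ^ 2 ≤ -(1 / (z - t)).im * (1 / z.im) := by
  have h0 : 0 < ‖z - t‖ := norm_pos_iff.2 (sub_ne hz ht)
  rw [inv_im_eq, norm_div, norm_one]
  have : (z - t).im = z.im - t.im := by simp
  rw [this, div_pow, one_pow]
  have e : -(-(z.im - t.im) / ‖z - t‖ ^ 2) * (1 / z.im) = (1 / ‖z - t‖ ^ 2) * ((z.im - t.im) / z.im) := by
    field_simp
  rw [e]
  apply le_mul_of_one_le_right (by positivity)
  rw [le_div_iff₀ hz]; linarith

/-- The inequality `‖w‖² ≤ -Im w / y` describes the closed disc with diameter `[-i/y, 0]`. -/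
theorem disc_iff {w : ℂ} {y : ℝ} (hy : 0 < y) :
    ‖w‖ ^ 2 ≤ -w.im * (1 / y) ↔ ‖w + (1 / (2 * y) : ℝ) * I‖ ≤ 1 / (2 * y) := by
  have h1 : ‖w + (1 / (2 * y) : ℝ) * I‖ ^ 2 = ‖w‖ ^ 2 + w.im * (1 / y) + (1 / (2 * y)) ^ 2 := by
    rw [← normSq_eq_norm_sq, ← normSq_eq_norm_sq, normSq_apply, normSq_apply]
    simp only [add_re, mul_re, ofReal_re, I_re, mul_zero, ofReal_im, I_im, mul_one, sub_self,
      add_zero, add_im, mul_im]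
    field_simp; ring
  rw [← sq_le_sq₀ (norm_nonneg _) (by positivity), h1]
  constructor <;> intro h <;> linarith

section
variable {n : ℕ} {p : ℂ[X]} {z : ℂ}

theorem LH.nq_eq (h : LH p) (hz : 0 < z.im) :
    nq n p z = (1 / (n : ℂ)) * (p.roots.map fun t => 1 / (z - t)).sum := by
  have := Polynomial.Splits.eval_derivative_div_eval_of_ne_zero (IsAlgClosed.splits p) (h z hz)
  rw [nq, ← this]
  field_simp

theorem LH.eval_der (h : LH p) (hn : n ≠ 0) (hz : 0 < z.im) :
    p.derivative.eval z = n * nq n p z * p.eval z := by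
  have := h z hz
  rw [nq]; field_simp

theorem card_le (hd : p.natDegree ≤ n) : (p.roots.card : ℝ) ≤ n := by
  exact_mod_cast (card_roots' p).trans hd

/-- The logarithmic derivative lies in the disc with diameter `[-i/Im z, 0]`, as an average of
points of that disc (with `0` taking the place of the missing roots when `deg p < n`). -/
theorem LH.nq_disc (h : LH p) (hn : n ≠ 0) (hd : p.natDegree ≤ n) (hz : 0 < z.im) :
    ‖nq n p z‖ ^ 2 ≤ -(nq n p z).im * (1 / z.im) := by
  have hn' : (0:ℝ) < n := by positivity
  rw [disc_iff hz]
  have h1 := ms_norm_sum_le p.roots (fun t => 1 / (z - t) + (1 / (2 * z.im) : ℝ) * I) (1 / (2 * z.im))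
    (fun t ht => (disc_iff hz).1 (disc_term hz (h.root_im ht)))
  rw [ms_sum_const_mul_add] at h1
  have h2 : nq n p z + (1 / (2 * z.im) : ℝ) * I = (1 / (n : ℂ)) *
      (((p.roots.map fun t => 1 / (z - t)).sum + p.roots.card * ((1 / (2 * z.im) : ℝ) * I)) +
        ((n - p.roots.card : ℝ) : ℂ) * ((1 / (2 * z.im) : ℝ) * I)) := by
    rw [h.nq_eq hz]; push_cast; field_simp; ring
  rw [h2, norm_mul]
  have hc := card_le hd
  have h3 : ‖((n - p.roots.card : ℝ) : ℂ) * ((1 / (2 * z.im) : ℝ) * I)‖ =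
      (n - p.roots.card : ℝ) * (1 / (2 * z.im)) := by
    rw [norm_mul, norm_mul, norm_I, norm_real, norm_real, Real.norm_of_nonneg (by linarith),
      Real.norm_of_nonneg (by positivity), mul_one]
  have h4 : ‖(1 / (n : ℂ))‖ = 1 / n := by simp
  rw [h4]
  calc _ ≤ (1 / (n:ℝ)) * (p.roots.card * (1 / (2 * z.im)) + (n - p.roots.card : ℝ) * (1 / (2 * z.im))) := by
        gcongr
        exact (norm_add_le _ _).trans (by rw [h3]; linarith)
    _ = _ := by field_simp; ring

theorem LH.nq_im_nonpos (h : LH p) (hn : n ≠ 0) (hd : p.natDegree ≤ n) (hz : 0 < z.im) :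
    (nq n p z).im ≤ 0 := by
  have := h.nq_disc hn hd hz
  have h2 : 0 ≤ -(nq n p z).im * (1 / z.im) := le_trans (by positivity) this
  have := nonneg_of_mul_nonneg_left h2 (by positivity)
  linarith

theorem LH.nq_norm_le (h : LH p) (hn : n ≠ 0) (hd : p.natDegree ≤ n) (hz : 0 < z.im) :
    ‖nq n p z‖ ≤ 1 / z.im := by
  have h1 := h.nq_disc hn hd hz
  have h2 := (neg_le_abs _).trans (abs_im_le_norm (nq n p z))
  by_contra hc
  have hc := not_le.1 hc
  have : ‖nq n p z‖ ^ 2 ≤ ‖nq n p z‖ * (1 / z.im) := h1.trans (by gcongr)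
  have h3 : 0 < 1 / z.im := by positivity
  nlinarith

/-- `|q'| ≤ -Im q / Im z`: each root `t` contributes `1/|z-t|² ≤ -Im (1/(z-t)) / Im z`. -/
theorem LH.nq1_norm_le (h : LH p) (hz : 0 < z.im) :
    ‖nq1 n p z‖ ≤ -(nq n p z).im * (1 / z.im) := by
  have h1 := ms_re_sum_le p.roots (fun t => 1 / (z - t) ^ 2) (fun t => 1 / (z - t)) (1 / z.im)
    (fun t ht => by
      have := disc_term hz (h.root_im ht)
      rw [← norm_pow] at this; simpa using this)
  have h3 : (nq n p z).im = 1 / (n:ℝ) * ((p.roots.map fun t => 1 / (z - t)).sum).im := by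
    rw [h.nq_eq hz, show (1 / (n:ℂ)) = ((1 / (n:ℝ) : ℝ) : ℂ) by push_cast; rfl, im_ofReal_mul]
  rw [nq1, norm_mul, norm_neg, h3]
  have h4 : ‖(1 / (n : ℂ))‖ = 1 / n := by simp
  rw [h4]
  calc _ ≤ 1 / (n:ℝ) * (-((p.roots.map fun t => 1 / (z - t)).sum).im * (1 / z.im)) := by gcongr
    _ = _ := by ring

theorem LH.nq_lip (h : LH p) (hn : n ≠ 0) (hd : p.natDegree ≤ n) {z' : ℂ} {δ : ℝ} (hδ : 0 < δ)
    (hz : δ ≤ z.im) (hz' : δ ≤ z'.im) :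
    ‖nq n p z' - nq n p z‖ ≤ ‖z' - z‖ / δ ^ 2 := by
  have hn' : (0:ℝ) < n := by positivity
  rw [h.nq_eq (hδ.trans_le hz), h.nq_eq (hδ.trans_le hz'), ← mul_sub, ← Multiset.sum_map_sub,
    norm_mul]
  have h1 := ms_norm_sum_le p.roots (fun t => 1 / (z' - t) - 1 / (z - t)) (‖z' - z‖ / δ ^ 2)
    (fun t ht => by
      have ht := h.root_im ht
      have a := sub_ne (hδ.trans_le hz) ht
      have b := sub_ne (hδ.trans_le hz') ht
      have e : 1 / (z' - t) - 1 / (z - t) = -((z' - z) / ((z' - t) * (z - t))) := by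
        field_simp; ring
      rw [e, norm_neg, norm_div, norm_mul, sq]
      gcongr
      · exact hz'.trans (sub_norm_ge ht)
      · exact hz.trans (sub_norm_ge ht))
  have h4 : ‖(1 / (n : ℂ))‖ = 1 / n := by simp
  rw [h4]
  calc _ ≤ 1 / (n:ℝ) * (p.roots.card * (‖z' - z‖ / δ ^ 2)) := by gcongr
    _ ≤ 1 / (n:ℝ) * (n * (‖z' - z‖ / δ ^ 2)) := by gcongr; exact (card_roots' p).trans hd
    _ = _ := by field_simp

/-- First-order Taylor expansion of the logarithmic derivative, with a remainder that is uniform in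
the polynomial. -/
theorem LH.nq_taylor (h : LH p) (hn : n ≠ 0) (hd : p.natDegree ≤ n) {z' : ℂ} {δ : ℝ} (hδ : 0 < δ)
    (hz : δ ≤ z.im) (hz' : δ ≤ z'.im) :
    ‖nq n p z' - nq n p z - (z' - z) * nq1 n p z'‖ ≤ ‖z' - z‖ ^ 2 / δ ^ 3 := by
  have hn' : (0:ℝ) < n := by positivity
  have h0 : nq n p z' - nq n p z - (z' - z) * nq1 n p z' = (1 / (n:ℂ)) *
      (p.roots.map (fun t => 1 / (z' - t) - 1 / (z - t) + (z' - z) * (1 / (z' - t) ^ 2))).sum := by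
    rw [h.nq_eq (hδ.trans_le hz), h.nq_eq (hδ.trans_le hz'), nq1, Multiset.sum_map_add,
      Multiset.sum_map_sub, Multiset.sum_map_mul_left]
    ring
  have h1 := ms_norm_sum_le p.roots (fun t => 1 / (z' - t) - 1 / (z - t) + (z' - z) * (1 / (z' - t) ^ 2))
    (‖z' - z‖ ^ 2 / δ ^ 3)
    (fun t ht => by
      have ht := h.root_im ht
      have a := sub_ne (hδ.trans_le hz) ht
      have b := sub_ne (hδ.trans_le hz') ht
      have e : 1 / (z' - t) - 1 / (z - t) + (z' - z) * (1 / (z' - t) ^ 2)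
        = -((z' - z) ^ 2 / ((z' - t) ^ 2 * (z - t))) := by
        field_simp; ring
      rw [e, norm_neg, norm_div, norm_mul, norm_pow, norm_pow, show δ ^ 3 = δ ^ 2 * δ by ring]
      gcongr
      · exact hz'.trans (sub_norm_ge ht)
      · exact hz.trans (sub_norm_ge ht))
  rw [h0, norm_mul]
  have h4 : ‖(1 / (n : ℂ))‖ = 1 / n := by simp
  rw [h4]
  calc _ ≤ 1 / (n:ℝ) * (p.roots.card * (‖z' - z‖ ^ 2 / δ ^ 3)) := by gcongr
    _ ≤ 1 / (n:ℝ) * (n * (‖z' - z‖ ^ 2 / δ ^ 3)) := by gcongr; exact (card_roots' p).trans hd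
    _ = _ := by field_simp

theorem LH.nq_hasDerivAt (h : LH p) (hz : 0 < z.im) : HasDerivAt (nq n p) (nq1 n p z) z := by
  have key : ∀ s : Multiset ℂ, (∀ t ∈ s, t.im ≤ 0) →
      HasDerivAt (fun z => (s.map fun t => 1 / (z - t)).sum)
        (-(s.map fun t => 1 / (z - t) ^ 2).sum) z := by
    intro s
    induction s using Multiset.induction_on with
    | empty => intro _; simpa using hasDerivAt_const z (0:ℂ)
    | cons t s ih =>
      intro hs
      simp only [Multiset.map_cons, Multiset.sum_cons]
      have h1 := ih (fun t ht => hs t (Multiset.mem_cons_of_mem ht))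
      have ht := hs t (Multiset.mem_cons_self t s)
      have h2 : HasDerivAt (fun z : ℂ => 1 / (z - t)) (-(1 / (z - t) ^ 2)) z := by
        have := ((hasDerivAt_id z).sub_const t).inv (sub_ne hz ht)
        simp only [one_div]
        exact this.congr_deriv (by simp [neg_div])
      rw [neg_add]
      exact h2.add h1
  have h1 := (key p.roots (fun t ht => h.root_im ht)).const_mul (1 / (n:ℂ))
  rw [nq1]
  refine (h1.congr_of_eventuallyEq ?_).congr_deriv (by ring)
  filter_upwards [(isOpen_lt continuous_const continuous_im).mem_nhds hz] with w hw
  exact h.nq_eq hw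

theorem LH.eval_der2 (h : LH p) (hn : n ≠ 0) (hz : 0 < z.im) :
    p.derivative.derivative.eval z = (n * nq1 n p z + n ^ 2 * nq n p z ^ 2) * p.eval z := by
  have h1 : HasDerivAt (fun w => n * nq n p w * p.eval w)
      (n * nq1 n p z * p.eval z + n * nq n p z * p.derivative.eval z) z :=
    ((h.nq_hasDerivAt hz).const_mul (n:ℂ)).mul (p.hasDerivAt z)
  have h2 : HasDerivAt (fun w => n * nq n p w * p.eval w) (p.derivative.derivative.eval z) z := by
    refine (p.derivative.hasDerivAt z).congr_of_eventuallyEq ?_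
    filter_upwards [(isOpen_lt continuous_const continuous_im).mem_nhds hz] with w hw
    exact (h.eval_der hn hw).symm
  rw [h2.unique h1, h.eval_der hn hz]
  ring

end

theorem TT_natDegree {n : ℕ} {p : ℂ[X]} (hd : p.natDegree ≤ n) (c : ℂ) :
    (TT c p).natDegree ≤ n := by
  refine (natDegree_sub_le _ _).trans (max_le hd ?_)
  refine (natDegree_C_mul_le _ _).trans ((natDegree_derivative_le _).trans ?_)
  omega

theorem TT_zero (c : ℂ) : TT c 0 = 0 := by simp [TT]

theorem TT_comm (c d : ℂ) (p : ℂ[X]) : TT c (TT d p) = TT d (TT c p) := by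
  simp only [TT, derivative_sub, derivative_C_mul]; ring

theorem TT_der (c : ℂ) (p : ℂ[X]) : derivative (TT c p) = TT c (derivative p) := by
  simp only [TT, derivative_sub, derivative_C_mul]

section
variable {n : ℕ} {p : ℂ[X]} {z : ℂ}

theorem LH.TT_eval (h : LH p) (hn : n ≠ 0) (hz : 0 < z.im) (x : ℂ) :
    (TT (x / n) p).eval z = (1 - x * nq n p z) * p.eval z := by
  have hn' : (n:ℂ) ≠ 0 := by exact_mod_cast hn
  rw [TT, eval_sub, eval_mul, eval_C, h.eval_der hn hz]; field_simp

/-- The denominator `1 - x q` in the update of the logarithmic derivative is not small, uniformly in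
real `x`. -/
theorem LH.norm_one_sub (h : LH p) (hn : n ≠ 0) (hd : p.natDegree ≤ n) (hz : 0 < z.im) (x : ℝ) :
    z.im * ‖nq n p z‖ ≤ ‖1 - x * nq n p z‖ := by
  set q := nq n p z with hq
  by_cases h0 : q = 0
  · simp [h0]
  have h1 := h.nq_disc hn hd hz
  rw [← hq, mul_one_div, le_div_iff₀ hz] at h1
  have h2 : ‖1 - x * q‖ * ‖q‖ ≥ -q.im := by
    rw [← norm_conj q, ← norm_mul]
    refine le_trans ?_ ((le_abs_self _).trans (abs_im_le_norm _))
    simp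
    nlinarith
  have : 0 < ‖q‖ := norm_pos_iff.2 h0
  nlinarith

theorem LH.one_sub_ne (h : LH p) (hn : n ≠ 0) (hd : p.natDegree ≤ n) (hz : 0 < z.im) (x : ℝ) :
    1 - x * nq n p z ≠ 0 := by
  intro h0
  have := h.norm_one_sub hn hd hz x
  rw [h0, norm_zero] at this
  have h1 : ‖nq n p z‖ = 0 := le_antisymm (by nlinarith) (norm_nonneg _)
  rw [norm_eq_zero.1 h1] at h0
  simp at h0

/-- For real `x` the operator `1 - (x/n) D` keeps the upper half-plane free of roots, because
`1 - x q` does not vanish when `Im q < 0`. -/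
theorem LH.tt (h : LH p) (hn : n ≠ 0) (hd : p.natDegree ≤ n) (x : ℝ) : LH (TT (x / n) p) := by
  intro z hz
  rw [h.TT_eval hn hz]
  exact mul_ne_zero (h.one_sub_ne hn hd hz x) (h z hz)

/-- Action of `1 - (x/n) D` on the logarithmic derivative: a discretised transport equation
`∂q + x/(1 - x q) · q' = 0` with time step `1/n`. -/
theorem LH.nq_TT (h : LH p) (hn : n ≠ 0) (hd : p.natDegree ≤ n) (hz : 0 < z.im) (x : ℝ) :
    nq n (TT (x / n) p) z = nq n p z - (x / n) * nq1 n p z / (1 - x * nq n p z) := by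
  have hn' : (n:ℂ) ≠ 0 := by exact_mod_cast hn
  have h1 := h.one_sub_ne hn hd hz x
  have h2 := h z hz
  rw [nq, h.TT_eval hn hz, TT, derivative_sub, derivative_C_mul, eval_sub, eval_mul, eval_C,
    h.eval_der2 hn hz, h.eval_der hn hz]
  have hn2 : (n:ℂ) * ((1 - x * nq n p z) * p.eval z) ≠ 0 := mul_ne_zero hn' (mul_ne_zero h1 h2)
  have e : ∀ w : ℂ, w ≠ 0 → x / (n:ℂ) * nq1 n p z / w * (n * (w * p.eval z)) =
      x * nq1 n p z * p.eval z := by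
    intro w hw; field_simp
  rw [div_eq_iff hn2, sub_mul, e _ h1]
  field_simp
  ring

/-- One operator `1 - (x/n) D` moves the logarithmic derivative by `O(1/n)`, uniformly in `x`, since
`|q'|` is bounded by a multiple of `-Im q` and `|1 - x q| ≥ |x| (-Im q)`. -/
theorem LH.nq_TT_sub (h : LH p) (hn : n ≠ 0) (hd : p.natDegree ≤ n) (hz : 0 < z.im) (x : ℝ) :
    ‖nq n (TT (x / n) p) z - nq n p z‖ ≤ 1 / (n * z.im) := by
  have hn' : (0:ℝ) < n := by positivity
  have h1 := norm_pos_iff.2 (h.one_sub_ne hn hd hz x)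
  rw [h.nq_TT hn hd hz, sub_sub_cancel_left, norm_neg, norm_div, norm_mul, norm_div, norm_real,
    norm_natCast, div_le_iff₀ h1]
  have h2 := h.nq1_norm_le (n := n) hz
  have h3 : |x| * (-(nq n p z).im) ≤ ‖1 - x * nq n p z‖ := by
    refine le_trans ?_ (abs_im_le_norm _)
    simp only [sub_im, one_im, im_ofReal_mul, zero_sub, abs_neg, abs_mul]
    exact mul_le_mul_of_nonneg_left (neg_le_abs _) (abs_nonneg _)
  calc ‖x‖ / n * ‖nq1 n p z‖ ≤ |x| / n * (-(nq n p z).im * (1 / z.im)) := by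
        rw [Real.norm_eq_abs]; gcongr
    _ = (|x| * (-(nq n p z).im)) * (1 / (n * z.im)) := by field_simp
    _ ≤ ‖1 - x * nq n p z‖ * (1 / (n * z.im)) := by gcongr
    _ = _ := by ring

/-- Half of the Gauss–Lucas theorem: differentiation keeps the upper half-plane free of roots. -/
theorem LH.der (h : LH p) (hn : n ≠ 0) :
    derivative p = 0 ∨ LH (derivative p) := by
  by_cases h0 : ∃ z : ℂ, 0 < z.im ∧ (derivative p).eval z = 0
  · left
    obtain ⟨z, hz, h0⟩ := h0
    have hq : nq n p z = 0 := by rw [nq, h0, zero_div]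
    -- the imaginary part of the logarithmic derivative vanishes only when there are no roots
    have h1 := ms_re_sum_le p.roots (fun _ => 1) (fun t => 1 / (z - t))
      -- the bound `‖F t‖ ≤ -Im (G t) B` needs `B` at least `‖z - t‖² / Im z` for every root `t`
      ((p.roots.map fun t => ‖z - t‖ ^ 2).sum / z.im) (fun t ht => by
        have ht' := h.root_im ht
        have a : 0 < ‖z - t‖ := norm_pos_iff.2 (sub_ne hz ht')
        have hs : ‖z - t‖ ^ 2 ≤ (p.roots.map fun t => ‖z - t‖ ^ 2).sum :=
          Multiset.single_le_sum (by
            intro x hx; obtain ⟨t, _, rfl⟩ := Multiset.mem_map.1 hx; positivity) _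
            (Multiset.mem_map_of_mem (fun t => ‖z - t‖ ^ 2) ht)
        rw [inv_im_eq, norm_one]
        have e : (z - t).im = z.im - t.im := by simp
        rw [e]
        have : -(-(z.im - t.im) / ‖z - t‖ ^ 2) * ((p.roots.map fun t => ‖z - t‖ ^ 2).sum / z.im)
          = ((z.im - t.im) / z.im) * ((p.roots.map fun t => ‖z - t‖ ^ 2).sum / ‖z - t‖ ^ 2) := by
          field_simp
        rw [this]
        apply one_le_mul_of_one_le_of_one_le
        · rw [le_div_iff₀ hz]; linarith
        · rw [le_div_iff₀ (by positivity)]; linarith)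
    have h2 : (p.roots.map fun t => 1 / (z - t)).sum = 0 := by
      rw [h.nq_eq hz] at hq
      have hn' : (1 / (n:ℂ)) ≠ 0 := by simpa using hn
      exact (mul_eq_zero.1 hq).resolve_left hn'
    rw [h2] at h1
    simp at h1
    have h3 : p.natDegree = 0 := by
      rw [(IsAlgClosed.splits p).natDegree_eq_card_roots, h1]; simp
    rw [natDegree_eq_zero.1 h3 |>.choose_spec.symm, derivative_C]
  · right
    intro z hz h1
    exact h0 ⟨z, hz, h1⟩

/-- Differentiating the polynomial moves the logarithmic derivative by `O(1/n)`; this is the case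
`x = ∞` of `LH.nq_TT_sub`. -/
theorem LH.nq_der_sub (h : LH p) (hn : n ≠ 0) (hz : 0 < z.im)
    (hp : nq n p z ≠ 0) :
    ‖nq n (derivative p) z - nq n p z‖ ≤ 1 / (n * z.im) := by
  have hn' : (0:ℝ) < n := by positivity
  have hn'' : (n:ℂ) ≠ 0 := by exact_mod_cast hn
  have h2 := h z hz
  have e : nq n (derivative p) z - nq n p z = nq1 n p z / (n * nq n p z) := by
    conv_lhs => rw [nq, h.eval_der2 hn hz, h.eval_der hn hz]
    field_simp
    ring
  have h0 := norm_pos_iff.2 hp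
  rw [e, norm_div, norm_mul, norm_natCast, div_le_iff₀ (by positivity)]
  have h2 := h.nq1_norm_le (n := n) hz
  have h3 := (neg_le_abs _).trans (abs_im_le_norm (nq n p z))
  calc ‖nq1 n p z‖ ≤ -(nq n p z).im * (1 / z.im) := h2
    _ ≤ ‖nq n p z‖ * (1 / z.im) := by gcongr
    _ = _ := by field_simp

/-- The derivative is dominated by `1 - (x/n) D`, uniformly in real `x`. -/
theorem LH.der_le_TT (h : LH p) (hn : n ≠ 0) (hd : p.natDegree ≤ n) (hz : 0 < z.im) (x : ℝ) :
    z.im * ‖(derivative p).eval z / n‖ ≤ ‖(TT (x / n) p).eval z‖ := by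
  have hn'' : (n:ℂ) ≠ 0 := by exact_mod_cast hn
  rw [h.TT_eval hn hz, h.eval_der hn hz, norm_mul (1 - _),
    show (n:ℂ) * nq n p z * p.eval z / n = nq n p z * p.eval z by field_simp, norm_mul, ← mul_assoc]
  gcongr
  exact h.norm_one_sub hn hd hz x

/-- For large `|x|` the operator `1 - (x/n) D` dominates `(x/n) D`, at points where the logarithmic
derivative is not small. -/
theorem LH.der_le_TT' (h : LH p) (hn : n ≠ 0) (hz : 0 < z.im) {x β : ℝ}
    (hβ : β ≤ ‖nq n p z‖) (hx : 2 ≤ |x| * β) :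
    |x| * ‖(derivative p).eval z / n‖ ≤ 2 * ‖(TT (x / n) p).eval z‖ := by
  have hn'' : (n:ℂ) ≠ 0 := by exact_mod_cast hn
  rw [h.TT_eval hn hz, h.eval_der hn hz, norm_mul (1 - _),
    show (n:ℂ) * nq n p z * p.eval z / n = nq n p z * p.eval z by field_simp, norm_mul, ← mul_assoc,
    ← mul_assoc]
  refine mul_le_mul_of_nonneg_right ?_ (norm_nonneg _)
  have h1 : ‖x * nq n p z‖ - 1 ≤ ‖1 - x * nq n p z‖ := by
    have := norm_sub_norm_le (x * nq n p z) 1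
    rw [norm_sub_rev] at this; simpa using this
  rw [norm_mul, norm_real, Real.norm_eq_abs] at h1
  have : |x| * β ≤ |x| * ‖nq n p z‖ := by gcongr
  linarith

end

/-! ### Characteristics -/

/-- The constant coefficient differential operator with symbol `P`, acting on polynomials. -/
noncomputable def act (P p : ℂ[X]) : ℂ[X] :=
  (aeval (Polynomial.derivative : ℂ[X] →ₗ[ℂ] ℂ[X]) P : ℂ[X] →ₗ[ℂ] ℂ[X]) p

theorem act_one (p : ℂ[X]) : act 1 p = p := by simp [act]

theorem act_mul (P Q p : ℂ[X]) : act (P * Q) p = act P (act Q p) := by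
  simp [act, map_mul]

theorem act_add (P Q p : ℂ[X]) : act (P + Q) p = act P p + act Q p := by
  simp [act]

theorem act_zero (P : ℂ[X]) : act P 0 = 0 := by simp [act]

theorem act_X (p : ℂ[X]) : act X p = derivative p := by simp [act]

theorem act_C (c : ℂ) (p : ℂ[X]) : act (C c) p = C c * p := by
  simp [act, smul_eq_C_mul]

/-- The symbol of `1 - c D`. -/
noncomputable def sy (c : ℂ) : ℂ[X] := 1 - C c * X

theorem act_sy (c : ℂ) (p : ℂ[X]) : act (sy c) p = TT c p := by
  simp [act, sy, TT, smul_eq_C_mul]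

theorem act_der (P p : ℂ[X]) : derivative (act P p) = act P (derivative p) := by
  rw [← act_X, ← act_mul, mul_comm, act_mul, act_X]

/-- The polynomial `∏_{j∈F} (1 - (x_j/n) D) (X - e)^n`. -/
noncomputable def Pw (n : ℕ) (e : ℂ) (x : ℕ → ℂ) (F : Finset ℕ) : ℂ[X] :=
  act (∏ j ∈ F, sy (x j / n)) ((X - C e) ^ n)

theorem Pw_empty (n : ℕ) (e : ℂ) (x : ℕ → ℂ) : Pw n e x ∅ = (X - C e) ^ n := by
  simp [Pw, act_one]

theorem Pw_insert (n : ℕ) (e : ℂ) (x : ℕ → ℂ) {F : Finset ℕ} {j : ℕ} (hj : j ∉ F) :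
    Pw n e x (insert j F) = TT (x j / n) (Pw n e x F) := by
  rw [Pw, Finset.prod_insert hj, act_mul, act_sy]; rfl

theorem act_prod_deg (n : ℕ) (x : ℕ → ℂ) (F : Finset ℕ) {p : ℂ[X]} (hp : p.natDegree ≤ n) :
    (act (∏ j ∈ F, sy (x j)) p).natDegree ≤ n := by
  induction F using Finset.induction_on with
  | empty => simpa [act_one] using hp
  | insert j F hj ih =>
    rw [Finset.prod_insert hj, act_mul, act_sy]
    exact TT_natDegree ih _

theorem Xe_deg (n : ℕ) (e : ℂ) : ((X - C e) ^ n).natDegree = n := by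
  rw [natDegree_pow, natDegree_X_sub_C, mul_one]

theorem Pw_deg (n : ℕ) (e : ℂ) (x : ℕ → ℂ) (F : Finset ℕ) : (Pw n e x F).natDegree ≤ n :=
  act_prod_deg n _ F (Xe_deg n e).le

theorem LH_Xe (n : ℕ) (e : ℝ) : LH ((X - C (e:ℂ)) ^ n) := by
  intro z hz
  rw [eval_pow]
  apply pow_ne_zero
  simp only [eval_sub, eval_X, eval_C]
  exact sub_ne hz (by simp)

theorem LH_act_prod {n : ℕ} (hn : n ≠ 0) (x : ℕ → ℝ) (F : Finset ℕ) {p : ℂ[X]}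
    (hp : p.natDegree ≤ n) (h : LH p) : LH (act (∏ j ∈ F, sy ((x j : ℂ) / n)) p) := by
  induction F using Finset.induction_on with
  | empty => simpa [act_one] using h
  | insert j F hj ih =>
    rw [Finset.prod_insert hj, act_mul, act_sy]
    exact ih.tt hn (act_prod_deg n _ F hp) _

theorem LH_Pw {n : ℕ} (hn : n ≠ 0) (e : ℝ) (x : ℕ → ℝ) (F : Finset ℕ) :
    LH (Pw n e (fun j => x j) F) :=
  LH_act_prod hn x F (Xe_deg n _).le (LH_Xe n e)

/-- The speed `x/(1-xu)` of a characteristic on which the logarithmic derivative equals `u`. -/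
noncomputable def hu (u : ℂ) (x : ℝ) : ℂ := x / (1 - x * u)

theorem one_sub_ge (u : ℂ) (x : ℝ) : |x| * (-u.im) ≤ ‖1 - x * u‖ := by
  refine le_trans ?_ (abs_im_le_norm _)
  simp only [sub_im, one_im, im_ofReal_mul, zero_sub, abs_neg, abs_mul]
  exact mul_le_mul_of_nonneg_left (neg_le_abs _) (abs_nonneg _)

theorem one_sub_ne' {u : ℂ} (hu0 : u.im < 0) (x : ℝ) : 1 - x * u ≠ 0 := by
  intro h
  have := one_sub_ge u x
  rw [h, norm_zero] at this
  have h1 : |x| = 0 := le_antisymm (by nlinarith) (abs_nonneg _)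
  rw [abs_eq_zero.1 h1] at h
  simp at h

theorem hu_norm_le {u : ℂ} (hu0 : u.im < 0) (x : ℝ) : ‖hu u x‖ ≤ 1 / (-u.im) := by
  have := norm_pos_iff.2 (one_sub_ne' hu0 x)
  rw [hu, norm_div, norm_real, Real.norm_eq_abs, div_le_div_iff₀ this (by linarith), one_mul]
  exact one_sub_ge u x

theorem hu_im {u : ℂ} (hu0 : u.im < 0) (x : ℝ) : (hu u x).im ≤ 0 := by
  have h1 : 0 < normSq (1 - x * u) := normSq_pos.2 (one_sub_ne' hu0 x)
  rw [hu, div_im]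
  simp
  exact div_nonneg (by nlinarith [sq_nonneg x]) h1.le

/-- The end point of the characteristic started at `1/u + e`. -/
noncomputable def Zend (n : ℕ) (u : ℂ) (e : ℝ) (x : ℕ → ℝ) (F : Finset ℕ) : ℂ :=
  1 / u + e + (1 / (n:ℂ)) * ∑ j ∈ F, hu u (x j)

/-- One step along a characteristic. If `q` is within `B` of `u` at `z`, then after applying
`1 - (x/n) D` the new `q` is close to `u` at the shifted point, and `B + 1/n` grows only by the
factor `1 + O(|h|²/n)` with `h = hu u x`. The terms of first order, `h q'/n` from the shift and
`-x q'/(n (1 - x q))` from the operator, cancel when `q = u`. -/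
theorem char_step {n : ℕ} (hn : n ≠ 0) {u : ℂ} (hu0 : u.im < 0) {p : ℂ[X]} (hp : LH p)
    (hd : p.natDegree ≤ n) {z : ℂ} {δ : ℝ} (hδ : 0 < δ) (x : ℝ)
    (hz' : δ ≤ (z + (1 / (n:ℂ)) * hu u x).im) {B : ℝ} (hB : ‖nq n p z - u‖ ≤ B)
    (hs : B + 1 / (n * -u.im * δ ^ 2) ≤ -u.im / 2) :
    ‖nq n (TT (x / n) p) (z + (1 / (n:ℂ)) * hu u x) - u‖ + 1 / n ≤
      (B + 1 / n) * (1 + (2 / δ ^ 2 + 1 / δ ^ 3 + 2 / (-u.im * δ ^ 4)) * (‖hu u x‖ ^ 2 / n)) := by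
  have hn' : (0:ℝ) < n := by positivity
  have hnc : (n:ℂ) ≠ 0 := by exact_mod_cast hn
  set τ := -u.im with hτ
  have hτ0 : 0 < τ := by linarith
  set h := hu u x with hh
  set z' := z + (1 / (n:ℂ)) * h with hz'e
  -- the imaginary part decreases along a characteristic
  have hz : δ ≤ z.im := by
    have : z'.im = z.im + 1 / n * h.im := by
      rw [hz'e, add_im, show (1 / (n:ℂ)) = ((1 / (n:ℝ) : ℝ) : ℂ) by push_cast; rfl, im_ofReal_mul]
    have h2 : 1 / (n:ℝ) * h.im ≤ 0 :=
      mul_nonpos_of_nonneg_of_nonpos (by positivity) (hu_im hu0 x)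
    linarith
  have hz'0 := hδ.trans_le hz'
  set v := nq n p z' with hv
  have hB0 : 0 ≤ B := (norm_nonneg _).trans hB
  have hzz : ‖z' - z‖ = ‖h‖ / n := by
    rw [hz'e, add_sub_cancel_left, norm_mul]; simp; ring
  have hvu : ‖v - u‖ ≤ B + ‖h‖ / (n * δ ^ 2) := by
    have h1 := hp.nq_lip hn hd hδ hz hz'
    rw [hzz, div_div] at h1
    calc ‖v - u‖ = ‖(nq n p z - u) + (v - nq n p z)‖ := by congr 1; ring
      _ ≤ _ := (norm_add_le _ _).trans (add_le_add hB h1)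
  have hhn : ‖h‖ ≤ 1 / τ := hu_norm_le hu0 x
  have hvu2 : ‖v - u‖ ≤ τ / 2 := by
    refine hvu.trans (le_trans ?_ hs)
    refine add_le_add_right ?_ B
    rw [div_le_div_iff₀ (by positivity) (by positivity)]
    rw [le_div_iff₀ hτ0] at hhn
    calc ‖h‖ * (n * τ * δ ^ 2) = (‖h‖ * τ) * (n * δ ^ 2) := by ring
      _ ≤ 1 * (n * δ ^ 2) := by gcongr
  have hvne : 1 - x * v ≠ 0 := hp.one_sub_ne hn hd hz'0 x
  have hune : 1 - x * u ≠ 0 := one_sub_ne' hu0 x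
  have hhv : ‖x / (1 - x * v)‖ ≤ 2 * ‖h‖ := by
    have h1 : ‖1 - x * u‖ ≤ 2 * ‖1 - x * v‖ := by
      have e : (1 - x * u : ℂ) = (1 - x * v) + x * (v - u) := by ring
      have h2 : ‖1 - x * u‖ ≤ ‖1 - x * v‖ + |x| * ‖v - u‖ := by
        conv_lhs => rw [e]
        refine (norm_add_le _ _).trans ?_
        rw [norm_mul, norm_real, Real.norm_eq_abs]
      have h3 := one_sub_ge u x
      have h4 : |x| * ‖v - u‖ ≤ |x| * (τ / 2) := by gcongr
      linarith
    have a := norm_pos_iff.2 hvne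
    have b := norm_pos_iff.2 hune
    rw [hh, hu, norm_div, norm_div, ← mul_div_assoc, div_le_div_iff₀ a b]
    nlinarith [norm_nonneg (x:ℂ)]
  have hq1 : ‖nq1 n p z'‖ ≤ 1 / δ ^ 2 := by
    have h1 := hp.nq1_norm_le (n := n) hz'0
    have h2 := (neg_le_abs _).trans ((abs_im_le_norm _).trans (hp.nq_norm_le hn hd hz'0))
    calc _ ≤ _ := h1
      _ ≤ (1 / z'.im) * (1 / z'.im) := by gcongr
      _ ≤ (1 / δ) * (1 / δ) := by gcongr
      _ = _ := by ring
  -- the speed at `u` and at the actual value `v` of the logarithmic derivative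
  have hid : h - x / (1 - x * v) = h * (x / (1 - x * v)) * (u - v) := by
    rw [hh, hu]; field_simp; ring
  have key : nq n (TT (x / n) p) z' - u = (nq n p z - u) +
      (nq n p z' - nq n p z - (z' - z) * nq1 n p z') +
      (1 / n) * (h * (x / (1 - x * v)) * (u - v)) * nq1 n p z' := by
    rw [hp.nq_TT hn hd hz'0, ← hid, ← hv, hz'e]; ring
  have h3 := hp.nq_taylor hn hd hδ hz hz'
  have h4 : ‖(1 / n) * (h * (x / (1 - x * v)) * (u - v)) * nq1 n p z'‖ ≤
      (1 / n) * (‖h‖ * (2 * ‖h‖) * (B + ‖h‖ / (n * δ ^ 2))) * (1 / δ ^ 2) := by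
    rw [norm_mul, norm_mul, norm_mul, norm_mul]
    have : ‖(1 / n : ℂ)‖ = 1 / n := by simp
    rw [this, norm_sub_rev u v]
    gcongr
  have h5 : ‖nq n (TT (x / n) p) z' - u‖ ≤ B + (‖h‖ / n) ^ 2 / δ ^ 3 +
      (1 / n) * (‖h‖ * (2 * ‖h‖) * (B + (1 / τ) / (n * δ ^ 2))) * (1 / δ ^ 2) := by
    rw [key]
    refine (norm_add₃_le).trans ?_
    rw [hzz] at h3
    refine add_le_add (add_le_add hB h3) (h4.trans ?_)
    gcongr
  have h6 : (B + 1 / n) * (1 + (2 / δ ^ 2 + 1 / δ ^ 3 + 2 / (τ * δ ^ 4)) * (‖h‖ ^ 2 / n)) -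
     (B + (‖h‖ / n) ^ 2 / δ ^ 3 +
      (1 / n) * (‖h‖ * (2 * ‖h‖) * (B + (1 / τ) / (n * δ ^ 2))) * (1 / δ ^ 2) + 1 / n)
      = B * (1 / δ ^ 3 + 2 / (τ * δ ^ 4)) * (‖h‖ ^ 2 / n) + 1 / n * (2 / δ ^ 2) * (‖h‖ ^ 2 / n) := by
    field_simp; ring
  have h7 : 0 ≤ B * (1 / δ ^ 3 + 2 / (τ * δ ^ 4)) * (‖h‖ ^ 2 / n) + 1 / n * (2 / δ ^ 2) * (‖h‖ ^ 2 / n) := by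
    positivity
  linarith

/-- Along a characteristic the logarithmic derivative stays within `O(1/n)` of its
initial value `u`. -/
theorem char_main {n : ℕ} (hn : n ≠ 0) {u : ℂ} (hu0 : u.im < 0) (e : ℝ) (x : ℕ → ℝ)
    {δ K H : ℝ} (hδ : 0 < δ) (hK : K = 2 / δ ^ 2 + 1 / δ ^ 3 + 2 / (-u.im * δ ^ 4))
    (hs : Real.exp (K * H) / n + 1 / (n * -u.im * δ ^ 2) ≤ -u.im / 2) (F : Finset ℕ)
    (hz : δ ≤ (Zend n u e x F).im) (hH : (1 / n) * ∑ j ∈ F, ‖hu u (x j)‖ ^ 2 ≤ H) :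
    ‖nq n (Pw n e (fun j => x j) F) (Zend n u e x F) - u‖ + 1 / n ≤
      Real.exp (K * ((1 / n) * ∑ j ∈ F, ‖hu u (x j)‖ ^ 2)) / n := by
  have hn' : (0:ℝ) < n := by positivity
  have hnc : (n:ℂ) ≠ 0 := by exact_mod_cast hn
  have hK0 : 0 ≤ K := by
    have : 0 < -u.im := by linarith
    rw [hK]; positivity
  induction F using Finset.induction_on with
  | empty =>
    have hune : u ≠ 0 := by rintro rfl; simp at hu0
    have hder : (derivative ((X - C (e:ℂ)) ^ n)) = C (n:ℂ) * (X - C (e:ℂ)) ^ (n - 1) := by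
      rw [derivative_X_sub_C_pow]
    have : nq n (Pw n e (fun j => x j) ∅) (Zend n u e x ∅) = u := by
      rw [Pw_empty, nq, hder, Zend]
      simp only [eval_mul, eval_C, eval_pow, eval_sub, eval_X, Finset.sum_empty, mul_zero, add_zero,
        add_sub_cancel_right]
      obtain ⟨m, rfl⟩ := Nat.exists_eq_succ_of_ne_zero hn
      simp only [Nat.succ_eq_add_one, Nat.add_sub_cancel, pow_succ]
      field_simp
    rw [this]; simp
  | insert j F hj ih =>
    have hZ : Zend n u e x (insert j F) = Zend n u e x F + (1 / (n:ℂ)) * hu u (x j) := by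
      rw [Zend, Finset.sum_insert hj, Zend]; ring
    have hzF : δ ≤ (Zend n u e x F).im := by
      have : (Zend n u e x (insert j F)).im = (Zend n u e x F).im + 1 / n * (hu u (x j)).im := by
        rw [hZ, add_im, show (1 / (n:ℂ)) = ((1 / (n:ℝ) : ℝ) : ℂ) by push_cast; rfl, im_ofReal_mul]
      have h2 : 1 / (n:ℝ) * (hu u (x j)).im ≤ 0 :=
        mul_nonpos_of_nonneg_of_nonpos (by positivity) (hu_im hu0 _)
      linarith
    have hsum : (1 / (n:ℝ)) * ∑ j ∈ insert j F, ‖hu u (x j)‖ ^ 2 =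
        ‖hu u (x j)‖ ^ 2 / n + (1 / n) * ∑ j ∈ F, ‖hu u (x j)‖ ^ 2 := by
      rw [Finset.sum_insert hj]; ring
    have hHF : (1 / (n:ℝ)) * ∑ j ∈ F, ‖hu u (x j)‖ ^ 2 ≤ H := by
      have : 0 ≤ ‖hu u (x j)‖ ^ 2 / n := by positivity
      linarith
    have ih := ih hzF hHF
    have hcs := char_step hn hu0 (LH_Pw hn e x F) (Pw_deg n _ _ F) hδ (x j) (hZ ▸ hz) (le_refl _) (by
      refine le_trans ?_ hs
      gcongr
      have : Real.exp (K * ((1 / n) * ∑ j ∈ F, ‖hu u (x j)‖ ^ 2)) / n ≤ Real.exp (K * H) / n := by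
        gcongr
      have h1 : 0 < 1 / (n:ℝ) := by positivity
      linarith)
    rw [← hZ, ← Pw_insert n e (fun j => (x j : ℂ)) hj, ← hK] at hcs
    refine hcs.trans ?_
    rw [hsum, mul_add K, Real.exp_add, mul_comm (Real.exp (K * _)), mul_div_right_comm]
    have := Real.add_one_le_exp (K * (‖hu u (x j)‖ ^ 2 / n))
    gcongr
    linarith

/-! ### Sums over a regularly varying sequence -/

/-- The number of indices with `0 < r_j < R`. -/
noncomputable def cnt (r : ℕ → ℝ) (R : ℝ) : ℕ := Set.ncard {j : ℕ | 0 < r j ∧ r j < R}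

theorem intg_s {s : ℝ} (hs0 : 0 < s) (hs2 : s < 2) :
    IntegrableOn (fun t : ℝ => t ^ (-s) * (t / (1 + t) ^ 2)) (Set.Ioi 0) := by
  have hm : ∀ S : Set ℝ, AEStronglyMeasurable (fun t : ℝ => t ^ (-s) * (t / (1 + t) ^ 2))
      (volume.restrict S) := by
    intro S
    apply Measurable.aestronglyMeasurable
    fun_prop
  rw [← Set.Ioc_union_Ioi_eq_Ioi (zero_le_one' ℝ)]
  apply IntegrableOn.union
  · have h1 : IntegrableOn (fun t : ℝ => t ^ (1 - s)) (Set.Ioc 0 1) := by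
      have := intervalIntegral.intervalIntegrable_rpow' (a := 0) (b := 1) (r := 1 - s) (by linarith)
      rwa [intervalIntegrable_iff_integrableOn_Ioc_of_le zero_le_one] at this
    refine Integrable.mono' h1 (hm _) ?_
    rw [ae_restrict_iff' measurableSet_Ioc]
    refine Eventually.of_forall fun t ht => ?_
    have ht0 := ht.1
    rw [Real.norm_of_nonneg (by positivity), show 1 - s = -s + 1 by ring, Real.rpow_add ht0,
      Real.rpow_one]
    gcongr
    apply div_le_self ht0.le
    nlinarith
  · have h1 := integrableOn_Ioi_rpow_of_lt (a := -s - 1) (c := 1) (by linarith) one_pos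
    refine Integrable.mono' h1 (hm _) ?_
    rw [ae_restrict_iff' measurableSet_Ioi]
    refine Eventually.of_forall fun t ht => ?_
    have ht1 : 1 < t := ht
    have ht0 : 0 < t := by linarith
    rw [Real.norm_of_nonneg (by positivity), show -s - 1 = -s + -1 by ring, Real.rpow_add ht0,
      Real.rpow_neg_one]
    gcongr
    rw [inv_eq_one_div, div_le_div_iff₀ (by positivity) ht0]
    nlinarith

/-- A bounded test function `Ψ` with derivative `ψ`, vanishing to second order at `0` and such that
`ψ` decays like `t⁻²` at infinity. -/
structure TestFn (Ψ ψ : ℝ → ℂ) (K : ℝ) : Prop where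
  K0 : 0 ≤ K
  zero : Ψ 0 = 0
  deriv : ∀ t, HasDerivAt Ψ (ψ t) t
  cont : Continuous ψ
  psi_le : ∀ t, ‖ψ t‖ ≤ K * (|t| / (1 + |t|) ^ 3)
  Psi_le : ∀ t, ‖Ψ t‖ ≤ K * (t ^ 2 / (1 + |t|) ^ 2)

theorem TestFn.neg {Ψ ψ : ℝ → ℂ} {K : ℝ} (h : TestFn Ψ ψ K) :
    TestFn (fun t => Ψ (-t)) (fun t => -ψ (-t)) K where
  K0 := h.K0
  zero := by simpa using h.zero
  deriv t := by
    have := (h.deriv (-t)).scomp t (hasDerivAt_neg t)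
    simp only [neg_smul, one_smul] at this
    exact this
  cont := (h.cont.comp continuous_neg).neg
  psi_le t := by simpa using h.psi_le (-t)
  Psi_le t := by simpa using h.Psi_le (-t)

section
variable {Ψ ψ : ℝ → ℂ} {K : ℝ}

theorem TestFn.psi_le' (h : TestFn Ψ ψ K) {t : ℝ} (ht : 0 < t) : ‖ψ t‖ ≤ K * (t / (1 + t) ^ 2) := by
  have h1 := h.psi_le t
  rw [abs_of_pos ht] at h1
  refine h1.trans ?_
  have := h.K0
  gcongr <;> linarith

/-- Integration by parts against `t^(-a)`; the boundary terms vanish because `0 < a < 2`. -/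
theorem TestFn.parts (h : TestFn Ψ ψ K) {a : ℝ} (ha0 : 0 < a) (ha2 : a < 2) :
    ∫ t in Set.Ioi (0:ℝ), ((t ^ (-a) : ℝ) : ℂ) * ψ t =
      ∫ t in Set.Ioi (0:ℝ), ((a * t ^ (-a - 1) : ℝ) : ℂ) * Ψ t := by
  have hK := h.K0
  have hΨc : Continuous Ψ := continuous_iff_continuousAt.2 fun t => (h.deriv t).continuousAt
  have hi := (intg_s ha0 ha2).const_mul K
  have hi2 := (intg_s ha0 ha2).const_mul (K * a)
  have key := integral_Ioi_mul_deriv_eq_deriv_mul (a := 0) (a' := (0:ℂ)) (b' := (0:ℂ))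
    (u := fun t : ℝ => ((t ^ (-a) : ℝ) : ℂ)) (v := Ψ)
    (u' := fun t : ℝ => ((-a * t ^ (-a - 1) : ℝ) : ℂ)) (v' := ψ)
    (fun t ht => (Real.hasDerivAt_rpow_const (Or.inl (ne_of_gt ht))).ofReal_comp)
    (fun t _ => h.deriv t) ?_ ?_ ?_ ?_
  · rw [key, sub_zero, zero_sub, ← integral_neg]
    congr 1; ext t; push_cast; ring
  · refine Integrable.mono' hi ?_ ?_
    · apply Measurable.aestronglyMeasurable
      have := h.cont.measurable
      simp only [Pi.mul_def]
      fun_prop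
    · rw [ae_restrict_iff' measurableSet_Ioi]
      refine Eventually.of_forall fun t (ht : 0 < t) => ?_
      rw [Pi.mul_apply, norm_mul, norm_real, Real.norm_of_nonneg (by positivity)]
      have := h.psi_le' ht
      calc _ ≤ t ^ (-a) * (K * (t / (1 + t) ^ 2)) := by gcongr
        _ = _ := by ring
  · refine Integrable.mono' hi2 ?_ ?_
    · apply Measurable.aestronglyMeasurable
      have := hΨc.measurable
      simp only [Pi.mul_def]
      fun_prop
    · rw [ae_restrict_iff' measurableSet_Ioi]
      refine Eventually.of_forall fun t (ht : 0 < t) => ?_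
      rw [Pi.mul_apply, norm_mul, norm_real, norm_mul, norm_neg, Real.norm_of_nonneg ha0.le,
        Real.norm_of_nonneg (by positivity)]
      have := h.Psi_le t
      rw [abs_of_pos ht] at this
      calc _ ≤ a * t ^ (-a - 1) * (K * (t ^ 2 / (1 + t) ^ 2)) := by gcongr
        _ = K * a * (t ^ (-a) * (t / (1 + t) ^ 2)) := by
          rw [show -a - 1 = -a + -1 by ring, Real.rpow_add ht, Real.rpow_neg_one]
          field_simp
  · -- the boundary term at `0` is `O(t^(2-a))`
    rw [tendsto_zero_iff_norm_tendsto_zero]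
    have h2 : Tendsto (fun t : ℝ => K * t ^ (2 - a)) (𝓝[>] 0) (𝓝 0) := by
      have : ContinuousAt (fun t : ℝ => K * t ^ (2 - a)) 0 := by
        have := Real.continuousAt_rpow_const 0 (2 - a) (Or.inr (by linarith))
        fun_prop
      have h3 := this.tendsto
      rw [Real.zero_rpow (by linarith), mul_zero] at h3
      exact h3.mono_left nhdsWithin_le_nhds
    refine squeeze_zero' (Eventually.of_forall fun t => norm_nonneg _) ?_ h2
    filter_upwards [self_mem_nhdsWithin] with t ht
    have ht : 0 < t := ht
    rw [Pi.mul_apply, norm_mul, norm_real, Real.norm_of_nonneg (by positivity)]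
    have := h.Psi_le t
    rw [abs_of_pos ht] at this
    calc _ ≤ t ^ (-a) * (K * (t ^ 2 / (1 + t) ^ 2)) := by gcongr
      _ ≤ t ^ (-a) * (K * t ^ 2) := by
        gcongr; apply div_le_self (by positivity); nlinarith
      _ = _ := by
        rw [show 2 - a = -a + 2 by ring, Real.rpow_add ht, Real.rpow_two]; ring
  · rw [tendsto_zero_iff_norm_tendsto_zero]
    have h2 : Tendsto (fun t : ℝ => K * t ^ (-a)) atTop (𝓝 0) := by
      have := (tendsto_rpow_neg_atTop ha0).const_mul K
      simpa using this
    refine squeeze_zero' (Eventually.of_forall fun t => norm_nonneg _) ?_ h2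
    filter_upwards [eventually_gt_atTop 0] with t ht
    rw [Pi.mul_apply, norm_mul, norm_real, Real.norm_of_nonneg (by positivity)]
    have := h.Psi_le t
    rw [abs_of_pos ht] at this
    calc _ ≤ t ^ (-a) * (K * (t ^ 2 / (1 + t) ^ 2)) := by gcongr
      _ ≤ t ^ (-a) * (K * 1) := by
        gcongr; rw [div_le_one (by positivity)]; nlinarith
      _ = _ := by ring

/-- Layer-cake formula: a sum over the `b/r_j` as an integral against the counting function. -/
theorem layer_cake (h : TestFn Ψ ψ K) {r : ℕ → ℝ} (hfin : ∀ R, {j : ℕ | 0 < r j ∧ r j < R}.Finite)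
    (hsum : Summable fun j => if 0 < r j then (1 / r j) ^ 2 else 0) {b : ℝ} (hb : 0 < b) :
    HasSum (fun j => if 0 < r j then Ψ (b / r j) else 0)
      (∫ t in Set.Ioi (0:ℝ), (cnt r (b / t) : ℂ) * ψ t) := by
  have hK := h.K0
  set F : ℕ → ℝ → ℂ := fun j => if 0 < r j then (Set.Ioo 0 (b / r j)).indicator ψ else 0 with hF
  have hintg : ∀ j, 0 < r j → IntegrableOn ψ (Set.Ioo 0 (b / r j)) := fun j hj =>
    (h.cont.integrableOn_Icc (a := 0) (b := b / r j)).mono_set Set.Ioo_subset_Icc_self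
  have hFint : ∀ j, Integrable (F j) (volume.restrict (Set.Ioi 0)) := by
    intro j
    simp only [hF]
    split_ifs with hj
    · exact ((integrable_indicator_iff measurableSet_Ioo).2 (hintg j hj)).restrict
    · exact integrable_zero _ _ _
  have hrest : ∀ j, (volume.restrict (Set.Ioi 0)).restrict (Set.Ioo 0 (b / r j)) =
      volume.restrict (Set.Ioo 0 (b / r j)) := by
    intro j
    rw [Measure.restrict_restrict measurableSet_Ioo, Set.inter_eq_left.2]
    exact fun x hx => hx.1
  have hFval : ∀ j, ∫ t in Set.Ioi (0:ℝ), F j t = if 0 < r j then Ψ (b / r j) else 0 := by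
    intro j
    simp only [hF]
    split_ifs with hj
    · have hbr : 0 ≤ b / r j := by positivity
      rw [integral_indicator measurableSet_Ioo, hrest, ← integral_Ioc_eq_integral_Ioo,
        ← intervalIntegral.integral_of_le hbr,
        intervalIntegral.integral_eq_sub_of_hasDerivAt (fun x _ => h.deriv x)
          (h.cont.intervalIntegrable _ _), h.zero, sub_zero]
    · simp
  have hFn : ∀ j, ∫ t in Set.Ioi (0:ℝ), ‖F j t‖ ≤ K * b ^ 2 * (if 0 < r j then (1 / r j) ^ 2 else 0) := by
    intro j
    simp only [hF]
    split_ifs with hj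
    · have hbr : 0 ≤ b / r j := by positivity
      have : ∀ t, ‖(Set.Ioo 0 (b / r j)).indicator ψ t‖ = (Set.Ioo 0 (b / r j)).indicator (fun t => ‖ψ t‖) t :=
        fun t => norm_indicator_eq_indicator_norm _ _
      simp only [this]
      rw [integral_indicator measurableSet_Ioo, hrest]
      have hb2 : ∀ t ∈ Set.Ioo 0 (b / r j), ‖‖ψ t‖‖ ≤ K * (b / r j) := by
        intro t ht
        rw [norm_norm]
        refine (h.psi_le' ht.1).trans ?_
        refine mul_le_mul_of_nonneg_left (le_trans ?_ ht.2.le) hK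
        apply div_le_self ht.1.le
        nlinarith [ht.1]
      have h3 := norm_setIntegral_le_of_norm_le_const (μ := volume) (by simp) hb2
      refine (Real.le_norm_self _).trans (h3.trans ?_)
      rw [Real.volume_real_Ioo_of_le hbr]
      apply le_of_eq; field_simp; ring
    · simp
  have hFs : Summable fun j => ∫ t in Set.Ioi (0:ℝ), ‖F j t‖ :=
    Summable.of_nonneg_of_le (fun j => integral_nonneg fun t => norm_nonneg _) hFn
      (hsum.mul_left _)
  have key := hasSum_integral_of_summable_integral_norm hFint hFs
  simp only [hFval] at key
  suffices hs : ∫ t in Set.Ioi (0:ℝ), ∑' j, F j t = ∫ t in Set.Ioi (0:ℝ), (cnt r (b / t) : ℂ) * ψ t by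
    rwa [hs] at key
  apply setIntegral_congr_fun measurableSet_Ioi
  intro t ht
  have ht : 0 < t := ht
  have e : ∀ j, F j t = (if j ∈ {j : ℕ | 0 < r j ∧ r j < b / t} then ψ t else 0) := by
    intro j
    simp only [hF, Set.mem_ofPred_eq]
    by_cases hj : 0 < r j
    · have : t < b / r j ↔ r j < b / t := by
        rw [lt_div_iff₀ hj, lt_div_iff₀ ht, mul_comm]
      simp [hj, Set.indicator_apply, ht, this]
    · simp [hj]
  show ∑' j, F j t = _
  simp only [e]
  rw [tsum_eq_sum (s := (hfin (b / t)).toFinset) (by intro j hj; rw [Set.Finite.mem_toFinset] at hj; exact if_neg hj),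
    Finset.sum_congr rfl (g := fun _ => ψ t) (by intro j hj; rw [Set.Finite.mem_toFinset] at hj; exact if_pos hj)]
  rw [Finset.sum_const, nsmul_eq_mul, cnt, Set.ncard_eq_toFinset_card _ (hfin _)]

theorem cnt_mono {r : ℕ → ℝ} (hfin : ∀ R, {j : ℕ | 0 < r j ∧ r j < R}.Finite) : Monotone (cnt r) :=
  fun _ _ hab => Set.ncard_le_ncard (fun _ hj => ⟨hj.1, hj.2.trans_le hab⟩) (hfin _)

/-- Convergence of the rescaled sums, from regular variation of the counting function and a
Potter-type bound. -/
theorem sum_limit (h : TestFn Ψ ψ K) {r : ℕ → ℝ} (hfin : ∀ R, {j : ℕ | 0 < r j ∧ r j < R}.Finite)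
    (hsum : Summable fun j => if 0 < r j then (1 / r j) ^ 2 else 0) {b : ℕ → ℝ}
    (hb : Tendsto b atTop atTop) {a θ : ℝ} (ha0 : 0 < a) (ha2 : a < 2)
    (hlim : ∀ t : ℝ, 0 < t → Tendsto (fun n : ℕ => (cnt r (b n / t) : ℝ) / n) atTop (𝓝 (θ * t ^ (-a))))
    {C t0 : ℝ} (ht00 : 0 < t0) (ht02 : t0 < 2)
    (hpot : ∀ᶠ n : ℕ in atTop, ∀ t : ℝ, 0 < t → t ≤ 1 → (cnt r (b n / t) : ℝ) / n ≤ C * t ^ (-t0)) :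
    Tendsto (fun n : ℕ => (1 / (n:ℂ)) * ∑' j, if 0 < r j then Ψ (b n / r j) else 0) atTop
      (𝓝 (θ * ∫ t in Set.Ioi (0:ℝ), ((a * t ^ (-a - 1) : ℝ) : ℂ) * Ψ t)) := by
  have hK := h.K0
  rw [← h.parts ha0 ha2, ← integral_const_mul]
  have hev : (fun n : ℕ => (1 / (n:ℂ)) * ∑' j, if 0 < r j then Ψ (b n / r j) else 0) =ᶠ[atTop]
      fun n : ℕ => ∫ t in Set.Ioi (0:ℝ), (((cnt r (b n / t) : ℝ) / n : ℝ) : ℂ) * ψ t := by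
    filter_upwards [hb.eventually_gt_atTop 0] with n hn
    rw [(layer_cake h hfin hsum hn).tsum_eq, ← integral_const_mul]
    congr 1; ext t; push_cast; ring
  rw [tendsto_congr' hev]
  have hC0 : 0 ≤ C := by
    obtain ⟨n, hn⟩ := hpot.exists
    have := hn 1 one_pos le_rfl
    simp only [Real.one_rpow, mul_one] at this
    exact le_trans (by positivity) this
  apply tendsto_integral_filter_of_dominated_convergence
    (fun t => C * K * (t ^ (-t0) * (t / (1 + t) ^ 2)) + C * K * (t ^ (-(1:ℝ)) * (t / (1 + t) ^ 2)))
  · filter_upwards [hb.eventually_gt_atTop 0] with n hn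
    apply AEMeasurable.aestronglyMeasurable
    apply AEMeasurable.mul _ h.cont.measurable.aemeasurable
    have : AntitoneOn (fun t => (cnt r (b n / t) : ℝ) / n) (Set.Ioi 0) := by
      intro s hs t ht hst
      have hs : 0 < s := hs
      have : cnt r (b n / t) ≤ cnt r (b n / s) := cnt_mono hfin (by gcongr)
      have : (cnt r (b n / t) : ℝ) ≤ cnt r (b n / s) := by exact_mod_cast this
      show (cnt r (b n / t) : ℝ) / n ≤ (cnt r (b n / s) : ℝ) / n
      gcongr
    exact measurable_ofReal.comp_aemeasurable (aemeasurable_restrict_of_antitoneOn measurableSet_Ioi this)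
  · filter_upwards [hpot, hb.eventually_gt_atTop 0] with n hn hbn
    rw [ae_restrict_iff' measurableSet_Ioi]
    refine Eventually.of_forall fun t (ht : 0 < t) => ?_
    rw [norm_mul, norm_real, Real.norm_of_nonneg (by positivity)]
    rcases le_or_gt t 1 with h1 | h1
    · calc _ ≤ C * t ^ (-t0) * (K * (t / (1 + t) ^ 2)) := by
            have := hn t ht h1; have := h.psi_le' ht; gcongr
        _ = C * K * (t ^ (-t0) * (t / (1 + t) ^ 2)) := by ring
        _ ≤ _ := by
          have : 0 ≤ C * K * (t ^ (-(1:ℝ)) * (t / (1 + t) ^ 2)) := by positivity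
          linarith
    · have h2 : (cnt r (b n / t) : ℝ) / n ≤ C := by
        have h3 := hn 1 one_pos le_rfl
        simp only [Real.one_rpow, mul_one, div_one] at h3
        refine le_trans ?_ h3
        have : cnt r (b n / t) ≤ cnt r (b n) := cnt_mono hfin (div_le_self hbn.le h1.le)
        gcongr
      have h4 := h.psi_le t
      rw [abs_of_pos ht] at h4
      calc _ ≤ C * (K * (t / (1 + t) ^ 3)) := by gcongr
        _ ≤ C * K * (t ^ (-(1:ℝ)) * (t / (1 + t) ^ 2)) := by
          rw [mul_assoc, Real.rpow_neg_one]
          gcongr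
          rw [pow_succ, ← div_div, ← inv_mul_eq_div (1 + t)]
          gcongr; linarith
        _ ≤ _ := by
          have : 0 ≤ C * K * (t ^ (-t0) * (t / (1 + t) ^ 2)) := by positivity
          linarith
  · exact ((intg_s ht00 ht02).const_mul _).add ((intg_s one_pos one_lt_two).const_mul _)
  · rw [ae_restrict_iff' measurableSet_Ioi]
    refine Eventually.of_forall fun t (ht : 0 < t) => ?_
    have := (continuous_ofReal.tendsto _).comp (hlim t ht)
    have := this.mul_const (ψ t)
    rw [ofReal_mul, mul_assoc] at this
    exact this

end

/-! ### The counting functions and the scale `b_n` -/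

/-- The standing hypotheses on the reciprocal roots `α_j` of the entire function. -/
structure SD (α : ℕ → ℂ) (M a θ : ℝ) : Prop where
  hM : 0 ≤ M
  hconj : ∃ e : Equiv.Perm ℕ, ∀ j, α (e j) = (starRingEnd ℂ) (α j)
  hsum : Summable fun j => ‖α j‖ ^ 2
  him : ∀ j, α j ≠ 0 → |(1 / α j).im| ≤ M
  hinf : {j : ℕ | α j ≠ 0}.Infinite
  ha0 : 0 < a
  ha2 : a < 2
  hθ0 : 0 ≤ θ
  hθ1 : θ ≤ 1
  hreg : ∀ x : ℝ, 0 < x →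
      Tendsto (fun r : ℝ => (nfAll α (x * r) : ℝ) / (nfAll α r : ℝ)) atTop (𝓝 (x ^ a))
  hθ : Tendsto (fun r : ℝ => (nfPlus α r : ℝ) / (nfAll α r : ℝ)) atTop (𝓝 θ)

/-- The real part of the root `1/α_j`; it is `0` when `α_j = 0`. -/
noncomputable def rr (α : ℕ → ℂ) (j : ℕ) : ℝ := (1 / α j).re

theorem rr_ne {α : ℕ → ℂ} {j : ℕ} (h : rr α j ≠ 0) : α j ≠ 0 := by
  intro h0; simp [rr, h0] at h

section
variable {α : ℕ → ℂ} {M a θ : ℝ}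

theorem SD.fin (h : SD α M a θ) (R : ℝ) : {j : ℕ | α j ≠ 0 ∧ |rr α j| < R}.Finite := by
  by_cases hR : 0 < R
  · have hM := h.hM
    have h1 := (h.hsum.tendsto_cofinite_zero).eventually_lt_const
      (show (0:ℝ) < (1 / (R + M)) ^ 2 by positivity)
    refine Set.Finite.subset h1 ?_
    rintro j ⟨hj, hr⟩
    rw [Set.mem_compl_iff]
    intro hlt
    have hlt : ‖α j‖ ^ 2 < (1 / (R + M)) ^ 2 := hlt
    have h2 := lt_of_pow_lt_pow_left₀ 2 (by positivity) hlt
    have h3 : ‖1 / α j‖ ≤ R + M :=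
      (norm_le_abs_re_add_abs_im _).trans (add_le_add hr.le (h.him j hj))
    rw [norm_div, norm_one] at h3
    have h4 : 0 < ‖α j‖ := norm_pos_iff.2 hj
    rw [lt_div_iff₀ (by positivity)] at h2
    rw [div_le_iff₀ h4] at h3
    linarith
  · convert Set.finite_empty
    rw [Set.eq_empty_iff_forall_notMem]
    rintro j ⟨_, hj⟩
    have := abs_nonneg (rr α j)
    linarith

theorem SD.fin_pos (h : SD α M a θ) (R : ℝ) : {j : ℕ | 0 < rr α j ∧ rr α j < R}.Finite :=
  (h.fin R).subset fun j hj => ⟨rr_ne hj.1.ne', by rw [abs_of_pos hj.1]; exact hj.2⟩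

theorem SD.fin_neg (h : SD α M a θ) (R : ℝ) : {j : ℕ | 0 < -rr α j ∧ -rr α j < R}.Finite :=
  (h.fin R).subset fun j hj => ⟨rr_ne (by linarith [hj.1]), by
    rw [abs_of_neg (by linarith [hj.1])]; exact hj.2⟩

theorem nfPlus_eq (α : ℕ → ℂ) (R : ℝ) : nfPlus α R = cnt (rr α) R := by
  rw [nfPlus, cnt]; congr 1; ext j
  exact ⟨fun h => h.2, fun h => ⟨rr_ne h.1.ne', h⟩⟩

theorem nfMinus_eq (α : ℕ → ℂ) (R : ℝ) : nfMinus α R = cnt (fun j => -rr α j) R := by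
  rw [nfMinus, cnt]; congr 1; ext j
  constructor
  · rintro ⟨_, h1, h2⟩; exact ⟨by show 0 < -rr α j; rw [rr]; linarith, by show -rr α j < R; rw [rr]; linarith⟩
  · rintro ⟨h1, h2⟩
    have h1 : 0 < -rr α j := h1
    have h2 : -rr α j < R := h2
    exact ⟨rr_ne (by linarith), by rw [rr] at h2; linarith, by rw [rr] at h1; linarith⟩

/-- For roots `1/α_j` far from the imaginary axis, modulus and real part are comparable because the
imaginary part is at most `M`. -/
theorem SD.norm_le (h : SD α M a θ) {j : ℕ} (hj : α j ≠ 0) (hr : max M 1 ≤ |rr α j|) :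
    1 / (rr α j) ^ 2 ≤ 2 * ‖α j‖ ^ 2 := by
  have h1 : ‖1 / α j‖ ^ 2 ≤ 2 * (rr α j) ^ 2 := by
    rw [← normSq_eq_norm_sq, normSq_apply]
    have h2 := h.him j hj
    have h3 : |(1 / α j).im| ≤ |rr α j| := h2.trans ((le_max_left _ _).trans hr)
    have := sq_le_sq.2 h3
    rw [rr] at *
    nlinarith
  have hr1 : 1 ≤ |rr α j| := (le_max_right _ _).trans hr
  have hr0 : 0 < (rr α j) ^ 2 := by rw [← sq_abs]; positivity
  have h4 : 0 < ‖α j‖ := norm_pos_iff.2 hj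
  rw [norm_div, norm_one, div_pow, one_pow, div_le_iff₀ (by positivity)] at h1
  rw [div_le_iff₀ hr0]
  linarith

theorem SD.sum_r (h : SD α M a θ) : Summable fun j => (1 / rr α j) ^ 2 := by
  refine Summable.of_norm_bounded_eventually (h.hsum.mul_left 2) ?_
  refine (h.fin (max M 1)).subset ?_
  intro j hj
  by_contra hc
  apply hj
  show ‖(1 / rr α j) ^ 2‖ ≤ 2 * ‖α j‖ ^ 2
  by_cases h0 : α j = 0
  · simp [rr, h0]
  have hr : max M 1 ≤ |rr α j| := by
    by_contra h3
    exact hc ⟨h0, not_le.1 h3⟩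
  rw [Real.norm_of_nonneg (by positivity), div_pow, one_pow]
  exact h.norm_le h0 hr

theorem SD.sum_pos (h : SD α M a θ) : Summable fun j => if 0 < rr α j then (1 / rr α j) ^ 2 else 0 := by
  refine Summable.of_nonneg_of_le (fun j => ?_) (fun j => ?_) h.sum_r
  · split_ifs <;> positivity
  · split_ifs
    · exact le_rfl
    · positivity

theorem SD.sum_neg (h : SD α M a θ) :
    Summable fun j => if 0 < -rr α j then (1 / -rr α j) ^ 2 else 0 := by
  refine Summable.of_nonneg_of_le (fun j => ?_) (fun j => ?_) h.sum_r
  · split_ifs <;> positivity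
  · split_ifs
    · apply le_of_eq; ring
    · positivity

theorem SD.nf_mono (h : SD α M a θ) : Monotone (nfAll α) := by
  intro x y hxy
  simp only [nfAll, nfPlus_eq, nfMinus_eq]
  exact add_le_add (cnt_mono h.fin_pos hxy) (cnt_mono h.fin_neg hxy)

theorem SD.nf_tendsto (h : SD α M a θ) : Tendsto (fun r => nfAll α r) atTop atTop := by
  refine tendsto_atTop_atTop_of_monotone h.nf_mono fun N => ?_
  -- all but finitely many roots have nonzero real part
  have h1 : ({j : ℕ | α j ≠ 0} \ {j : ℕ | α j ≠ 0 ∧ |rr α j| < 1}).Infinite := h.hinf.sdiff (h.fin 1)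
  obtain ⟨T, hT, hTc⟩ := h1.exists_subset_card_eq N
  refine ⟨∑ j ∈ T, |rr α j| + 1, ?_⟩
  set R := ∑ j ∈ T, |rr α j| + 1 with hR
  have hlt : ∀ j ∈ T, |rr α j| < R := fun j hj => by
    have := Finset.single_le_sum (f := fun j => |rr α j|) (fun i _ => abs_nonneg _) hj
    linarith
  have hsub : (T : Set ℕ) ⊆ {j : ℕ | 0 < rr α j ∧ rr α j < R} ∪ {j : ℕ | 0 < -rr α j ∧ -rr α j < R} := by
    intro j hj
    have h2 := hT hj
    have h3 : 1 ≤ |rr α j| := by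
      by_contra hc; exact h2.2 ⟨h2.1, not_le.1 hc⟩
    have h4 := hlt j hj
    rcases le_or_gt 0 (rr α j) with h0 | h0
    · rw [abs_of_nonneg h0] at h3 h4
      left; exact ⟨by linarith, h4⟩
    · rw [abs_of_neg h0] at h3 h4
      right; exact ⟨by linarith, h4⟩
  have h5 := Set.ncard_le_ncard hsub ((h.fin_pos R).union (h.fin_neg R))
  rw [Set.ncard_coe_finset, hTc] at h5
  refine h5.trans ((Set.ncard_union_le _ _).trans ?_)
  rw [nfAll, nfPlus_eq, nfMinus_eq]; rfl

theorem bset_bdd (n : ℕ) : BddBelow {b : ℝ | 0 < b ∧ n ≤ nfAll α b} := ⟨0, fun _ h => h.1.le⟩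

theorem SD.bset_ne (h : SD α M a θ) (n : ℕ) : {b : ℝ | 0 < b ∧ n ≤ nfAll α b}.Nonempty := by
  obtain ⟨b, hb⟩ := ((h.nf_tendsto.eventually_ge_atTop n).and (eventually_gt_atTop 0)).exists
  exact ⟨b, hb.2, hb.1⟩

theorem SD.b_tendsto (h : SD α M a θ) : Tendsto (bseq α) atTop atTop := by
  rw [tendsto_atTop]
  intro B
  filter_upwards [eventually_gt_atTop (nfAll α B)] with n hn
  refine le_csInf (h.bset_ne n) fun b hb => ?_
  by_contra hc
  have := h.nf_mono (not_le.1 hc).le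
  have := hb.2
  omega

/-- `n_f(b_n) ~ n`: by definition `n_f` is below `n` to the left of `b_n` and at least `n` to the
right of it, and regular variation controls the jump. -/
theorem SD.b_nf (h : SD α M a θ) :
    Tendsto (fun n : ℕ => (nfAll α (bseq α n) : ℝ) / n) atTop (𝓝 1) := by
  have hb := h.b_tendsto
  have hnf : Tendsto (fun n => (nfAll α (bseq α n) : ℝ)) atTop atTop :=
    tendsto_natCast_atTop_atTop.comp (h.nf_tendsto.comp hb)
  suffices hs : Tendsto (fun n : ℕ => (n : ℝ) / (nfAll α (bseq α n) : ℝ)) atTop (𝓝 1) by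
    have := hs.inv₀ one_ne_zero
    simpa using this
  have hup : ∀ s : ℝ, 1 < s → ∀ᶠ n : ℕ in atTop, (n : ℝ) / (nfAll α (bseq α n) : ℝ) ≤
      (nfAll α (s * bseq α n) : ℝ) / (nfAll α (bseq α n) : ℝ) := by
    intro s hs
    filter_upwards [hb.eventually_gt_atTop 0] with n hn
    have h1 : bseq α n < s * bseq α n := by nlinarith
    obtain ⟨b, hb, hlt⟩ := exists_lt_of_csInf_lt (h.bset_ne n) h1
    have : n ≤ nfAll α (s * bseq α n) := hb.2.trans (h.nf_mono hlt.le)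
    gcongr
  have hlo : ∀ s : ℝ, 0 < s → s < 1 → ∀ᶠ n : ℕ in atTop,
      (nfAll α (s * bseq α n) : ℝ) / (nfAll α (bseq α n) : ℝ) ≤ (n : ℝ) / (nfAll α (bseq α n) : ℝ) := by
    intro s hs hs1
    filter_upwards [hb.eventually_gt_atTop 0] with n hn
    have h1 : s * bseq α n < bseq α n := by nlinarith
    have h2 := notMem_of_lt_csInf h1 (bset_bdd n)
    have : nfAll α (s * bseq α n) ≤ n := by
      by_contra hc
      exact h2 ⟨by positivity, by omega⟩
    gcongr
  have hcont : Tendsto (fun s : ℝ => s ^ a) (𝓝 1) (𝓝 1) := by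
    have := (Real.continuousAt_rpow_const 1 a (Or.inl one_ne_zero)).tendsto
    simpa using this
  rw [tendsto_order]
  constructor
  · intro c hc
    have h1 := (hcont.mono_left (nhdsWithin_le_nhds (s := Set.Iio 1))).eventually_const_lt hc
    have h2 : ∀ᶠ s : ℝ in 𝓝[<] 1, 0 < s := nhdsWithin_le_nhds (lt_mem_nhds one_pos)
    obtain ⟨s, hs1, hs2, hs3⟩ := (h1.and (h2.and self_mem_nhdsWithin)).exists
    filter_upwards [hlo s hs2 hs3, ((h.hreg s hs2).comp hb).eventually_const_lt hs1] with n h3 h4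
    exact lt_of_lt_of_le h4 h3
  · intro c hc
    have h1 := (hcont.mono_left (nhdsWithin_le_nhds (s := Set.Ioi 1))).eventually_lt_const hc
    obtain ⟨s, hs1, hs3⟩ := (h1.and self_mem_nhdsWithin).exists
    have hs3 : 1 < s := hs3
    filter_upwards [hup s hs3, ((h.hreg s (by linarith)).comp hb).eventually_lt_const hs1] with n h3 h4
    exact lt_of_le_of_lt h3 h4

/-- A counting function asymptotic to `θ' n_f` satisfies `N(b_n/t)/n → θ' t^(-a)`. -/
theorem SD.lim_aux (h : SD α M a θ) {N : ℝ → ℕ} {θ' : ℝ}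
    (hN : Tendsto (fun r : ℝ => (N r : ℝ) / (nfAll α r : ℝ)) atTop (𝓝 θ')) (t : ℝ) (ht : 0 < t) :
    Tendsto (fun n : ℕ => (N (bseq α n / t) : ℝ) / n) atTop (𝓝 (θ' * t ^ (-a))) := by
  have hb := h.b_tendsto
  have hbt : Tendsto (fun n => bseq α n / t) atTop atTop := hb.atTop_div_const ht
  have h1 := hN.comp hbt
  have h2 := (h.hreg (1 / t) (by positivity)).comp hb
  have h3 := (h1.mul h2).mul h.b_nf
  have e : (1 / t) ^ a = t ^ (-a) := by
    rw [one_div, Real.inv_rpow ht.le, Real.rpow_neg ht.le]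
  rw [e, mul_one] at h3
  refine h3.congr' ?_
  have h4 := (h.nf_tendsto.comp hb).eventually_gt_atTop 0
  have h5 := (h.nf_tendsto.comp hbt).eventually_gt_atTop 0
  filter_upwards [h4, h5, eventually_gt_atTop 0] with n h4 h5 h6
  have h4 : (nfAll α (bseq α n) : ℝ) ≠ 0 := by exact_mod_cast h4.ne'
  have h5 : (nfAll α (bseq α n / t) : ℝ) ≠ 0 := by exact_mod_cast h5.ne'
  simp only [Function.comp_apply, one_div_mul_eq_div]
  field_simp

theorem SD.lim_pos (h : SD α M a θ) (t : ℝ) (ht : 0 < t) :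
    Tendsto (fun n : ℕ => (cnt (rr α) (bseq α n / t) : ℝ) / n) atTop (𝓝 (θ * t ^ (-a))) := by
  refine h.lim_aux ?_ t ht
  simpa only [← nfPlus_eq] using h.hθ

theorem SD.lim_neg (h : SD α M a θ) (t : ℝ) (ht : 0 < t) :
    Tendsto (fun n : ℕ => (cnt (fun j => -rr α j) (bseq α n / t) : ℝ) / n) atTop
      (𝓝 ((1 - θ) * t ^ (-a))) := by
  refine h.lim_aux ?_ t ht
  refine (h.hθ.const_sub 1).congr' ?_
  filter_upwards [h.nf_tendsto.eventually_gt_atTop 0] with r hr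
  have h4 : (nfAll α r : ℝ) ≠ 0 := by exact_mod_cast hr.ne'
  rw [← nfMinus_eq, eq_div_iff h4, sub_mul, div_mul_cancel₀ _ h4, nfAll]
  push_cast; ring

theorem SD.lim_all (h : SD α M a θ) (t : ℝ) (ht : 0 < t) :
    Tendsto (fun n : ℕ => (nfAll α (bseq α n / t) : ℝ) / n) atTop (𝓝 (t ^ (-a))) := by
  have := h.lim_aux (N := nfAll α) (θ' := 1) (by
    refine tendsto_const_nhds.congr' ?_
    filter_upwards [h.nf_tendsto.eventually_gt_atTop 0] with r hr
    have h4 : (nfAll α r : ℝ) ≠ 0 := by exact_mod_cast hr.ne'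
    rw [div_self h4]) t ht
  simpa using this

/-- A Potter bound for the counting function along `b_n`. -/
theorem SD.potter (h : SD α M a θ) : ∃ C t0 : ℝ, 0 < t0 ∧ t0 < 2 ∧
    ∀ᶠ n : ℕ in atTop, ∀ t : ℝ, 0 < t → t ≤ 1 →
      (nfAll α (bseq α n / t) : ℝ) / n ≤ C * t ^ (-t0) := by
  have ha0 := h.ha0
  have ha2 := h.ha2
  set t0 := (a + 2) / 2 with ht0
  refine ⟨2 * 2 ^ t0, t0, by linarith, by linarith, ?_⟩
  have h1 : (2:ℝ) ^ a < 2 ^ t0 := Real.rpow_lt_rpow_of_exponent_lt (by norm_num) (by linarith)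
  have h2 := (h.hreg 2 two_pos).eventually_lt_const h1
  obtain ⟨R0, hR0⟩ := eventually_atTop.1 (h2.and (h.nf_tendsto.eventually_gt_atTop 0))
  have hdouble : ∀ k : ℕ, ∀ r : ℝ, max R0 1 ≤ r →
      (nfAll α (2 ^ k * r) : ℝ) ≤ (2 ^ t0) ^ k * nfAll α r := by
    intro k
    induction k with
    | zero => intro r _; simp
    | succ k ih =>
      intro r hr
      have hr1 : 1 ≤ r := (le_max_right _ _).trans hr
      have h2k : (1:ℝ) ≤ 2 ^ k := one_le_pow₀ (by norm_num)
      have h3 := hR0 (2 ^ k * r) (((le_max_left _ _).trans hr).trans (by nlinarith))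
      have h4 : (0:ℝ) < nfAll α (2 ^ k * r) := by exact_mod_cast h3.2
      have h5 := (div_lt_iff₀ h4).1 h3.1
      rw [pow_succ', mul_assoc]
      calc _ ≤ (2:ℝ) ^ t0 * nfAll α (2 ^ k * r) := h5.le
        _ ≤ 2 ^ t0 * ((2 ^ t0) ^ k * nfAll α r) := by gcongr; exact ih r hr
        _ = _ := by rw [pow_succ']; ring
  filter_upwards [h.b_tendsto.eventually_ge_atTop (max R0 1),
    h.b_nf.eventually_le_const one_lt_two] with n hn hn2 t ht ht1
  have hbn : 1 ≤ bseq α n := (le_max_right _ _).trans hn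
  obtain ⟨k, hk1, hk2⟩ := exists_nat_pow_near (one_le_one_div ht ht1) one_lt_two
  have h6 : bseq α n / t ≤ 2 ^ (k + 1) * bseq α n := by
    rw [div_eq_mul_one_div, mul_comm]; gcongr
  have h7 : (nfAll α (bseq α n / t) : ℝ) ≤ nfAll α (2 ^ (k + 1) * bseq α n) := by
    exact_mod_cast h.nf_mono h6
  have h8 : ((2:ℝ) ^ t0) ^ (k + 1) ≤ 2 ^ t0 * t ^ (-t0) := by
    rw [pow_succ']
    gcongr
    rw [← Real.rpow_natCast, ← Real.rpow_mul (by norm_num), mul_comm, Real.rpow_mul (by norm_num),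
      Real.rpow_natCast]
    have : t ^ (-t0) = (1 / t) ^ t0 := by
      rw [one_div, Real.inv_rpow ht.le, Real.rpow_neg ht.le]
    rw [this]
    exact Real.rpow_le_rpow (by positivity) hk1 (by linarith)
  calc _ ≤ ((2 ^ t0) ^ (k + 1) * nfAll α (bseq α n)) / (n:ℝ) := by
        gcongr; exact h7.trans (hdouble (k + 1) _ hn)
    _ ≤ (2 ^ t0 * t ^ (-t0) * nfAll α (bseq α n)) / (n:ℝ) := by gcongr
    _ = (2 ^ t0 * t ^ (-t0)) * (nfAll α (bseq α n) / (n:ℝ)) := by ring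
    _ ≤ (2 ^ t0 * t ^ (-t0)) * 2 := by gcongr
    _ = _ := by ring

/-- Convergence of `(1/n) ∑ Ψ(b_n / r_j)` over all roots. -/
theorem SD.sum_lim (h : SD α M a θ) {Ψ ψ : ℝ → ℂ} {K : ℝ} (hΨ : TestFn Ψ ψ K) :
    Tendsto (fun n : ℕ => (1 / (n:ℂ)) * ∑' j, Ψ (bseq α n / rr α j)) atTop
      (𝓝 (θ * (∫ t in Set.Ioi (0:ℝ), ((a * t ^ (-a - 1) : ℝ) : ℂ) * Ψ t) +
        ((1 - θ : ℝ) : ℂ) * ∫ t in Set.Ioi (0:ℝ), ((a * t ^ (-a - 1) : ℝ) : ℂ) * Ψ (-t))) := by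
  obtain ⟨C, t0, ht0, ht2, hC⟩ := h.potter
  have h1 := sum_limit hΨ h.fin_pos h.sum_pos h.b_tendsto h.ha0 h.ha2 h.lim_pos ht0 ht2 (by
    filter_upwards [hC] with n hn t ht ht1
    refine le_trans ?_ (hn t ht ht1)
    rw [← nfPlus_eq, nfAll]; gcongr; omega)
  have h2 := sum_limit hΨ.neg h.fin_neg h.sum_neg h.b_tendsto h.ha0 h.ha2 h.lim_neg ht0 ht2 (by
    filter_upwards [hC] with n hn t ht ht1
    refine le_trans ?_ (hn t ht ht1)
    rw [← nfMinus_eq, nfAll]; gcongr; omega)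
  refine (h1.add h2).congr' ?_
  filter_upwards [h.b_tendsto.eventually_gt_atTop 0] with n hn
  have s1 := (layer_cake hΨ h.fin_pos h.sum_pos hn).summable
  have s2 := (layer_cake hΨ.neg h.fin_neg h.sum_neg hn).summable
  rw [← mul_add, ← s1.tsum_add s2]
  congr 2; ext j
  rcases lt_trichotomy 0 (rr α j) with h0 | h0 | h0
  · simp [h0, h0.le]
  · simp [← h0, hΨ.zero]
  · simp [h0, h0.le, div_neg]

theorem SD.sum_summable (h : SD α M a θ) {Ψ ψ : ℝ → ℂ} {K : ℝ} (hΨ : TestFn Ψ ψ K) {b : ℝ} :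
    Summable (fun j => Ψ (b / rr α j)) := by
  have hK := hΨ.K0
  refine Summable.of_norm_bounded (h.sum_r.mul_left (K * b ^ 2)) fun j => ?_
  refine (hΨ.Psi_le _).trans ?_
  have : K * b ^ 2 * (1 / rr α j) ^ 2 = K * (b / rr α j) ^ 2 := by ring
  rw [this]
  gcongr
  apply div_le_self (by positivity)
  nlinarith [abs_nonneg (b / rr α j)]

end

/-! ### The `R`-transform as a limit of sums -/

/-- The kernel `y²(y+u)/((1-yu)(1+y²))` whose rescaled sums over the zeros converge to the
`R`-transform. -/
noncomputable def PsiU (u : ℂ) (y : ℝ) : ℂ := y ^ 2 * (y + u) / ((1 - y * u) * (1 + y ^ 2))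

theorem one_sub_lower {u : ℂ} (hu0 : u.im < 0) (y : ℝ) :
    1 + |y| ≤ ‖1 - y * u‖ * (1 + ‖u‖ / (-u.im) + 1 / (-u.im)) := by
  have h1 := one_sub_ge u y
  have hp : 0 < -u.im := by linarith
  have h2 : |y| ≤ ‖1 - y * u‖ / (-u.im) := by rwa [le_div_iff₀ hp]
  have h3 : 1 ≤ ‖1 - y * u‖ + |y| * ‖u‖ := by
    have : (1:ℂ) = (1 - y * u) + y * u := by ring
    calc (1:ℝ) = ‖(1:ℂ)‖ := by simp
      _ = ‖(1 - y * u) + y * u‖ := by rw [← this]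
      _ ≤ ‖1 - y * u‖ + ‖(y:ℂ) * u‖ := norm_add_le _ _
      _ = _ := by rw [norm_mul, norm_real, Real.norm_eq_abs]
  have h4 : |y| * ‖u‖ ≤ ‖1 - y * u‖ / (-u.im) * ‖u‖ := by gcongr
  calc 1 + |y| ≤ ‖1 - y * u‖ + ‖1 - y * u‖ / (-u.im) * ‖u‖ + ‖1 - y * u‖ / (-u.im) := by linarith
    _ = _ := by ring

theorem one_add_sq_lower (y : ℝ) : (1 + |y|) ^ 2 / 2 ≤ 1 + y ^ 2 := by
  rw [← sq_abs y]; nlinarith [sq_nonneg (1 - |y|)]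

theorem one_add_sq_ne (y : ℝ) : (1 + (y:ℂ) ^ 2) ≠ 0 := by
  have : (1 + (y:ℂ) ^ 2) = ((1 + y ^ 2 : ℝ) : ℂ) := by push_cast; ring
  rw [this, Ne, ofReal_eq_zero]; positivity

theorem norm_one_add_sq (y : ℝ) : ‖(1 + (y:ℂ) ^ 2)‖ = 1 + y ^ 2 := by
  have : (1 + (y:ℂ) ^ 2) = ((1 + y ^ 2 : ℝ) : ℂ) := by push_cast; ring
  rw [this, norm_real, Real.norm_eq_abs, abs_of_pos (by positivity)]

/-- The function `y²/(1+y²)`, which dominates the error terms and the squared speeds `|hu|²`. -/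
theorem psi2_test : TestFn (fun y => ((y ^ 2 / (1 + y ^ 2) : ℝ) : ℂ))
    (fun y => ((2 * y / (1 + y ^ 2) ^ 2 : ℝ) : ℂ)) 8 where
  K0 := by norm_num
  zero := by simp
  deriv t := by
    apply HasDerivAt.ofReal_comp
    have h1 : (1 + t ^ 2) ≠ 0 := by positivity
    refine HasDerivAt.congr_deriv
      (((hasDerivAt_id t).pow 2).div (((hasDerivAt_id t).pow 2).const_add 1) h1) ?_
    simp only [id, Pi.pow_apply, Nat.cast_ofNat]
    field_simp
    ring
  cont := by
    apply continuous_ofReal.comp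
    refine Continuous.div (by fun_prop) (by fun_prop) fun t => by positivity
  psi_le t := by
    rw [norm_real, Real.norm_eq_abs, abs_div, abs_mul, abs_two, abs_of_pos (a := (1 + t ^ 2) ^ 2) (by positivity)]
    have h := one_add_sq_lower t
    have hq : (1:ℝ) ≤ 1 + |t| := by linarith [abs_nonneg t]
    rw [← mul_div_assoc, div_le_div_iff₀ (by positivity) (by positivity)]
    have h2 : (1 + |t|) ^ 3 ≤ 4 * (1 + t ^ 2) ^ 2 := by
      have h3 : ((1 + |t|) ^ 2 / 2) ^ 2 ≤ (1 + t ^ 2) ^ 2 := by gcongr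
      have h4 : (1 + |t|) ^ 3 ≤ (1 + |t|) ^ 4 := pow_le_pow_right₀ hq (by norm_num)
      nlinarith
    nlinarith [mul_le_mul_of_nonneg_left h2 (abs_nonneg t)]
  Psi_le t := by
    rw [norm_real, Real.norm_eq_abs, abs_div, abs_of_nonneg (sq_nonneg t), abs_of_pos (a := (1 + t ^ 2)) (by positivity)]
    have h := one_add_sq_lower t
    rw [← mul_div_assoc, div_le_div_iff₀ (by positivity) (by positivity)]
    nlinarith [mul_le_mul_of_nonneg_left h (sq_nonneg t), sq_nonneg t]

/-- The kernel is the speed `y/(1-yu)` of a characteristic minus the centring `y/(1+y²)`. -/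
theorem PsiU_eq {u : ℂ} (hu0 : u.im < 0) (y : ℝ) :
    PsiU u y = y / (1 - y * u) - y / (1 + y ^ 2) := by
  have h1 := one_sub_ne' hu0 y
  have h2 := one_add_sq_ne y
  rw [PsiU]
  field_simp
  ring

theorem psiU_test {u : ℂ} (hu0 : u.im < 0) : ∃ K, TestFn (PsiU u)
    (fun y : ℝ => 1 / (1 - y * u) ^ 2 - (1 - (y:ℂ) ^ 2) / (1 + (y:ℂ) ^ 2) ^ 2) K := by
  set c := 1 + ‖u‖ / (-u.im) + 1 / (-u.im) with hc
  have hp : 0 < -u.im := by linarith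
  have hc1 : 1 ≤ c := by rw [hc]; have : 0 ≤ ‖u‖ / (-u.im) := by positivity
                         have : 0 ≤ 1 / (-u.im) := by positivity
                         linarith
  have hc0 : 0 < c := by linarith
  set C := 4 * ‖u‖ + 4 + 2 * ‖u‖ ^ 2 with hC
  have hC0 : 0 ≤ C := by positivity
  have hlow : ∀ y : ℝ, (1 + |y|) / c ≤ ‖1 - y * u‖ := fun y => by
    rw [div_le_iff₀ hc0]; exact one_sub_lower hu0 y
  refine ⟨4 * C * c ^ 2, ?_, ?_, ?_, ?_, ?_, ?_⟩
  · positivity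
  · simp [PsiU]
  · intro t
    have h1 := one_sub_ne' hu0 t
    have h2 := one_add_sq_ne t
    have e1 : HasDerivAt (fun y : ℂ => y / (1 - y * u) - y / (1 + y ^ 2))
        (1 / (1 - t * u) ^ 2 - (1 - (t:ℂ) ^ 2) / (1 + (t:ℂ) ^ 2) ^ 2) (t:ℂ) := by
      have a1 := (hasDerivAt_id (t:ℂ)).div (((hasDerivAt_id (t:ℂ)).mul_const u).const_sub 1) h1
      have a2 := (hasDerivAt_id (t:ℂ)).div (((hasDerivAt_id (t:ℂ)).pow 2).const_add 1) h2
      refine HasDerivAt.congr_deriv (a1.sub a2) ?_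
      simp only [id, Pi.pow_apply, Nat.cast_ofNat]
      field_simp
      ring
    have e2 := e1.comp_ofReal
    refine e2.congr_of_eventuallyEq ?_
    exact Eventually.of_forall fun y => PsiU_eq hu0 y
  · refine Continuous.sub ?_ ?_
    · refine Continuous.div (by fun_prop) (by fun_prop) fun t => pow_ne_zero _ (one_sub_ne' hu0 t)
    · refine Continuous.div (by fun_prop) (by fun_prop) fun t => pow_ne_zero _ (one_add_sq_ne t)
  · intro t
    have h1 := one_sub_ne' hu0 t
    have h2 := one_add_sq_ne t
    have e : 1 / (1 - t * u) ^ 2 - (1 - (t:ℂ) ^ 2) / (1 + (t:ℂ) ^ 2) ^ 2 =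
      t * (2 * u + (3 - u ^ 2) * t - 2 * u * t ^ 2 + (1 + u ^ 2) * t ^ 3) /
        ((1 - t * u) ^ 2 * (1 + (t:ℂ) ^ 2) ^ 2) := by
      field_simp
      ring
    rw [e, norm_div, norm_mul, norm_mul, norm_pow, norm_pow, norm_one_add_sq, norm_real, Real.norm_eq_abs]
    set q := 1 + |t| with hq
    have hq1 : 1 ≤ q := by rw [hq]; linarith [abs_nonneg t]
    have hq0 : 0 < q := by linarith
    have ht : |t| ≤ q := by rw [hq]; linarith
    have hnum : ‖2 * u + (3 - u ^ 2) * t - 2 * u * t ^ 2 + (1 + u ^ 2) * t ^ 3‖ ≤ C * q ^ 3 := by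
      have b1 : ‖2 * u‖ ≤ 2 * ‖u‖ * q ^ 3 := by
        rw [norm_mul]; simp
        have : 1 ≤ q ^ 3 := one_le_pow₀ hq1
        nlinarith [norm_nonneg u]
      have b2 : ‖(3 - u ^ 2) * t‖ ≤ (3 + ‖u‖ ^ 2) * q ^ 3 := by
        rw [norm_mul, norm_real, Real.norm_eq_abs]
        refine mul_le_mul ?_ (ht.trans (le_self_pow₀ hq1 (by norm_num))) (abs_nonneg _) (by positivity)
        refine (norm_sub_le _ _).trans ?_
        simp
      have b3 : ‖2 * u * t ^ 2‖ ≤ 2 * ‖u‖ * q ^ 3 := by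
        rw [norm_mul, norm_mul, norm_pow, norm_real, Real.norm_eq_abs]
        have : |t| ^ 2 ≤ q ^ 3 := (pow_le_pow_left₀ (abs_nonneg _) ht 2).trans (pow_le_pow_right₀ hq1 (by norm_num))
        simp only [norm_ofNat]
        gcongr
      have b4 : ‖(1 + u ^ 2) * t ^ 3‖ ≤ (1 + ‖u‖ ^ 2) * q ^ 3 := by
        rw [norm_mul, norm_pow, norm_real, Real.norm_eq_abs]
        refine mul_le_mul ?_ (pow_le_pow_left₀ (abs_nonneg _) ht 3) (by positivity) (by positivity)
        refine (norm_add_le _ _).trans ?_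
        simp
      have := norm_add_le (2 * u + (3 - u ^ 2) * t - 2 * u * t ^ 2) ((1 + u ^ 2) * t ^ 3)
      have := norm_sub_le (2 * u + (3 - u ^ 2) * t) (2 * u * t ^ 2)
      have := norm_add_le (2 * u) ((3 - u ^ 2) * t)
      rw [hC]
      linarith
    have hden : (q / c) ^ 2 * (q ^ 2 / 2) ^ 2 ≤ ‖1 - t * u‖ ^ 2 * (1 + t ^ 2) ^ 2 := by
      have := hlow t
      have := one_add_sq_lower t
      gcongr
    calc _ ≤ |t| * (C * q ^ 3) / ((q / c) ^ 2 * (q ^ 2 / 2) ^ 2) := by gcongr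
      _ = _ := by field_simp; norm_num
  · intro t
    rw [PsiU, norm_div, norm_mul, norm_mul, norm_one_add_sq, norm_pow, norm_real, Real.norm_eq_abs, sq_abs]
    set q := 1 + |t| with hq
    have hq1 : 1 ≤ q := by rw [hq]; linarith [abs_nonneg t]
    have hq0 : 0 < q := by linarith
    have hnum : ‖(t:ℂ) + u‖ ≤ q * (1 + ‖u‖) := by
      refine (norm_add_le _ _).trans ?_
      rw [norm_real, Real.norm_eq_abs]
      have : |t| ≤ q := by rw [hq]; linarith
      nlinarith [norm_nonneg u]
    have hden : (q / c) * (q ^ 2 / 2) ≤ ‖1 - t * u‖ * (1 + t ^ 2) := by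
      have := hlow t
      have := one_add_sq_lower t
      gcongr
    calc _ ≤ t ^ 2 * (q * (1 + ‖u‖)) / ((q / c) * (q ^ 2 / 2)) := by gcongr
      _ = 2 * c * (1 + ‖u‖) * (t ^ 2 / q ^ 2) := by field_simp
      _ ≤ _ := by
        refine mul_le_mul_of_nonneg_right ?_ (by positivity)
        rw [hC]
        have h1 : c ≤ c ^ 2 := le_self_pow₀ hc1 (by norm_num)
        nlinarith [norm_nonneg u, sq_nonneg ‖u‖, mul_nonneg hc0.le (norm_nonneg u), mul_nonneg (sub_nonneg.2 h1) (norm_nonneg u), mul_nonneg (sq_nonneg c) (norm_nonneg u), mul_nonneg (sq_nonneg c) (sq_nonneg ‖u‖)]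

/-- The limit of the rescaled sums is the `R`-transform of the stable law. -/
theorem SD.Rlim {α : ℕ → ℂ} {M a θ : ℝ} (h : SD α M a θ) {u : ℂ} (hu0 : u.im < 0) :
    Tendsto (fun n : ℕ => (1 / (n:ℂ)) * ∑' j, PsiU u (bseq α n / rr α j)) atTop
      (𝓝 (Rtrans 0 (stableLevy a θ) u)) := by
  obtain ⟨K, hK⟩ := psiU_test hu0
  have := h.sum_lim hK
  convert this using 2
  have ha0 := h.ha0
  have hi := (intg_s h.ha0 h.ha2).const_mul (K * a)
  have hΨc : Continuous (PsiU u) := continuous_iff_continuousAt.2 fun t => (hK.deriv t).continuousAt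
  have hintg : ∀ {Φ φ : ℝ → ℂ} (hΦ : TestFn Φ φ K),
      IntegrableOn (fun t : ℝ => ((a * t ^ (-a - 1) : ℝ) : ℂ) * Φ t) (Set.Ioi 0) := by
    intro Φ φ hΦ
    have hΦc : Continuous Φ := continuous_iff_continuousAt.2 fun t => (hΦ.deriv t).continuousAt
    refine Integrable.mono' hi ?_ ?_
    · refine AEStronglyMeasurable.mul ?_ hΦc.aestronglyMeasurable
      apply Measurable.aestronglyMeasurable; fun_prop
    · refine (ae_restrict_iff' measurableSet_Ioi).2 (Eventually.of_forall fun t ht => ?_)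
      have ht : 0 < t := ht
      rw [norm_mul, norm_real, Real.norm_eq_abs, abs_of_pos (by positivity)]
      have h1 := hΦ.Psi_le t
      rw [abs_of_pos ht] at h1
      calc _ ≤ a * t ^ (-a - 1) * (K * (t ^ 2 / (1 + t) ^ 2)) := by gcongr
        _ = _ := by
          rw [Real.rpow_sub_one ht.ne']; field_simp
  rw [Rtrans, stableLevy, integral_withDensity_eq_integral_toReal_smul₀]
  rotate_left
  · apply Measurable.aemeasurable
    apply Measurable.ennreal_ofReal
    refine Measurable.div (Measurable.mul (Measurable.mul measurable_const (Measurable.add ?_ ?_)) (by fun_prop)) (by fun_prop)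
    · exact Measurable.ite measurableSet_Ioi measurable_const measurable_const
    · exact Measurable.ite measurableSet_Iio measurable_const measurable_const
  · simp
  set G : ℝ → ℂ := fun x => (ENNReal.ofReal (a * ((if 0 < x then θ else 0) + (if x < 0 then 1 - θ else 0)) *
      |x| ^ (1 - a) / (1 + x ^ 2))).toReal • ((u + (x : ℂ)) / (1 - (x : ℂ) * u)) with hG
  have hθ1 : 0 ≤ 1 - θ := by linarith [h.hθ1]
  have hθ0 := h.hθ0
  have hG1 : ∀ x ∈ Set.Ioi (0:ℝ), G x = (θ:ℂ) * (((a * x ^ (-a - 1) : ℝ) : ℂ) * PsiU u x) := by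
    intro x hx
    have hx : 0 < x := hx
    have e1 : x ^ (1 - a) = x ^ (-a - 1) * x ^ 2 := by
      rw [← Real.rpow_natCast x 2, ← Real.rpow_add hx]; norm_num; ring_nf
    rw [hG]
    simp only [hx, if_true, hx.not_gt, if_false, add_zero, abs_of_pos hx]
    rw [ENNReal.toReal_ofReal (by positivity), e1, PsiU, real_smul]
    have h1 := one_sub_ne' hu0 x
    have h2 := one_add_sq_ne x
    push_cast
    field_simp
    ring
  have hG2 : ∀ x ∈ Set.Ioi (0:ℝ), G (-x) = ((1 - θ : ℝ):ℂ) * (((a * x ^ (-a - 1) : ℝ) : ℂ) * PsiU u (-x)) := by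
    intro x hx
    have hx : 0 < x := hx
    have e1 : x ^ (1 - a) = x ^ (-a - 1) * x ^ 2 := by
      rw [← Real.rpow_natCast x 2, ← Real.rpow_add hx]; norm_num; ring_nf
    have hx' : -x < 0 := by linarith
    rw [hG]
    simp only [hx', if_true, hx'.not_gt, if_false, zero_add, abs_neg, abs_of_pos hx]
    rw [ENNReal.toReal_ofReal (by positivity), e1, PsiU, real_smul]
    have h1 := one_sub_ne' hu0 (-x)
    have h2 := one_add_sq_ne (-x)
    push_cast at h1 h2 ⊢
    field_simp
    ring
  have hI1 : IntegrableOn G (Set.Ioi 0) := by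
    refine IntegrableOn.congr_fun ((hintg hK).const_mul (θ:ℂ)) (fun x hx => (hG1 x hx).symm) measurableSet_Ioi
  have hI2' : IntegrableOn (fun x => G (-x)) (Set.Ioi 0) := by
    refine IntegrableOn.congr_fun ((hintg hK.neg).const_mul ((1 - θ : ℝ):ℂ)) (fun x hx => (hG2 x hx).symm) measurableSet_Ioi
  have hI2 : IntegrableOn G (Set.Iio 0) := by
    have := ((Measure.measurePreserving_neg (volume : Measure ℝ)).integrableOn_comp_preimage
      (Homeomorph.neg ℝ).measurableEmbedding (f := G) (s := Set.Iio 0)).1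
      (by
        have e : (Neg.neg ⁻¹' (Set.Iio (0:ℝ))) = Set.Ioi 0 := by ext x; simp
        rw [e]; exact hI2')
    exact this
  have hsplit : ∫ x, G x = (∫ x in Set.Ioi 0, G x) + ∫ x in Set.Ioi 0, G (-x) := by
    rw [integral_comp_neg_Ioi, neg_zero, add_comm]
    have := intervalIntegral.integral_Iic_add_Ioi (b := (0:ℝ)) (f := G) (μ := volume)
      (by rw [integrableOn_Iic_iff_integrableOn_Iio]; exact hI2) hI1
    rw [← this]
  rw [hsplit, setIntegral_congr_fun measurableSet_Ioi hG1, setIntegral_congr_fun measurableSet_Ioi hG2,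
    integral_const_mul, integral_const_mul]
  simp

/-! ### Comparison of summands for complex and real reciprocal roots -/

/-- The centring term `x³/(1+x²)`. -/
noncomputable def kap (x : ℂ) : ℂ := x ^ 3 / (1 + x ^ 2)

/-- The speed of a characteristic is at most a constant times `min(|x|, 1)`. -/
theorem hu_le {u : ℂ} (hu0 : u.im < 0) (x : ℝ) :
    ‖hu u x‖ ≤ (1 + ‖u‖ / (-u.im) + 1 / (-u.im)) * (|x| / (1 + |x|)) := by
  have h1 := one_sub_ne' hu0 x
  have h2 := one_sub_lower hu0 x
  rw [hu, norm_div, norm_real, Real.norm_eq_abs, ← mul_div_assoc, div_le_div_iff₀ (by positivity) (by positivity)]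
  nlinarith [abs_nonneg x]

/-- The real part of `1/ω` is at most `1/|Re ω|` in absolute value. -/
theorem re_inv_le {ω : ℂ} (hs : ω.re ≠ 0) : |(1 / ω).re| ≤ |1 / ω.re| := by
  have e : (1 / ω).re = ω.re / (ω.re ^ 2 + ω.im ^ 2) := by
    rw [one_div, inv_re, normSq_apply]; ring
  have hp : 0 < ω.re ^ 2 := by positivity
  have ha : 0 < |ω.re| := abs_pos.2 hs
  have hq : 0 < ω.re ^ 2 + ω.im ^ 2 := by positivity
  rw [e, abs_div, abs_div, abs_one, abs_of_pos hq, div_le_div_iff₀ hq ha]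
  rw [← sq, sq_abs]; nlinarith [sq_nonneg ω.im]

/-- Comparison of the summand attached to `1/ω` with the test function at `1/Re ω`. -/
theorem comp_main {u : ℂ} (hu0 : u.im < 0) {ω : ℂ} {ε : ℝ} (hs : ω.re ≠ 0) (hη : |ω.im| ≤ ε)
    (hε : ε ≤ 1 / 2) (hsη : |ω.im| ≤ |ω.re|) :
    ‖hu u ((1 / ω).re) - (((ω / (ω ^ 2 + 1)).re : ℝ) : ℂ) - PsiU u (1 / ω.re)‖ ≤
      ((1 + ‖u‖ / (-u.im) + 1 / (-u.im)) ^ 2 + 4) * ε * ((1 / ω.re) ^ 2 / (1 + (1 / ω.re) ^ 2)) := by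
  set s := ω.re with hs'
  set η := ω.im with hη'
  set c := (1 + ‖u‖ / (-u.im) + 1 / (-u.im)) with hc
  have hε0 : 0 ≤ ε := (abs_nonneg _).trans hη
  have hp : 0 < s ^ 2 := by positivity
  have e0 : (1 / s) ^ 2 / (1 + (1 / s) ^ 2) = 1 / (1 + s ^ 2) := by
    field_simp
    ring
  have e : (1 / ω).re = s / (s ^ 2 + η ^ 2) := by
    rw [one_div, inv_re, normSq_apply]; ring
  have hlow : ∀ t : ℝ, t ≠ 0 → 1 + |t| ≤ ‖(t:ℂ) - u‖ * c := by
    intro t ht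
    have h1 := one_sub_lower hu0 (1 / t)
    have h2 : (t:ℂ) - u = t * (1 - (1 / t : ℝ) * u) := by
      have : (t:ℂ) ≠ 0 := by exact_mod_cast ht
      push_cast; field_simp
    rw [h2, norm_mul, norm_real, Real.norm_eq_abs, mul_assoc]
    calc 1 + |t| = |t| * (1 + |1 / t|) := by rw [abs_div, abs_one]; field_simp; ring
      _ ≤ _ := by gcongr
  have hne : ∀ t : ℝ, (t:ℂ) - u ≠ 0 := by
    intro t h0
    have := congrArg Complex.im h0
    simp at this; linarith
  -- the reciprocal of `Re (1/ω)`
  set t := s + η ^ 2 / s with ht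
  have htm : t * s = s ^ 2 + η ^ 2 := by rw [ht]; field_simp
  have ht0 : t ≠ 0 := by
    intro h0; rw [h0, zero_mul] at htm; nlinarith [sq_nonneg η]
  have hts : |s| ≤ |t| := by
    have h1 : |t| * |s| = s ^ 2 + η ^ 2 := by rw [← abs_mul, htm, abs_of_pos (by positivity)]
    have h2 : |s| * |s| = s ^ 2 := by rw [← sq, sq_abs]
    have h3 : 0 < |s| := abs_pos.2 hs
    nlinarith [sq_nonneg η]
  have e1 : (1 / ω).re = 1 / t := by rw [e, ← htm]; field_simp
  have hhu : ∀ t : ℝ, t ≠ 0 → hu u ((1 / t : ℝ)) = 1 / ((t:ℂ) - u) := by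
    intro t ht
    have h1 := hne t
    have h2 : (t:ℂ) ≠ 0 := by exact_mod_cast ht
    rw [hu]; push_cast
    have h3 : 1 - 1 / (t:ℂ) * u ≠ 0 := by
      intro h0; apply h1
      calc (t:ℂ) - u = t * (1 - 1 / (t:ℂ) * u) := by field_simp
        _ = 0 := by rw [h0, mul_zero]
    rw [div_eq_div_iff h3 h1]
    field_simp
  have hI : ‖hu u ((1 / ω).re) - hu u ((1 / s : ℝ))‖ ≤ c ^ 2 * ε * (1 / (1 + s ^ 2)) := by
    rw [e1, hhu t ht0, hhu s hs]
    have h1 : 1 / ((t:ℂ) - u) - 1 / ((s:ℂ) - u) = ((s - t : ℝ) : ℂ) / (((t:ℂ) - u) * ((s:ℂ) - u)) := by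
      have := hne t; have := hne s
      push_cast; field_simp; ring
    rw [h1, norm_div, norm_mul, norm_real, Real.norm_eq_abs]
    have h2 : |s - t| ≤ ε := by
      have : s - t = -(η ^ 2 / s) := by rw [ht]; ring
      rw [this, abs_neg, abs_div, abs_of_nonneg (sq_nonneg η), div_le_iff₀ (abs_pos.2 hs), ← sq_abs, sq]
      gcongr
    have h3 := hlow t ht0
    have h4 := hlow s hs
    have h5 : 1 + s ^ 2 ≤ (‖(t:ℂ) - u‖ * c) * (‖(s:ℂ) - u‖ * c) := by
      calc 1 + s ^ 2 ≤ (1 + |s|) * (1 + |s|) := by rw [← sq_abs s]; nlinarith [abs_nonneg s]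
        _ ≤ (1 + |t|) * (1 + |s|) := by gcongr
        _ ≤ _ := mul_le_mul h3 h4 (by positivity) (le_trans (by positivity) h3)
    have h6 : 0 < ‖(t:ℂ) - u‖ := norm_pos_iff.2 (hne t)
    have h7 : 0 < ‖(s:ℂ) - u‖ := norm_pos_iff.2 (hne s)
    rw [div_le_iff₀ (by positivity)]
    calc |s - t| ≤ ε * 1 := by rw [mul_one]; exact h2
      _ ≤ ε * (1 / (1 + s ^ 2) * ((‖(t:ℂ) - u‖ * c) * (‖(s:ℂ) - u‖ * c))) := by
        gcongr
        rw [one_div, ← div_eq_inv_mul, le_div_iff₀ (by positivity), one_mul]; exact h5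
      _ = _ := by ring
  have hω : ω ^ 2 + 1 ≠ 0 ∧ (1 + s ^ 2) / 2 ≤ ‖ω ^ 2 + 1‖ := by
    have h1 : (ω ^ 2 + 1).re = 1 + s ^ 2 - η ^ 2 := by
      simp [sq]; ring
    have h2 : η ^ 2 ≤ 1 / 4 := by rw [← sq_abs]; nlinarith [abs_nonneg η]
    have h3 : (1 + s ^ 2) / 2 ≤ ‖ω ^ 2 + 1‖ := by
      refine le_trans ?_ (re_le_norm _); rw [h1]; nlinarith
    refine ⟨fun h0 => ?_, h3⟩
    rw [h0, norm_zero] at h3; nlinarith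
  have hII : ‖(((ω / (ω ^ 2 + 1)).re : ℝ) : ℂ) - ((s / (s ^ 2 + 1) : ℝ) : ℂ)‖ ≤ 4 * ε * (1 / (1 + s ^ 2)) := by
    have hne2 : ((s:ℂ) ^ 2 + 1) ≠ 0 := by rw [add_comm]; exact one_add_sq_ne s
    have h1 : ω / (ω ^ 2 + 1) - (s:ℂ) / ((s:ℂ) ^ 2 + 1) = (ω - s) * (1 - s * ω) / ((ω ^ 2 + 1) * (s ^ 2 + 1)) := by
      have := hω.1
      field_simp; ring
    have h2 : ‖ω - s‖ ≤ ε := by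
      have : ω - s = η * I := by
        apply Complex.ext <;> simp [hs', hη']
      rw [this, norm_mul, norm_I, mul_one, norm_real]; exact hη
    have h3 : ‖1 - s * ω‖ ≤ 2 * (1 + s ^ 2) := by
      have : 1 - s * ω = ((1 - s ^ 2 : ℝ) : ℂ) - s * (ω - s) := by push_cast; ring
      rw [this]
      refine (norm_sub_le _ _).trans ?_
      rw [norm_mul, norm_real, norm_real, Real.norm_eq_abs, Real.norm_eq_abs]
      have h4 : |1 - s ^ 2| ≤ 1 + s ^ 2 := abs_le.2 ⟨by nlinarith, by nlinarith⟩
      have h5 : |s| * ‖ω - s‖ ≤ |s| * (1 / 2) := by gcongr; linarith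
      have h6 : |s| ≤ 1 + s ^ 2 := by rw [← sq_abs]; nlinarith [sq_nonneg (|s| - 1)]
      linarith
    rw [← ofReal_sub, norm_real, Real.norm_eq_abs]
    have h4 : (ω / (ω ^ 2 + 1)).re - s / (s ^ 2 + 1) = (ω / (ω ^ 2 + 1) - (s:ℂ) / ((s:ℂ) ^ 2 + 1)).re := by
      rw [sub_re]; congr 1
      rw [← ofReal_pow, ← ofReal_one, ← ofReal_add, ← ofReal_div, ofReal_re]
    rw [h4]
    refine (abs_re_le_norm _).trans ?_
    have h5 : ‖(s:ℂ) ^ 2 + 1‖ = 1 + s ^ 2 := by rw [add_comm, norm_one_add_sq]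
    rw [h1, norm_div, norm_mul, norm_mul, h5]
    have := hω.2
    calc _ ≤ ε * (2 * (1 + s ^ 2)) / ((1 + s ^ 2) / 2 * (1 + s ^ 2)) := by gcongr
      _ = _ := by field_simp; norm_num
  rw [e0]
  have h9 : PsiU u (1 / s) = hu u ((1 / s : ℝ)) - ((s / (s ^ 2 + 1) : ℝ) : ℂ) := by
    rw [PsiU_eq hu0, hu]; congr 1
    rw [← ofReal_pow, ← ofReal_one, ← ofReal_add, ← ofReal_div]
    congr 1; field_simp
  rw [h9]
  calc _ = ‖(hu u ((1 / ω).re) - hu u ((1 / s : ℝ))) -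
      ((((ω / (ω ^ 2 + 1)).re : ℝ) : ℂ) - ((s / (s ^ 2 + 1) : ℝ) : ℂ))‖ := by congr 1; ring
    _ ≤ _ := (norm_sub_le _ _).trans (by linarith)

/-- Crude bound for the finitely many zeros with small real part. -/
theorem comp_crude {u : ℂ} (hu0 : u.im < 0) {ω : ℂ} {ε : ℝ} (hη : |ω.im| ≤ ε)
    (hε : ε ≤ 1 / 2) (x y : ℝ) :
    ‖hu u x - (((ω / (ω ^ 2 + 1)).re : ℝ) : ℂ) - PsiU u y‖ ≤ 2 / (-u.im) + 3 := by
  have h1 := hu_norm_le hu0 x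
  have h2 := hu_norm_le hu0 y
  have hp : ω + I ≠ 0 ∧ ‖1 / (ω + I)‖ ≤ 2 := by
    have h3 : 1 / 2 ≤ ‖ω + I‖ := by
      have h4 := abs_im_le_norm (ω + I)
      simp at h4
      have := neg_abs_le ω.im
      have := le_abs_self (ω.im + 1)
      linarith
    have h4 : 0 < ‖ω + I‖ := by linarith
    refine ⟨norm_pos_iff.1 h4, ?_⟩
    rw [norm_div, norm_one, div_le_iff₀ h4]; linarith
  have hm : ω - I ≠ 0 ∧ ‖1 / (ω - I)‖ ≤ 2 := by
    have h3 : 1 / 2 ≤ ‖ω - I‖ := by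
      have h4 := abs_im_le_norm (ω - I)
      simp at h4
      have := le_abs_self ω.im
      have := neg_abs_le (ω.im - 1)
      linarith
    have h4 : 0 < ‖ω - I‖ := by linarith
    refine ⟨norm_pos_iff.1 h4, ?_⟩
    rw [norm_div, norm_one, div_le_iff₀ h4]; linarith
  have h3 : ω / (ω ^ 2 + 1) = (1 / (ω + I) + 1 / (ω - I)) / 2 := by
    have e : ω ^ 2 + 1 = (ω + I) * (ω - I) := by ring_nf; simp [add_comm]
    have := hp.1; have := hm.1
    rw [e]; field_simp; ring
  have h4 : ‖(((ω / (ω ^ 2 + 1)).re : ℝ) : ℂ)‖ ≤ 2 := by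
    rw [norm_real, Real.norm_eq_abs]
    refine (abs_re_le_norm _).trans ?_
    rw [h3, norm_div]
    have := norm_add_le (1 / (ω + I)) (1 / (ω - I))
    have := hp.2; have := hm.2
    simp only [norm_ofNat]
    linarith
  have h5 : ‖PsiU u y‖ ≤ 1 / (-u.im) + 1 := by
    rw [PsiU_eq hu0]
    refine (norm_sub_le _ _).trans (add_le_add h2 ?_)
    rw [norm_div, norm_one_add_sq, norm_real, Real.norm_eq_abs, div_le_one (by positivity), ← sq_abs]
    nlinarith [sq_nonneg (|y| - 1)]
  have h6 := norm_sub_le (hu u x - (((ω / (ω ^ 2 + 1)).re : ℝ) : ℂ)) (PsiU u y)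
  have h7 := norm_sub_le (hu u x) (((ω / (ω ^ 2 + 1)).re : ℝ) : ℂ)
  have : 2 / (-u.im) = 1 / (-u.im) + 1 / (-u.im) := by ring
  linarith

/-! ### Pointwise convergence for real parts -/

section
variable {α : ℕ → ℂ} {M a θ : ℝ}

/-- The real shift attached to a finite set `F` of indices: `E_n` and the centring, minus the part
`(1/n) ∑_{j ∈ F} Re x_j` supplied by the exponential factors of the canonical product. -/
noncomputable def eF (α : ℕ → ℂ) (En : ℕ → ℝ) (n : ℕ) (F : Finset ℕ) : ℝ :=
  En n + (1 / n) * ∑' j, (kap (bseq α n * α j)).re - (1 / n) * ∑ j ∈ F, bseq α n * (α j).re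

theorem SD.small (h : SD α M a θ) {δ : ℝ} (hδ : 0 < δ) : ∀ᶠ j in cofinite, ‖α j‖ < δ := by
  filter_upwards [(h.hsum.tendsto_cofinite_zero).eventually_lt_const (show (0:ℝ) < δ ^ 2 by positivity)]
    with j hj
  exact lt_of_pow_lt_pow_left₀ 2 hδ.le hj

theorem SD.kap_summable (h : SD α M a θ) (b : ℝ) : Summable fun j => kap (b * α j) := by
  refine Summable.of_norm_bounded_eventually (h.hsum.mul_left (b ^ 2)) ?_
  filter_upwards [h.small (show (0:ℝ) < 1 / (2 * (|b| + 1)) by positivity)] with j hj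
  have h1 : ‖(b:ℂ) * α j‖ ≤ 1 / 2 := by
    rw [norm_mul, norm_real, Real.norm_eq_abs]
    calc |b| * ‖α j‖ ≤ (|b| + 1) * (1 / (2 * (|b| + 1))) := by gcongr; linarith
      _ = 1 / 2 := by field_simp
  have e : b ^ 2 * ‖α j‖ ^ 2 = ‖(b:ℂ) * α j‖ ^ 2 := by
    rw [norm_mul, norm_real, Real.norm_eq_abs, mul_pow, sq_abs]
  rw [e]
  set x := (b:ℂ) * α j
  have h2 : 1 / 2 ≤ ‖1 + x ^ 2‖ := by
    have h3 : ‖(1:ℂ)‖ ≤ ‖1 + x ^ 2‖ + ‖x ^ 2‖ := by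
      have := norm_sub_le (1 + x ^ 2) (x ^ 2); simpa using this
    rw [norm_one, norm_pow] at h3
    nlinarith [norm_nonneg x]
  rw [kap, norm_div, norm_pow, div_le_iff₀ (by linarith)]
  nlinarith [norm_nonneg x, sq_nonneg ‖x‖, mul_nonneg (sq_nonneg ‖x‖) (sub_nonneg.2 h1), mul_le_mul_of_nonneg_left h2 (sq_nonneg ‖x‖)]

theorem SD.kapre_summable (h : SD α M a θ) (b : ℝ) : Summable fun j => (kap (b * α j)).re :=
  (h.kap_summable b).mapL reCLM

theorem hu_sub_le {u : ℂ} (hu0 : u.im < 0) (x : ℝ) :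
    ‖hu u x - x‖ ≤ (1 + ‖u‖ / (-u.im) + 1 / (-u.im)) * ‖u‖ * x ^ 2 := by
  have h1 := one_sub_ne' hu0 x
  have h2 := one_sub_lower hu0 x
  have e : hu u x - x = x ^ 2 * u / (1 - x * u) := by rw [hu]; field_simp; ring
  rw [e, norm_div, norm_mul, norm_pow, norm_real, Real.norm_eq_abs, sq_abs, div_le_iff₀ (norm_pos_iff.2 h1)]
  have h3 : 0 ≤ x ^ 2 * ‖u‖ := by positivity
  nlinarith [abs_nonneg x, mul_le_mul_of_nonneg_left h2 h3, mul_nonneg h3 (abs_nonneg x)]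

theorem SD.k_summable (h : SD α M a θ) {u : ℂ} (hu0 : u.im < 0) (b : ℝ) :
    Summable fun j => hu u (b * (α j).re) - ((b * (α j).re : ℝ) : ℂ) := by
  refine Summable.of_norm_bounded (h.hsum.mul_left ((1 + ‖u‖ / (-u.im) + 1 / (-u.im)) * ‖u‖ * b ^ 2)) fun j => ?_
  refine (hu_sub_le hu0 _).trans ?_
  have hp : 0 < -u.im := by linarith
  have h1 : (α j).re ^ 2 ≤ ‖α j‖ ^ 2 := by
    rw [← sq_abs]; exact pow_le_pow_left₀ (abs_nonneg _) (abs_re_le_norm _) 2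
  rw [mul_pow]
  calc _ = ((1 + ‖u‖ / (-u.im) + 1 / (-u.im)) * ‖u‖ * b ^ 2) * (α j).re ^ 2 := by ring
    _ ≤ _ := by gcongr

/-- The summand at `b z`, with the centring, rewritten in terms of the rescaled root `ω = 1/(b z)`;
in this form it is compared with `PsiU u (1/Re ω)`. -/
theorem term_eq {b : ℝ} (hb : 0 < b) {z : ℂ} (hz : z ≠ 0) (h1 : (1 / (b * z)) ^ 2 + 1 ≠ 0) (u : ℂ) :
    ((kap (b * z)).re : ℂ) + (hu u (b * z.re) - ((b * z.re : ℝ) : ℂ)) =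
      hu u ((1 / (1 / (b * z))).re) - ((((1 / (b * z)) / ((1 / (b * z)) ^ 2 + 1)).re : ℝ) : ℂ) := by
  have hbc : (b:ℂ) ≠ 0 := by exact_mod_cast hb.ne'
  have hx : (b:ℂ) * z ≠ 0 := mul_ne_zero hbc hz
  have e1 : (1 / (1 / ((b:ℂ) * z))).re = b * z.re := by rw [one_div_one_div, re_ofReal_mul]
  have e2 : kap (b * z) = b * z - (1 / (b * z)) / ((1 / (b * z)) ^ 2 + 1) := by
    rw [kap]
    generalize (b:ℂ) * z = x at *
    have h2 : 1 + x ^ 2 ≠ 0 := by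
      intro h0; apply h1; field_simp; rw [h0, mul_zero]
    field_simp
    ring
  rw [e1, e2, sub_re, re_ofReal_mul]
  push_cast
  ring

/-- The summand for `α_j` agrees with the kernel at `b/Re(1/α_j)` up to a relative error `O(M/b)`
and a bounded error at the finitely many roots near the imaginary axis. -/
theorem SD.term_bound (h : SD α M a θ) {u : ℂ} (hu0 : u.im < 0) {b : ℝ} (hb : 0 < b) (hbM : 2 * M ≤ b) (j : ℕ) :
    ‖((kap (b * α j)).re : ℂ) + (hu u (b * (α j).re) - ((b * (α j).re : ℝ) : ℂ)) - PsiU u (b / rr α j)‖ ≤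
      ((1 + ‖u‖ / (-u.im) + 1 / (-u.im)) ^ 2 + 4) * (M / b) * ((b / rr α j) ^ 2 / (1 + (b / rr α j) ^ 2)) +
       (if j ∈ (h.fin (max M 1)).toFinset then 2 / (-u.im) + 3 else 0) := by
  have hp : 0 < -u.im := by linarith
  have hM := h.hM
  by_cases hj : α j = 0
  · have h1 : rr α j = 0 := by simp [rr, hj]
    rw [h1, hj]
    simp [kap, hu, PsiU]
    split_ifs
    · positivity
    · rfl
  have hbc : (b:ℂ) ≠ 0 := by exact_mod_cast hb.ne'
  have hε : M / b ≤ 1 / 2 := by rw [div_le_iff₀ hb]; linarith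
  have hω : 1 / ((b:ℂ) * α j) = ((1 / b : ℝ) : ℂ) * (1 / α j) := by push_cast; field_simp
  have hre : (1 / ((b:ℂ) * α j)).re = rr α j / b := by rw [hω, re_ofReal_mul, rr]; ring
  have him : (1 / ((b:ℂ) * α j)).im = (1 / α j).im / b := by rw [hω, im_ofReal_mul]; ring
  have hη : |(1 / ((b:ℂ) * α j)).im| ≤ M / b := by
    rw [him, abs_div, abs_of_pos hb]; have := h.him j hj; gcongr
  have h1 : (1 / ((b:ℂ) * α j)) ^ 2 + 1 ≠ 0 := by
    intro h0
    have h2 := congrArg Complex.re h0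
    simp only [sq, add_re, mul_re, one_re, zero_re] at h2
    have h3 : |(1 / ((b:ℂ) * α j)).im| ≤ 1 / 2 := hη.trans hε
    have h4 := abs_le.1 h3
    nlinarith [sq_nonneg (1 / ((b:ℂ) * α j)).re]
  rw [term_eq hb hj h1]
  by_cases hr : |rr α j| < max M 1
  · rw [if_pos ((h.fin _).mem_toFinset.2 ⟨hj, hr⟩)]
    have := comp_crude hu0 hη hε (1 / (1 / (b * α j))).re (b / rr α j)
    refine this.trans (le_add_of_nonneg_left ?_)
    positivity
  · rw [if_neg (fun hc => hr ((h.fin _).mem_toFinset.1 hc).2), add_zero]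
    push Not at hr
    have hr1 : 1 ≤ |rr α j| := (le_max_right _ _).trans hr
    have hrM : M ≤ |rr α j| := (le_max_left _ _).trans hr
    have hr0 : rr α j ≠ 0 := by rw [← abs_pos]; linarith
    have h5 : b / rr α j = 1 / (1 / ((b:ℂ) * α j)).re := by rw [hre]; field_simp
    rw [h5]
    refine comp_main hu0 ?_ hη hε ?_
    · rw [hre]; positivity
    · rw [him, hre, abs_div, abs_div]
      have := (h.him j hj).trans hrM
      gcongr

theorem xr_le {b : ℝ} (hb : 0 < b) (j : ℕ) : |b * (α j).re| ≤ |b / rr α j| := by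
  by_cases hr : rr α j = 0
  · have : (α j).re = 0 := by
      rw [rr, one_div, inv_re] at hr
      rcases div_eq_zero_iff.1 hr with h | h
      · exact h
      · rw [normSq_eq_zero.1 h]; rfl
    simp [this]
  · have h1 := re_inv_le (ω := 1 / α j) hr
    rw [one_div_one_div] at h1
    rw [abs_mul, abs_div, abs_of_pos hb, div_eq_mul_one_div]
    gcongr
    have : |1 / (1 / α j).re| = 1 / |rr α j| := by rw [abs_div, abs_one, rr]
    rw [← this]; exact h1

theorem hu_sq_le {u : ℂ} (hu0 : u.im < 0) {b : ℝ} (hb : 0 < b) (j : ℕ) :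
    ‖hu u (b * (α j).re)‖ ^ 2 ≤ (1 + ‖u‖ / (-u.im) + 1 / (-u.im)) ^ 2 *
      ((b / rr α j) ^ 2 / (1 + (b / rr α j) ^ 2)) := by
  have hp : 0 < -u.im := by linarith
  have h1 := hu_le hu0 (b * (α j).re)
  have h2 := xr_le (α := α) hb j
  set x := b * (α j).re
  set y := b / rr α j
  have h3 : |x| / (1 + |x|) ≤ |y| / (1 + |y|) := by
    rw [div_le_div_iff₀ (by positivity) (by positivity)]; nlinarith
  have h4 : (|y| / (1 + |y|)) ^ 2 ≤ y ^ 2 / (1 + y ^ 2) := by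
    rw [div_pow, ← sq_abs y]
    gcongr
    nlinarith [abs_nonneg y]
  calc _ ≤ ((1 + ‖u‖ / (-u.im) + 1 / (-u.im)) * (|x| / (1 + |x|))) ^ 2 := by gcongr
    _ ≤ ((1 + ‖u‖ / (-u.im) + 1 / (-u.im)) * (|y| / (1 + |y|))) ^ 2 := by gcongr
    _ = (1 + ‖u‖ / (-u.im) + 1 / (-u.im)) ^ 2 * (|y| / (1 + |y|)) ^ 2 := by ring
    _ ≤ _ := by gcongr

/-- The total `(1/n) ∑ y_j²/(1+y_j²)` with `y_j = b_n/Re(1/α_j)` stays bounded. -/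
theorem SD.psi2_bdd (h : SD α M a θ) : ∃ L : ℝ, 0 ≤ L ∧ ∀ᶠ n : ℕ in atTop,
    (1 / (n:ℝ)) * ∑' j, (bseq α n / rr α j) ^ 2 / (1 + (bseq α n / rr α j) ^ 2) ≤ L := by
  have h1 := (h.sum_lim psi2_test).norm
  obtain ⟨L, hL⟩ := h1.isBoundedUnder_le
  rw [eventually_map] at hL
  refine ⟨max L 0, le_max_right _ _, hL.mono fun n hn => ?_⟩
  · refine le_trans ?_ (le_max_left _ _)
    refine le_trans ?_ hn
    rw [← ofReal_tsum, norm_mul, norm_real]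
    simp only [norm_div, norm_one, norm_natCast]
    gcongr
    exact le_abs_self _

theorem SD.psi2_summable (h : SD α M a θ) (b : ℝ) :
    Summable fun j => (b / rr α j) ^ 2 / (1 + (b / rr α j) ^ 2) := by
  have := (h.sum_summable psi2_test (b := b)).mapL reCLM
  simpa only [reCLM_apply, ofReal_re] using this

/-- The displacement of the characteristics, with the centring, converges to the `R`-transform. -/
theorem SD.Z_lim (h : SD α M a θ) {u : ℂ} (hu0 : u.im < 0) :
    Tendsto (fun n : ℕ => (1 / (n:ℂ)) * (((∑' j, (kap (bseq α n * α j)).re : ℝ) : ℂ) +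
        ∑' j, (hu u (bseq α n * (α j).re) - ((bseq α n * (α j).re : ℝ) : ℂ)))) atTop
      (𝓝 (Rtrans 0 (stableLevy a θ) u)) := by
  have hp : 0 < -u.im := by linarith
  obtain ⟨K, hK⟩ := psiU_test hu0
  refine tendsto_of_tendsto_of_dist (h.Rlim hu0) ?_
  obtain ⟨L, hL0, hL⟩ := h.psi2_bdd
  set c := (1 + ‖u‖ / (-u.im) + 1 / (-u.im)) ^ 2 + 4 with hc
  have hc0 : 0 ≤ c := by positivity
  have hT := (h.fin (max M 1)).toFinset
  have hlim : Tendsto (fun n : ℕ => c * (M / bseq α n) * L +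
      (1 / (n:ℝ)) * ((h.fin (max M 1)).toFinset.card * (2 / (-u.im) + 3))) atTop (𝓝 0) := by
    have h1 : Tendsto (fun n : ℕ => M / bseq α n) atTop (𝓝 0) := h.b_tendsto.const_div_atTop M
    have h2 : Tendsto (fun n : ℕ => (1 / (n:ℝ))) atTop (𝓝 0) := tendsto_one_div_atTop_nhds_zero_nat
    have := ((h1.const_mul c).mul_const L).add (h2.mul_const ((h.fin (max M 1)).toFinset.card * (2 / (-u.im) + 3)))
    simpa using this
  refine squeeze_zero' (Eventually.of_forall fun _ => dist_nonneg) ?_ hlim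
  filter_upwards [hL, h.b_tendsto.eventually_gt_atTop 0, h.b_tendsto.eventually_ge_atTop (2 * M),
    eventually_gt_atTop 0] with n hLn hb hbM hn
  set b := bseq α n
  rw [dist_comm, dist_eq_norm, ← mul_sub, ofReal_tsum]
  have s1 : Summable fun j => ((kap (b * α j)).re : ℂ) := by exact_mod_cast h.kapre_summable b
  have s2 := h.k_summable hu0 b
  have s3 := h.sum_summable hK (b := b)
  have s4 := h.psi2_summable b
  rw [← s1.tsum_add s2, ← (s1.add s2).tsum_sub s3, norm_mul]
  have s5 : Summable fun j => (if j ∈ (h.fin (max M 1)).toFinset then 2 / (-u.im) + 3 else 0) :=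
    summable_of_hasFiniteSupport ((h.fin (max M 1)).toFinset.finite_toSet.subset fun j hj => by
      by_contra hc; apply hj; exact if_neg hc)
  have e5 : ∑' j, (if j ∈ (h.fin (max M 1)).toFinset then 2 / (-u.im) + 3 else 0) =
      (h.fin (max M 1)).toFinset.card * (2 / (-u.im) + 3) := by
    rw [tsum_eq_sum (s := (h.fin (max M 1)).toFinset) (fun j hj => if_neg hj), Finset.sum_ite_mem,
      Finset.inter_self, Finset.sum_const, nsmul_eq_mul]
  have hle := tsum_of_norm_bounded ((s4.mul_left (c * (M / b))).add s5).hasSum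
    (fun j => h.term_bound hu0 hb hbM j)
  rw [(s4.mul_left (c * (M / b))).tsum_add s5, e5, tsum_mul_left] at hle
  have hn1 : ‖(1 / (n:ℂ))‖ = 1 / (n:ℝ) := by simp
  rw [hn1]
  have hM := h.hM
  calc _ ≤ (1 / (n:ℝ)) * (c * (M / b) * ∑' j, (b / rr α j) ^ 2 / (1 + (b / rr α j) ^ 2) +
        (h.fin (max M 1)).toFinset.card * (2 / (-u.im) + 3)) := by gcongr
    _ = c * (M / b) * ((1 / (n:ℝ)) * ∑' j, (b / rr α j) ^ 2 / (1 + (b / rr α j) ^ 2)) +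
        (1 / (n:ℝ)) * ((h.fin (max M 1)).toFinset.card * (2 / (-u.im) + 3)) := by ring
    _ ≤ _ := by gcongr

/-- The truncated polynomial in which every `α_j` is replaced by its real part. -/
noncomputable def Pre (α : ℕ → ℂ) (En : ℕ → ℝ) (n : ℕ) (F : Finset ℕ) : ℂ[X] :=
  Pw n (eF α En n F : ℝ) (fun j => ((bseq α n * (α j).re : ℝ) : ℂ)) F

/-- If `R(u) + 1/u + E = z`, the normalised logarithmic derivatives at `z` converge to `u`: the
characteristic carrying the value `u` ends near `z`. -/
theorem SD.nq_lim (h : SD α M a θ) {En : ℕ → ℝ} {E : ℝ} (hEn : Tendsto En atTop (𝓝 E))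
    {F : ℕ → Finset ℕ} (hF : Tendsto F atTop atTop) {u z : ℂ} (hu0 : u.im < 0) (hz : 0 < z.im)
    (huz : Rtrans 0 (stableLevy a θ) u + 1 / u = z - E) {ε : ℝ} (hε : 0 < ε) :
    ∀ᶠ n : ℕ in atTop, ∀ᶠ N in atTop, ‖nq n (Pre α En n (F N)) z - u‖ ≤ ε := by
  have hp : 0 < -u.im := by linarith
  set δ := z.im / 2 with hδ
  have hδ0 : 0 < δ := by positivity
  obtain ⟨L, hL0, hL⟩ := h.psi2_bdd
  set c := (1 + ‖u‖ / (-u.im) + 1 / (-u.im)) ^ 2 with hc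
  have hc0 : 0 ≤ c := by positivity
  set H := c * L with hH
  set K := 2 / δ ^ 2 + 1 / δ ^ 3 + 2 / (-u.im * δ ^ 4) with hK
  have hK0 : 0 ≤ K := by positivity
  set Z : ℕ → ℂ := fun n => 1 / u + En n + (1 / (n:ℂ)) * (((∑' j, (kap (bseq α n * α j)).re : ℝ) : ℂ) +
        ∑' j, (hu u (bseq α n * (α j).re) - ((bseq α n * (α j).re : ℝ) : ℂ))) with hZ
  have hZl : Tendsto Z atTop (𝓝 z) := by
    have h1 : Tendsto (fun n => (En n : ℂ)) atTop (𝓝 (E:ℂ)) :=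
      (continuous_ofReal.tendsto E).comp hEn
    have h2 := (h1.const_add (1 / u)).add (h.Z_lim hu0)
    have e : 1 / u + E + Rtrans 0 (stableLevy a θ) u = z := by linear_combination huz
    rw [e] at h2
    exact h2
  have hnlim : Tendsto (fun n : ℕ => (1 / (n:ℝ))) atTop (𝓝 0) := tendsto_one_div_atTop_nhds_zero_nat
  have hs1 : ∀ᶠ n : ℕ in atTop, Real.exp (K * H) / n + 1 / (n * -u.im * δ ^ 2) ≤ -u.im / 2 := by
    have h1 : Tendsto (fun n : ℕ => Real.exp (K * H) * (1 / (n:ℝ)) + (1 / (-u.im * δ ^ 2)) * (1 / (n:ℝ))) atTop (𝓝 0) := by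
      have := (hnlim.const_mul (Real.exp (K * H))).add (hnlim.const_mul (1 / (-u.im * δ ^ 2)))
      rwa [mul_zero, mul_zero, add_zero] at this
    filter_upwards [h1.eventually_le_const (show 0 < -u.im / 2 by positivity)] with n hn
    refine le_trans (le_of_eq ?_) hn
    rw [mul_one_div, mul_one_div, div_div, mul_assoc, mul_comm (n:ℝ)]
  have hs2 : ∀ᶠ n : ℕ in atTop, Real.exp (K * H) / n ≤ ε / 2 := by
    have h1 : Tendsto (fun n : ℕ => Real.exp (K * H) * (1 / (n:ℝ))) atTop (𝓝 0) := by
      simpa using (hnlim.const_mul (Real.exp (K * H)))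
    filter_upwards [h1.eventually_le_const (show 0 < ε / 2 by positivity)] with n hn
    refine le_trans (le_of_eq ?_) hn
    rw [mul_one_div]
  set κ := min (δ / 2) (δ ^ 2 * ε / 4) with hκ
  have hκ0 : 0 < κ := by positivity
  filter_upwards [hL, h.b_tendsto.eventually_gt_atTop 0, eventually_gt_atTop 0, hs1, hs2,
    Metric.tendsto_nhds.1 hZl κ hκ0] with n hLn hb hn hsn1 hsn2 hZn
  set b := bseq α n
  have hn' : (0:ℝ) < n := by exact_mod_cast hn
  -- convergence of the finite characteristics
  have hN : Tendsto (fun N => Zend n u (eF α En n (F N)) (fun j => b * (α j).re) (F N)) atTop (𝓝 (Z n)) := by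
    have h1 := ((h.k_summable hu0 b).hasSum.comp hF)
    have h2 := ((h1.const_add ((∑' j, (kap (b * α j)).re : ℝ) : ℂ)).const_mul (1 / (n:ℂ))).const_add (1 / u + En n)
    refine h2.congr fun N => ?_
    simp only [Zend, eF, Function.comp, Finset.sum_sub_distrib]
    push_cast
    ring
  filter_upwards [Metric.tendsto_nhds.1 hN κ hκ0] with N hN
  set w := Zend n u (eF α En n (F N)) (fun j => b * (α j).re) (F N) with hw
  have hwz : ‖z - w‖ ≤ 2 * κ := by
    have := dist_triangle w (Z n) z
    rw [← dist_eq_norm, dist_comm]; linarith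
  have hwim : δ ≤ w.im := by
    have h1 := (abs_im_le_norm (z - w)).trans hwz
    rw [sub_im] at h1
    have h2 := (abs_le.1 h1).2
    have h3 := min_le_left (δ / 2) (δ ^ 2 * ε / 4)
    have h4 : z.im = 2 * δ := by rw [hδ]; ring
    linarith
  have hHN : (1 / (n:ℝ)) * ∑ j ∈ F N, ‖hu u (b * (α j).re)‖ ^ 2 ≤ H := by
    calc _ ≤ (1 / (n:ℝ)) * ∑ j ∈ F N, c * ((b / rr α j) ^ 2 / (1 + (b / rr α j) ^ 2)) := by
          refine mul_le_mul_of_nonneg_left (Finset.sum_le_sum fun j _ => hu_sq_le hu0 hb j) (by positivity)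
      _ = c * ((1 / (n:ℝ)) * ∑ j ∈ F N, ((b / rr α j) ^ 2 / (1 + (b / rr α j) ^ 2))) := by
          rw [← Finset.mul_sum]; ring
      _ ≤ c * ((1 / (n:ℝ)) * ∑' j, ((b / rr α j) ^ 2 / (1 + (b / rr α j) ^ 2))) := by
          gcongr
          exact (h.psi2_summable b).sum_le_tsum _ fun j _ => by positivity
      _ ≤ H := mul_le_mul_of_nonneg_left hLn hc0
  have hmain := char_main (n := n) hn.ne' hu0 (eF α En n (F N)) (fun j => b * (α j).re) hδ0 hK hsn1 (F N) hwim hHN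
  have hq1 : ‖nq n (Pre α En n (F N)) w - u‖ ≤ ε / 2 := by
    have h1 : Real.exp (K * ((1 / n) * ∑ j ∈ F N, ‖hu u (b * (α j).re)‖ ^ 2)) / n ≤ Real.exp (K * H) / n := by
      gcongr
    have h2 : 0 ≤ 1 / (n:ℝ) := by positivity
    have h3 : ‖nq n (Pre α En n (F N)) w - u‖ + 1 / n ≤ _ := hmain
    linarith
  have hLH : LH (Pre α En n (F N)) := LH_Pw hn.ne' _ _ _
  have hdeg : (Pre α En n (F N)).natDegree ≤ n := (Pw_deg _ _ _ _)
  have hzim : δ ≤ z.im := by rw [hδ]; linarith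
  have hq2 := hLH.nq_lip hn.ne' hdeg hδ0 hwim hzim
  have h5 : ‖z - w‖ / δ ^ 2 ≤ ε / 2 := by
    rw [div_le_iff₀ (by positivity)]
    have h3 := min_le_right (δ / 2) (δ ^ 2 * ε / 4)
    linarith
  calc _ = ‖(nq n (Pre α En n (F N)) z - nq n (Pre α En n (F N)) w) + (nq n (Pre α En n (F N)) w - u)‖ := by
        congr 1; ring
    _ ≤ _ := (norm_add_le _ _).trans (by linarith)

end

/-! ### Uniform convergence of logarithmic derivatives -/

/-- The iterated limit over `(n, N)`: a property holds eventually when, for all large degrees `n`,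
it holds for all large truncations `N`, how large being allowed to depend on `n`. -/
noncomputable def lNN : Filter (ℕ × ℕ) := atTop.curry atTop

theorem ev_lNN {P : ℕ × ℕ → Prop} : (∀ᶠ i in lNN, P i) ↔ ∀ᶠ n in atTop, ∀ᶠ N in atTop, P (n, N) :=
  eventually_curry_iff

theorem ev_fst {P : ℕ → Prop} (h : ∀ᶠ n in atTop, P n) : ∀ᶠ i in lNN, P i.1 :=
  ev_lNN.2 (h.mono fun _ hn => Eventually.of_forall fun _ => hn)

instance : NeBot lNN := by
  constructor
  intro h
  have h1 : ∀ᶠ i in lNN, False := by rw [h]; exact eventually_bot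
  have h2 := ev_lNN.1 h1
  obtain ⟨n, hn⟩ := h2.exists
  obtain ⟨N, hN⟩ := hn.exists
  exact hN

/-- Uniform convergence on `K`, along `lNN`, of the normalised logarithmic derivatives of `p` to
`G`, including that `p` has no roots in `K` eventually. -/
def QQ (p : ℕ × ℕ → ℂ[X]) (G : ℂ → ℂ) (K : Set ℂ) : Prop :=
  ∀ ε : ℝ, 0 < ε → ∀ᶠ i in lNN, ∀ z ∈ K, (p i).eval z ≠ 0 ∧ ‖nq i.1 (p i) z - G z‖ ≤ ε

theorem QQ.mono {p : ℕ × ℕ → ℂ[X]} {G : ℂ → ℂ} {K K' : Set ℂ} (h : QQ p G K) (hK : K' ⊆ K) : QQ p G K' :=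
  fun ε hε => (h ε hε).mono fun _ hi z hz => hi z (hK hz)

theorem QQ.congr {p p' : ℕ × ℕ → ℂ[X]} {G : ℂ → ℂ} {K : Set ℂ} (h : QQ p G K)
    (hp : ∀ᶠ i in lNN, p i = p' i) : QQ p' G K :=
  fun ε hε => ((h ε hε).and hp).mono fun i hi z hz => by rw [← hi.2]; exact hi.1 z hz

/-- Adding a factor `1 - (x_n/n) D` with `|x_n| → ∞` does not change the limit: it multiplies the
polynomial by `1 - x_n q`, whose modulus is of order `|x_n|`, so that its logarithmic derivative is
bounded. Here `x_n` may be complex. -/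
theorem QQ.step {p : ℕ × ℕ → ℂ[X]} {G : ℂ → ℂ} {z0 : ℂ} {r g B : ℝ} (hg : 0 < g)
    (hG : ∀ z ∈ Metric.closedBall z0 r, g ≤ ‖G z‖ ∧ ‖G z‖ ≤ B)
    (h : ∀ r' < r, QQ p G (Metric.closedBall z0 r')) {x : ℕ → ℂ}
    (hx : Tendsto (fun n => ‖x n‖) atTop atTop) :
    ∀ r' < r, QQ (fun i => TT (x i.1 / i.1) (p i)) G (Metric.closedBall z0 r') := by
  intro r' hr' ε hε
  set r2 := (r' + r) / 2 with hr2
  set ρ := (r - r') / 2 with hρ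
  have hρ0 : 0 < ρ := by rw [hρ]; linarith
  have hB : ∀ᶠ n : ℕ in atTop, (4 * (B + 1) / (ρ * g)) * (1 / (n:ℝ)) ≤ ε / 2 := by
    have := (tendsto_one_div_atTop_nhds_zero_nat (𝕜 := ℝ)).const_mul (4 * (B + 1) / (ρ * g))
    rw [mul_zero] at this
    exact this.eventually_le_const (by positivity)
  filter_upwards [h r2 (by rw [hr2]; linarith) (min (min (g / 2) (ε / 2)) 1) (by positivity),
    ev_fst (hx.eventually_ge_atTop (4 / g)), ev_fst (eventually_gt_atTop 0), ev_fst hB] with i hi hxi hn hBi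
  obtain ⟨n, N⟩ := i
  simp only at hi hxi hn hBi ⊢
  intro z hz
  have hsub : Metric.closedBall z ρ ⊆ Metric.closedBall z0 r2 :=
    Metric.closedBall_subset_closedBall' (by rw [Metric.mem_closedBall] at hz; rw [hr2, hρ]; linarith)
  have hr2r : Metric.closedBall z0 r2 ⊆ Metric.closedBall z0 r :=
    Metric.closedBall_subset_closedBall (by rw [hr2]; linarith)
  set P := p (n, N)
  set X0 := x n
  have hn' : (n:ℂ) ≠ 0 := by exact_mod_cast hn.ne'
  have hnr : (0:ℝ) < n := by exact_mod_cast hn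
  -- the logarithmic derivative as a holomorphic function
  set q : ℂ → ℂ := fun w => nq n P w with hq
  have hd : ∀ w ∈ Metric.closedBall z ρ, DifferentiableAt ℂ q w := by
    intro w hw
    have := (hi w (hsub hw)).1
    rw [hq]
    unfold nq
    exact DifferentiableAt.div (Polynomial.differentiable _ _) ((Polynomial.differentiable _ _).const_mul _) (mul_ne_zero hn' this)
  have hqB : ∀ w ∈ Metric.closedBall z ρ, ‖q w‖ ≤ B + 1 := by
    intro w hw
    have h1 := (hi w (hsub hw)).2.trans (min_le_right _ _)
    have h2 := (hG w (hr2r (hsub hw))).2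
    have h3 := norm_add_le (q w - G w) (G w)
    rw [sub_add_cancel] at h3
    linarith
  -- Cauchy's estimate on the disc of radius `ρ`
  have hder : ‖deriv q z‖ ≤ (B + 1) / ρ := by
    refine norm_deriv_le_of_forall_mem_sphere_norm_le hρ0 ?_ fun w hw => hqB w (Metric.sphere_subset_closedBall hw)
    refine DifferentiableOn.diffContOnCl ?_
    rw [closure_ball z hρ0.ne']
    exact fun w hw => (hd w hw).differentiableWithinAt
  have hzz : z ∈ Metric.closedBall z ρ := Metric.mem_closedBall_self hρ0.le
  have hP := (hi z (hsub hzz)).1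
  have hqG := (hi z (hsub hzz)).2
  have hqg : g / 2 ≤ ‖q z‖ := by
    have h1 := hqG.trans ((min_le_left _ _).trans (min_le_left _ _))
    have h2 := (hG z (hr2r (hsub hzz))).1
    have h3 := norm_sub_le (q z) (q z - G z)
    rw [sub_sub_cancel] at h3
    linarith
  have hx2 : 2 ≤ ‖X0‖ * ‖q z‖ := by
    calc (2:ℝ) = 4 / g * (g / 2) := by field_simp; norm_num
      _ ≤ _ := by gcongr
  have h1x : ‖X0‖ * ‖q z‖ / 2 ≤ ‖1 - X0 * q z‖ := by
    have := norm_sub_norm_le (X0 * q z) 1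
    rw [norm_mul, norm_one, norm_sub_rev] at this
    linarith
  have h1x0 : 1 - X0 * q z ≠ 0 := by
    intro h0; rw [h0, norm_zero] at h1x; linarith
  have hPd : (derivative P).eval z = n * q z * P.eval z := by
    rw [hq]; simp only [nq]; field_simp
  have hev : (TT (X0 / n) P).eval z = (1 - X0 * q z) * P.eval z := by
    simp only [TT, eval_sub, eval_mul, eval_C, hPd]; field_simp
  have hq' : deriv q z = ((derivative (derivative P)).eval z * P.eval z - (derivative P).eval z ^ 2) /
      (n * P.eval z ^ 2) := by
    have h1 := (Polynomial.hasDerivAt (derivative P) z).div ((Polynomial.hasDerivAt P z).const_mul (n:ℂ)) (mul_ne_zero hn' hP)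
    refine (h1.deriv).trans ?_
    field_simp
  have hP2 : (derivative (derivative P)).eval z = (n * deriv q z + n ^ 2 * q z ^ 2) * P.eval z := by
    rw [hq', hPd]; field_simp; ring
  refine ⟨by rw [hev]; exact mul_ne_zero h1x0 hP, ?_⟩
  have hnew : nq n (TT (X0 / n) P) z = q z - X0 * deriv q z / (1 - X0 * q z) * (1 / n) := by
    rw [nq, hev, TT_der]
    simp only [TT, eval_sub, eval_mul, eval_C, hP2, hPd]
    generalize deriv q z = d at *
    generalize q z = Q at *
    rw [div_mul_div_comm, eq_sub_iff_add_eq, div_add_div _ _ (mul_ne_zero hn' (mul_ne_zero h1x0 hP))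
      (mul_ne_zero h1x0 hn'), div_eq_iff (mul_ne_zero (mul_ne_zero hn' (mul_ne_zero h1x0 hP)) (mul_ne_zero h1x0 hn'))]
    field_simp
    ring
  rw [hnew]
  have h5 : ‖X0 * deriv q z / (1 - X0 * q z)‖ ≤ 4 * (B + 1) / (ρ * g) := by
    rw [norm_div, norm_mul, div_le_iff₀ (norm_pos_iff.2 h1x0)]
    have hB0 : 0 ≤ B + 1 := (norm_nonneg _).trans (hqB z hzz)
    calc ‖X0‖ * ‖deriv q z‖ ≤ ‖X0‖ * ((B + 1) / ρ) := by gcongr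
      _ = 4 * (B + 1) / (ρ * g) * (‖X0‖ * (g / 2) / 2) := by field_simp; norm_num
      _ ≤ 4 * (B + 1) / (ρ * g) * (‖X0‖ * ‖q z‖ / 2) := by gcongr
      _ ≤ _ := by gcongr
  have h6 : ‖X0 * deriv q z / (1 - X0 * q z) * (1 / n)‖ ≤ ε / 2 := by
    refine le_trans ?_ hBi
    rw [norm_mul]
    have : ‖(1 / (n:ℂ))‖ = 1 / (n:ℝ) := by simp
    rw [this]
    gcongr
  have h7 := hqG.trans ((min_le_left _ _).trans (min_le_right _ _))
  calc _ = ‖(q z - G z) - X0 * deriv q z / (1 - X0 * q z) * (1 / n)‖ := by congr 1; ring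
    _ ≤ _ := (norm_sub_le _ _).trans (by linarith)

/-- A relative perturbation of size at most `1/2` does not change the limit: the quotient of the
polynomials stays within `1/2` of `1`, so its logarithmic derivative is bounded by Cauchy's estimate
and vanishes after division by `n`. -/
theorem QQ.pert {p p' : ℕ × ℕ → ℂ[X]} {G : ℂ → ℂ} {z0 : ℂ} {r : ℝ}
    (h : QQ p G (Metric.closedBall z0 r))
    (hp : ∀ᶠ i in lNN, ∀ z ∈ Metric.closedBall z0 r,
      ‖(p' i).eval z - (p i).eval z‖ ≤ 1 / 2 * ‖(p i).eval z‖) :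
    ∀ r' < r, QQ p' G (Metric.closedBall z0 r') := by
  intro r' hr' ε hε
  set ρ := r - r' with hρ
  have hρ0 : 0 < ρ := by rw [hρ]; linarith
  have hB : ∀ᶠ n : ℕ in atTop, (3 / ρ) * (1 / (n:ℝ)) ≤ ε / 2 := by
    have := (tendsto_one_div_atTop_nhds_zero_nat (𝕜 := ℝ)).const_mul (3 / ρ)
    rw [mul_zero] at this
    exact this.eventually_le_const (by positivity)
  filter_upwards [h (ε / 2) (by positivity), hp, ev_fst (eventually_gt_atTop 0), ev_fst hB] with i hi hpi hn hBi
  obtain ⟨n, N⟩ := i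
  simp only at hi hpi hn hBi ⊢
  intro z hz
  have hsub : Metric.closedBall z ρ ⊆ Metric.closedBall z0 r :=
    Metric.closedBall_subset_closedBall' (by rw [Metric.mem_closedBall] at hz; rw [hρ]; linarith)
  set P := p (n, N)
  set P' := p' (n, N)
  have hn' : (n:ℂ) ≠ 0 := by exact_mod_cast hn.ne'
  have hnr : (0:ℝ) < n := by exact_mod_cast hn
  set φ : ℂ → ℂ := fun w => P'.eval w / P.eval w with hφ
  have hφ1 : ∀ w ∈ Metric.closedBall z ρ, ‖φ w - 1‖ ≤ 1 / 2 := by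
    intro w hw
    have h1 := (hi w (hsub hw)).1
    have h2 := hpi w (hsub hw)
    have h3 : φ w - 1 = (P'.eval w - P.eval w) / P.eval w := by rw [hφ]; field_simp
    rw [h3, norm_div, div_le_iff₀ (norm_pos_iff.2 h1)]; exact h2
  have hφB : ∀ w ∈ Metric.closedBall z ρ, ‖φ w‖ ≤ 3 / 2 := by
    intro w hw
    have := hφ1 w hw
    have h3 := norm_add_le (φ w - 1) 1
    rw [sub_add_cancel, norm_one] at h3
    linarith
  -- Cauchy's estimate on the disc of radius `ρ`
  have hder : ‖deriv φ z‖ ≤ (3 / 2) / ρ := by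
    refine norm_deriv_le_of_forall_mem_sphere_norm_le hρ0 ?_ fun w hw => hφB w (Metric.sphere_subset_closedBall hw)
    refine DifferentiableOn.diffContOnCl ?_
    rw [closure_ball z hρ0.ne']
    intro w hw
    exact DifferentiableAt.differentiableWithinAt
      (DifferentiableAt.div P'.differentiable.differentiableAt P.differentiable.differentiableAt (hi w (hsub hw)).1)
  have hzz : z ∈ Metric.closedBall z ρ := Metric.mem_closedBall_self hρ0.le
  have hP := (hi z (hsub hzz)).1
  have hφl : 1 / 2 ≤ ‖φ z‖ := by
    have h3 := norm_sub_le (φ z) (φ z - 1)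
    have := hφ1 z hzz
    rw [sub_sub_cancel, norm_one] at h3
    linarith
  have hφ0 : φ z ≠ 0 := by intro h0; rw [h0, norm_zero] at hφl; linarith
  have hP' : P'.eval z ≠ 0 := fun h0 => hφ0 (by simp [hφ, h0])
  refine ⟨hP', ?_⟩
  have hφ' : deriv φ z = ((derivative P').eval z * P.eval z - P'.eval z * (derivative P).eval z) / P.eval z ^ 2 :=
    ((Polynomial.hasDerivAt P' z).div (Polynomial.hasDerivAt P z) hP).deriv
  have hnew : nq n P' z = nq n P z + deriv φ z / φ z * (1 / n) := by
    rw [hφ']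
    simp only [hφ, nq]
    field_simp
    ring
  rw [hnew]
  have h6 : ‖deriv φ z / φ z * (1 / n)‖ ≤ ε / 2 := by
    refine le_trans ?_ hBi
    rw [norm_mul, norm_div]
    have : ‖(1 / (n:ℂ))‖ = 1 / (n:ℝ) := by simp
    rw [this]
    calc _ ≤ ((3 / 2) / ρ) / (1 / 2) * (1 / (n:ℝ)) := by gcongr
      _ = _ := by ring
  have h7 := (hi z (hsub hzz)).2
  calc _ = ‖(nq n P z - G z) + deriv φ z / φ z * (1 / n)‖ := by congr 1; ring
    _ ≤ _ := (norm_add_le _ _).trans (by linarith)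

/-- Uniform convergence near each point of a compact set gives uniform convergence on it. -/
theorem QQ.compact {p : ℕ × ℕ → ℂ[X]} {G : ℂ → ℂ} {K : Set ℂ} (hK : IsCompact K)
    (h : ∀ z0 ∈ K, ∃ r > 0, QQ p G (Metric.closedBall z0 r)) : QQ p G K := by
  refine hK.induction_on (p := fun S => QQ p G S) ?_ ?_ ?_ ?_
  · intro ε _; exact Eventually.of_forall fun i z hz => absurd hz (Set.notMem_empty z)
  · intro s t hst ht; exact ht.mono hst
  · intro s t hs ht ε hε
    filter_upwards [hs ε hε, ht ε hε] with i h1 h2 z hz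
    exact hz.elim (h1 z) (h2 z)
  · intro z hz
    obtain ⟨r, hr, hQ⟩ := h z hz
    exact ⟨_, mem_nhdsWithin_of_mem_nhds (Metric.closedBall_mem_nhds z hr), hQ⟩

section
variable {α : ℕ → ℂ} {M a θ : ℝ}

/-- A pointwise limit of the logarithmic derivatives inherits their Lipschitz bound `1/δ²` on
`{Im z ≥ δ}`. -/
theorem lip_of_lim {p : ℕ × ℕ → ℂ[X]} {G : ℂ → ℂ}
    (hLH : ∀ i : ℕ × ℕ, i.1 ≠ 0 → LH (p i) ∧ (p i).natDegree ≤ i.1)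
    (hlim : ∀ z : ℂ, 0 < z.im → ∀ ε : ℝ, 0 < ε → ∀ᶠ i in lNN, ‖nq i.1 (p i) z - G z‖ ≤ ε)
    {δ : ℝ} (hδ : 0 < δ) {z w : ℂ} (hz : δ ≤ z.im) (hw : δ ≤ w.im) :
    ‖G w - G z‖ ≤ ‖w - z‖ / δ ^ 2 := by
  refine le_of_forall_pos_le_add fun ε hε => ?_
  obtain ⟨i, h1, h2, h3⟩ := ((hlim z (hδ.trans_le hz) (ε / 2) (by positivity)).and
    ((hlim w (hδ.trans_le hw) (ε / 2) (by positivity)).and (ev_fst (eventually_ne_atTop 0)))).exists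
  have h4 := (hLH i h3).1.nq_lip h3 (hLH i h3).2 hδ hz hw
  calc ‖G w - G z‖ = ‖(nq i.1 (p i) w - nq i.1 (p i) z) + (nq i.1 (p i) z - G z) - (nq i.1 (p i) w - G w)‖ := by
        congr 1; ring
    _ ≤ _ := by
        refine (norm_sub_le _ _).trans ?_
        have := norm_add_le (nq i.1 (p i) w - nq i.1 (p i) z) (nq i.1 (p i) z - G z)
        linarith

/-- Pointwise convergence is uniform on compact sets, by equicontinuity. -/
theorem QQ_of_lim {p : ℕ × ℕ → ℂ[X]} {G : ℂ → ℂ}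
    (hLH : ∀ i : ℕ × ℕ, i.1 ≠ 0 → LH (p i) ∧ (p i).natDegree ≤ i.1)
    (hlim : ∀ z : ℂ, 0 < z.im → ∀ ε : ℝ, 0 < ε → ∀ᶠ i in lNN, ‖nq i.1 (p i) z - G z‖ ≤ ε)
    {K : Set ℂ} (hK : IsCompact K) {δ : ℝ} (hδ : 0 < δ) (hKδ : ∀ z ∈ K, δ ≤ z.im) : QQ p G K := by
  intro ε hε
  obtain ⟨t, htK, htf, hcov⟩ := hK.finite_cover_balls (e := ε / 3 * δ ^ 2) (by positivity)
  have h1 : ∀ᶠ i in lNN, ∀ z ∈ t, ‖nq i.1 (p i) z - G z‖ ≤ ε / 3 :=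
    (eventually_all_finite htf).2 fun z hz => hlim z (hδ.trans_le (hKδ z (htK hz))) _ (by positivity)
  filter_upwards [h1, ev_fst (eventually_ne_atTop 0)] with i hi hn z hz
  obtain ⟨hl, hd⟩ := hLH i hn
  refine ⟨hl z (hδ.trans_le (hKδ z hz)), ?_⟩
  obtain ⟨w, hw, hzw⟩ := Set.mem_iUnion₂.1 (hcov hz)
  have hzw : ‖z - w‖ ≤ ε / 3 * δ ^ 2 := (mem_ball_iff_norm.1 hzw).le
  have h2 : ‖z - w‖ / δ ^ 2 ≤ ε / 3 := by rw [div_le_iff₀ (by positivity)]; exact hzw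
  have h3 := (hl.nq_lip hn hd hδ (hKδ w (htK hw)) (hKδ z hz)).trans h2
  have h4 := (lip_of_lim hLH hlim hδ (hKδ w (htK hw)) (hKδ z hz)).trans h2
  have h5 := hi w hw
  calc _ = ‖(nq i.1 (p i) z - nq i.1 (p i) w) + (nq i.1 (p i) w - G w) - (G z - G w)‖ := by
        congr 1; ring
    _ ≤ _ := by
        refine (norm_sub_le _ _).trans ?_
        have := norm_add_le (nq i.1 (p i) z - nq i.1 (p i) w) (nq i.1 (p i) w - G w)
        linarith
end

/-! ### Replacing conjugate pairs by real parts -/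

/-- The zero polynomial, or a polynomial of degree at most `n` without zeros in the upper
half-plane: a class stable under differentiation and under `1 - x D` for real `x`. -/
def Ad (n : ℕ) (p : ℂ[X]) : Prop := p = 0 ∨ (LH p ∧ p.natDegree ≤ n)

theorem Ad.der {n : ℕ} (hn : n ≠ 0) {p : ℂ[X]} (h : Ad n p) : Ad n (derivative p) := by
  rcases h with rfl | ⟨h, hd⟩
  · left; simp
  · rcases h.der hn with h0 | h1
    · exact Or.inl h0
    · exact Or.inr ⟨h1, (natDegree_derivative_le _).trans ((Nat.sub_le _ _).trans hd)⟩

theorem Ad.tt {n : ℕ} (hn : n ≠ 0) {p : ℂ[X]} (h : Ad n p) (x : ℝ) : Ad n (TT (x / n) p) := by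
  rcases h with rfl | ⟨h, hd⟩
  · left; exact TT_zero _
  · exact Or.inr ⟨h.tt hn hd x, TT_natDegree hd _⟩

/-- The product of the operators `(1 - x D/n)(1 - x̄ D/n)`. -/
noncomputable def BB (n : ℕ) (x : ℕ → ℂ) (S : Finset ℕ) (q : ℂ[X]) : ℂ[X] :=
  act (∏ k ∈ S, (sy (x k / n) * sy ((starRingEnd ℂ) (x k) / n))) q

/-- The product of the operators `(1 - (Re x) D/n)²`. -/
noncomputable def TR (n : ℕ) (x : ℕ → ℂ) (S : Finset ℕ) (q : ℂ[X]) : ℂ[X] :=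
  act (∏ k ∈ S, (sy (((x k).re : ℂ) / n) * sy (((x k).re : ℂ) / n))) q

theorem TR_insert (n : ℕ) (x : ℕ → ℂ) {S : Finset ℕ} {k : ℕ} (hk : k ∉ S) (q : ℂ[X]) :
    TR n x (insert k S) q = TT ((x k).re / n) (TT ((x k).re / n) (TR n x S q)) := by
  rw [TR, Finset.prod_insert hk, act_mul, act_mul, act_sy, act_sy]; rfl

theorem TR_TT (n : ℕ) (x : ℕ → ℂ) (S : Finset ℕ) (c : ℂ) (q : ℂ[X]) :
    TR n x S (TT c q) = TT c (TR n x S q) := by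
  rw [← act_sy, ← act_sy, TR, TR, ← act_mul, mul_comm, act_mul]

theorem TR_der (n : ℕ) (x : ℕ → ℂ) (S : Finset ℕ) (q : ℂ[X]) :
    TR n x S (derivative q) = derivative (TR n x S q) := (act_der _ _).symm

theorem TR_ad {n : ℕ} (hn : n ≠ 0) (x : ℕ → ℂ) (S : Finset ℕ) {q : ℂ[X]} (h : Ad n q) : Ad n (TR n x S q) := by
  induction S using Finset.induction_on with
  | empty => simpa [TR, act_one] using h
  | insert k S hk ih => rw [TR_insert n x hk]; exact (ih.tt hn _).tt hn _

/-- Completing the square in the symbol of a conjugate pair: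
`(1 - xD/n)(1 - x̄D/n) = (1 - (Re x)D/n)² + (Im x/n)² D²`. -/
theorem sy_conj {n : ℕ} (x : ℂ) : sy (x / n) * sy ((starRingEnd ℂ) x / n) =
    sy ((x.re : ℂ) / n) * sy ((x.re : ℂ) / n) + C (((x.im / n : ℝ) : ℂ) ^ 2) * X ^ 2 := by
  have h1 : x = x.re + x.im * I := (re_add_im x).symm
  have h2 : (starRingEnd ℂ) x = x.re - x.im * I := by
    apply Complex.ext <;> simp
  have e1 : C (x / n) + C ((starRingEnd ℂ) x / n) = C ((x.re : ℂ) / n) + C ((x.re : ℂ) / n) := by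
    rw [← C_add, ← C_add, h2]; congr 1; nth_rewrite 1 [h1]; ring
  have e2 : C (x / n) * C ((starRingEnd ℂ) x / n) = C ((x.re : ℂ) / n) * C ((x.re : ℂ) / n) + C (((x.im / n : ℝ) : ℂ) ^ 2) := by
    rw [← C_mul, ← C_mul, ← C_add, h2]; congr 1; nth_rewrite 1 [h1]; push_cast
    linear_combination (-(x.im:ℂ)^2 / n^2) * I_sq
  simp only [sy]
  linear_combination (-X) * e1 + X ^ 2 * e2

theorem BB_insert (n : ℕ) (x : ℕ → ℂ) {S : Finset ℕ} {k : ℕ} (hk : k ∉ S) (q : ℂ[X]) :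
    BB n x (insert k S) q = BB n x S (TT ((x k).re / n) (TT ((x k).re / n) q)) +
      C ((((x k).im / n : ℝ) : ℂ) ^ 2) * BB n x S (derivative (derivative q)) := by
  rw [BB, Finset.prod_insert hk, sy_conj, mul_comm, act_mul, act_add, act_mul, act_sy, act_sy, act_mul, act_C, pow_two X, act_mul, act_X, act_X]
  have : ∀ (P : ℂ[X]) (c : ℂ) (q r : ℂ[X]), act P (q + C c * r) = act P q + C c * act P r := by
    intro P c q r
    rw [← act_C, ← act_C, ← act_mul, mul_comm, act_mul]
    simp only [act, map_add]
  rw [this]; rfl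

/-- One step in the estimates below. `A` and `B` stand for the values of the polynomial with the
remaining pairs applied to the square and to the second derivative, and `A'`, `B'` for the same
values with real parts; `W = A + V B` by `sy_conj`. -/
theorem BB_step_bound {A B A' B' W V : ℂ} {ρ P1 c : ℝ} (hP : 0 ≤ P1) (hc : 0 ≤ c)
    (h1 : ‖A - A'‖ ≤ (P1 - 1) * ‖A'‖) (h2 : ‖B - B'‖ ≤ (P1 - 1) * ‖B'‖) (h3 : c * ‖B'‖ ≤ ρ * ‖A'‖)
    (hW : W = A + V * B) (hV : ‖V‖ = c) : ‖W - A'‖ ≤ ((1 + ρ) * P1 - 1) * ‖A'‖ := by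
  have h4 : ‖B‖ ≤ P1 * ‖B'‖ := by
    have := norm_add_le (B - B') B'
    rw [sub_add_cancel] at this; linarith
  have h5 : ‖W - A'‖ ≤ ‖A - A'‖ + c * ‖B‖ := by
    have : W - A' = (A - A') + V * B := by rw [hW]; ring
    rw [this, ← hV, ← norm_mul]; exact norm_add_le _ _
  have h6 : c * ‖B‖ ≤ P1 * (ρ * ‖A'‖) := by
    calc c * ‖B‖ ≤ c * (P1 * ‖B'‖) := by gcongr
      _ = P1 * (c * ‖B'‖) := by ring
      _ ≤ _ := by gcongr
  linarith

theorem V_norm (n : ℕ) (t : ℝ) : ‖((t / n : ℝ) : ℂ) ^ 2‖ = t ^ 2 / (n:ℝ) ^ 2 := by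
  rw [norm_pow, norm_real, Real.norm_eq_abs, sq_abs, div_pow]

theorem Ad.der_le_TT {n : ℕ} (hn : n ≠ 0) {p : ℂ[X]} (h : Ad n p) {z : ℂ} (hz : 0 < z.im) (x : ℝ) :
    z.im * ‖(derivative p).eval z / n‖ ≤ ‖(TT (x / n) p).eval z‖ := by
  rcases h with rfl | ⟨h, hd⟩
  · simp [TT]
  · exact h.der_le_TT hn hd hz x

/-- Replacing `x` by `Re x` when `|Im x|` is small compared with the height of the point. -/
theorem pert_mod {n : ℕ} (hn : n ≠ 0) {x : ℕ → ℂ} {z : ℂ} (hz : 0 < z.im) {ρ : ℕ → ℝ} (hρ : ∀ k, 0 ≤ ρ k)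
    (S : Finset ℕ) (hS : ∀ k ∈ S, (x k).im ^ 2 ≤ ρ k * z.im ^ 2) :
    ∀ q : ℂ[X], Ad n q →
    ‖(BB n x S q).eval z - (TR n x S q).eval z‖ ≤ (∏ k ∈ S, (1 + ρ k) - 1) * ‖(TR n x S q).eval z‖ := by
  have hn' : (0:ℝ) < n := by positivity
  induction S using Finset.induction_on with
  | empty => intro q _; simp [BB, TR]
  | insert k S hk ih =>
    intro q hq
    have ih' := ih fun j hj => hS j (Finset.mem_insert_of_mem hj)
    have h1 := ih' _ ((hq.tt hn (x k).re).tt hn (x k).re)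
    have h2 := ih' _ ((hq.der hn).der hn)
    have hw := TR_ad hn x S hq
    rw [TR_TT, TR_TT, ← TR_insert n x hk] at h1
    rw [TR_der, TR_der] at h2
    rw [Finset.prod_insert hk]
    refine BB_step_bound (Finset.prod_nonneg fun j _ => by linarith [hρ j]) (div_nonneg (sq_nonneg (x k).im) (sq_nonneg (n:ℝ))) h1 h2 ?_ ?_ (V_norm n (x k).im)
    · rw [TR_insert n x hk]
      set w := TR n x S q
      have e1 := (hw.der hn).der_le_TT hn hz (x k).re
      have e2 := (hw.tt hn (x k).re).der_le_TT hn hz (x k).re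
      rw [TT_der] at e2
      rw [norm_div, norm_natCast] at e1 e2
      have e3 : z.im ^ 2 * ‖(derivative (derivative w)).eval z‖ / n ^ 2 ≤ ‖(TT ((x k).re / n) (TT ((x k).re / n) w)).eval z‖ := by
        refine le_trans ?_ e2
        calc _ = z.im * ((z.im * (‖eval z (derivative (derivative w))‖ / n)) / n) := by field_simp
          _ ≤ _ := by gcongr
      calc _ ≤ (ρ k * z.im ^ 2) / n ^ 2 * ‖(derivative (derivative w)).eval z‖ := by
            gcongr; exact hS k (Finset.mem_insert_self _ _)
        _ = ρ k * (z.im ^ 2 * ‖(derivative (derivative w)).eval z‖ / n ^ 2) := by ring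
        _ ≤ _ := mul_le_mul_of_nonneg_left e3 (hρ k)
    · rw [BB_insert n x hk, eval_add, eval_mul, eval_C]

theorem Ad.der_le_TT' {n : ℕ} (hn : n ≠ 0) {p : ℂ[X]} (h : Ad n p) {z : ℂ} (hz : 0 < z.im) {x β : ℝ}
    (hβ : p = 0 ∨ β ≤ ‖nq n p z‖) (hx : 2 ≤ |x| * β) :
    |x| * ‖(derivative p).eval z / n‖ ≤ 2 * ‖(TT (x / n) p).eval z‖ := by
  rcases h with rfl | ⟨h, hd⟩
  · simp [TT]
  · exact h.der_le_TT' hn hz (hβ.resolve_left h.ne_zero) hx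

/-- Differentiation lowers a lower bound for the logarithmic derivative by at most `1/(n Im z)`. -/
theorem Ad.nq_der {n : ℕ} (hn : n ≠ 0) {p : ℂ[X]} (h : Ad n p) {z : ℂ} (hz : 0 < z.im) {β : ℝ} (hβ0 : 0 < β)
    (hβ : p = 0 ∨ β ≤ ‖nq n p z‖) : derivative p = 0 ∨ β - 1 / (n * z.im) ≤ ‖nq n (derivative p) z‖ := by
  rcases h with rfl | ⟨h, hd⟩
  · left; simp
  · right
    have h1 := hβ.resolve_left h.ne_zero
    have h2 := h.nq_der_sub hn hz (norm_pos_iff.1 (hβ0.trans_le h1))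
    have h3 := norm_sub_norm_le (nq n p z) (nq n (derivative p) z)
    rw [norm_sub_rev] at h3
    linarith

/-- Undoing `1 - (x/n) D` lowers a lower bound for the logarithmic derivative by at most
`1/(n Im z)`. -/
theorem Ad.nq_of_TT {n : ℕ} (hn : n ≠ 0) {p : ℂ[X]} (h : Ad n p) {z : ℂ} (hz : 0 < z.im) {β x : ℝ}
    (hβ : TT (x / n) p = 0 ∨ β ≤ ‖nq n (TT (x / n) p) z‖) : p = 0 ∨ β - 1 / (n * z.im) ≤ ‖nq n p z‖ := by
  rcases h with rfl | ⟨h, hd⟩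
  · left; rfl
  · right
    have h1 := hβ.resolve_left (h.tt hn hd x).ne_zero
    have h2 := h.nq_TT_sub hn hd hz x
    have h3 := norm_sub_norm_le (nq n (TT (x / n) p) z) (nq n p z)
    linarith

/-- Replacing `x` by `Re x` also for large `x`, at points where the logarithmic derivative stays
away from `0`. Each large pair may cost `4/(n Im z)` of the lower bound, so their number enters the
hypothesis. -/
theorem pert_large {n : ℕ} (hn : n ≠ 0) {x : ℕ → ℂ} {z : ℂ} (hz : 0 < z.im) {ρ : ℕ → ℝ} (hρ : ∀ k, 0 ≤ ρ k)
    {S0 : Finset ℕ} (hS0 : ∀ k ∈ S0, (x k).im ^ 2 ≤ ρ k * z.im ^ 2) {β : ℝ} (hβ : 0 < β)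
    (S : Finset ℕ) (hd : ∀ k ∈ S, k ∉ S0) (hS : ∀ k ∈ S, 2 ≤ |(x k).re| * β ∧ 4 * (x k).im ^ 2 ≤ ρ k * (x k).re ^ 2) :
    ∀ q : ℂ[X], Ad n q →
    (TR n x (S ∪ S0) q = 0 ∨ β + 4 * S.card / (n * z.im) ≤ ‖nq n (TR n x (S ∪ S0) q) z‖) →
    ‖(BB n x (S ∪ S0) q).eval z - (TR n x (S ∪ S0) q).eval z‖ ≤
      (∏ k ∈ S ∪ S0, (1 + ρ k) - 1) * ‖(TR n x (S ∪ S0) q).eval z‖ := by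
  have hn' : (0:ℝ) < n := by positivity
  induction S using Finset.induction_on with
  | empty => intro q hq _; rw [Finset.empty_union]; exact pert_mod hn hz hρ S0 hS0 q hq
  | insert k S hkS ih =>
    intro q hq hnq
    have hk : k ∉ S ∪ S0 := by
      rw [Finset.mem_union, not_or]; exact ⟨hkS, hd k (Finset.mem_insert_self _ _)⟩
    have ih' := ih (fun j hj => hd j (Finset.mem_insert_of_mem hj)) fun j hj => hS j (Finset.mem_insert_of_mem hj)
    rw [Finset.insert_union] at hnq ⊢
    obtain ⟨hx1, hx2⟩ := hS k (Finset.mem_insert_self _ _)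
    rw [Finset.card_insert_of_notMem hkS] at hnq
    have hw := TR_ad hn x (S ∪ S0) hq
    set d := 1 / ((n:ℝ) * z.im) with hd0
    have hdp : 0 < d := by positivity
    have hcard : 4 * (((S.card + 1 : ℕ)) : ℝ) / (n * z.im) = 4 * S.card / (n * z.im) + 4 * d := by
      rw [hd0]; push_cast; ring
    have hSc : 0 ≤ 4 * (S.card:ℝ) / (n * z.im) := by positivity
    rw [hcard] at hnq
    have a1 : TR n x (S ∪ S0) (TT ((x k).re / n) (TT ((x k).re / n) q)) = TR n x (insert k (S ∪ S0)) q := by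
      rw [TR_TT, TR_TT, ← TR_insert n x hk]
    have a2 : TR n x (S ∪ S0) (derivative (derivative q)) = derivative (derivative (TR n x (S ∪ S0) q)) := by
      rw [TR_der, TR_der]
    have hnq' := hnq
    rw [TR_insert n x hk] at hnq'
    set w := TR n x (S ∪ S0) q with hwdef
    -- undoing two operators and differentiating twice each cost `1/(n Im z)` of the lower bound
    have b1 := (hw.tt hn _).nq_of_TT hn hz hnq'
    have b2 := hw.nq_of_TT hn hz b1
    have b3 := hw.nq_der hn hz (by linarith) b2
    have b4 := (hw.der hn).nq_der hn hz (by linarith) b3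
    have h1 := ih' _ ((hq.tt hn (x k).re).tt hn (x k).re) (by rw [a1]; exact hnq.imp_right fun h => by linarith)
    have h2 := ih' _ ((hq.der hn).der hn) (by rw [a2]; exact b4.imp_right fun h => by linarith)
    rw [a1] at h1
    rw [a2] at h2
    rw [Finset.prod_insert hk]
    refine BB_step_bound (Finset.prod_nonneg fun j _ => by linarith [hρ j]) (div_nonneg (sq_nonneg (x k).im) (sq_nonneg (n:ℝ))) h1 h2 ?_ ?_ (V_norm n (x k).im)
    · rw [TR_insert n x hk]
      have e1 := (hw.der hn).der_le_TT' hn hz (b3.imp_right fun h => by linarith) hx1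
      have e2 := (hw.tt hn (x k).re).der_le_TT' hn hz (b1.imp_right fun h => by linarith) hx1
      rw [TT_der] at e2
      rw [norm_div, norm_natCast] at e1 e2
      have e3 : (x k).re ^ 2 * ‖(derivative (derivative w)).eval z‖ / n ^ 2 ≤ 4 * ‖(TT ((x k).re / n) (TT ((x k).re / n) w)).eval z‖ := by
        calc _ = |(x k).re| * ((|(x k).re| * (‖eval z (derivative (derivative w))‖ / n)) / n) := by
              rw [← sq_abs]; field_simp
          _ ≤ |(x k).re| * ((2 * ‖eval z (TT ((x k).re / n) (derivative w))‖) / n) := by gcongr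
          _ = 2 * (|(x k).re| * (‖eval z (TT ((x k).re / n) (derivative w))‖ / n)) := by ring
          _ ≤ _ := by linarith
      have hx2' : (x k).im ^ 2 ≤ ρ k / 4 * (x k).re ^ 2 := by linarith
      calc _ ≤ (ρ k / 4 * (x k).re ^ 2) / n ^ 2 * ‖(derivative (derivative w)).eval z‖ := by
            gcongr
        _ = ρ k / 4 * ((x k).re ^ 2 * ‖(derivative (derivative w)).eval z‖ / n ^ 2) := by ring
        _ ≤ ρ k / 4 * (4 * ‖(TT ((x k).re / n) (TT ((x k).re / n) w)).eval z‖) :=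
            mul_le_mul_of_nonneg_left e3 (by linarith [hρ k])
        _ = _ := by ring
    · rw [BB_insert n x hk, eval_add, eval_mul, eval_C]

/-- The factors with index in `J` change the normalised logarithmic derivative by `O(1/n)`. -/
theorem TR_nq {n : ℕ} (hn : n ≠ 0) (x : ℕ → ℂ) {z : ℂ} (hz : 0 < z.im) (J : Finset ℕ) {q : ℂ[X]}
    (hq : LH q) (hd : q.natDegree ≤ n) :
    LH (TR n x J q) ∧ (TR n x J q).natDegree ≤ n ∧
      ‖nq n (TR n x J q) z - nq n q z‖ ≤ 2 * J.card / (n * z.im) := by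
  induction J using Finset.induction_on with
  | empty => simpa [TR, act_one] using ⟨hq, hd⟩
  | insert k J hk ih =>
    obtain ⟨h1, h2, h3⟩ := ih
    rw [TR_insert n x hk]
    have g1 := h1.tt hn h2 (x k).re
    have g2 := TT_natDegree h2 ((x k).re / n)
    refine ⟨g1.tt hn g2 _, TT_natDegree g2 _, ?_⟩
    have e1 := h1.nq_TT_sub hn h2 hz (x k).re
    have e2 := g1.nq_TT_sub hn g2 hz (x k).re
    rw [Finset.card_insert_of_notMem hk]
    have : 2 * (((J.card + 1 : ℕ)) : ℝ) / (n * z.im) = 1 / (n * z.im) + 1 / (n * z.im) + 2 * J.card / (n * z.im) := by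
      push_cast; ring
    rw [this]
    have t1 := norm_sub_le_norm_sub_add_norm_sub (nq n (TT ((x k).re / n) (TT ((x k).re / n) (TR n x J q))) z) (nq n (TT ((x k).re / n) (TR n x J q)) z) (nq n q z)
    have t2 := norm_sub_le_norm_sub_add_norm_sub (nq n (TT ((x k).re / n) (TR n x J q)) z) (nq n (TR n x J q) z) (nq n q z)
    linarith

/-! ### Truncated polynomials -/

/-- The indices below `N` with real `α_j`. -/
noncomputable def RN (α : ℕ → ℂ) (N : ℕ) : Finset ℕ := (Finset.range N).filter fun j => (α j).im = 0

/-- The indices below `N` with `α_j` in the upper half-plane. -/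
noncomputable def UN (α : ℕ → ℂ) (N : ℕ) : Finset ℕ := (Finset.range N).filter fun j => 0 < (α j).im

/-- An exhaustion of `ℕ` by finite sets stable under the conjugation `e` of indices. -/
noncomputable def FN (α : ℕ → ℂ) (e : Equiv.Perm ℕ) (N : ℕ) : Finset ℕ :=
  RN α N ∪ (UN α N ∪ (UN α N).map e.toEmbedding)

section
variable {α : ℕ → ℂ} {M a θ : ℝ} {e : Equiv.Perm ℕ}

/-- Products over the exhaustion, with conjugate pairs grouped together. -/
@[to_additive]
theorem prod_FN {β : Type*} [CommMonoid β] (he : ∀ j, α (e j) = (starRingEnd ℂ) (α j)) (φ : ℕ → β) (N : ℕ) :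
    ∏ j ∈ FN α e N, φ j = (∏ j ∈ RN α N, φ j) * ∏ j ∈ UN α N, (φ j * φ (e j)) := by
  rw [FN, Finset.prod_union, Finset.prod_union, Finset.prod_map, Finset.prod_mul_distrib]
  · rfl
  · rw [Finset.disjoint_left]
    intro j hj hj'
    obtain ⟨k, hk, rfl⟩ := Finset.mem_map.1 hj'
    have h1 := (Finset.mem_filter.1 hj).2
    have h2 := (Finset.mem_filter.1 hk).2
    rw [Equiv.coe_toEmbedding, he, conj_im] at h1
    linarith
  · rw [Finset.disjoint_left]
    intro j hj hj'
    have h1 := (Finset.mem_filter.1 hj).2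
    rcases Finset.mem_union.1 hj' with hj' | hj'
    · have h2 := (Finset.mem_filter.1 hj').2
      linarith
    · obtain ⟨k, hk, rfl⟩ := Finset.mem_map.1 hj'
      have h2 := (Finset.mem_filter.1 hk).2
      rw [Equiv.coe_toEmbedding, he, conj_im] at h1
      linarith

theorem FN_tendsto (he : ∀ j, α (e j) = (starRingEnd ℂ) (α j)) : Tendsto (FN α e) atTop atTop := by
  have hm : ∀ {N N' : ℕ}, N ≤ N' → RN α N ⊆ RN α N' ∧ UN α N ⊆ UN α N' := fun h =>
    ⟨Finset.filter_subset_filter _ (Finset.range_mono h), Finset.filter_subset_filter _ (Finset.range_mono h)⟩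
  refine tendsto_atTop_finset_of_monotone ?_ ?_
  · intro N N' h
    obtain ⟨h1, h2⟩ := hm h
    exact Finset.union_subset_union h1 (Finset.union_subset_union h2 (Finset.map_subset_map.2 h2))
  · intro j
    rcases lt_trichotomy (α j).im 0 with h | h | h
    · refine ⟨e.symm j + 1, Finset.mem_union_right _ (Finset.mem_union_right _ (Finset.mem_map.2 ⟨e.symm j, ?_, by simp⟩))⟩
      refine Finset.mem_filter.2 ⟨by simp, ?_⟩
      have := he (e.symm j)
      rw [Equiv.apply_symm_apply] at this
      rw [this, conj_im] at h
      linarith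
    · exact ⟨j + 1, Finset.mem_union_left _ (Finset.mem_filter.2 ⟨by simp, h⟩)⟩
    · exact ⟨j + 1, Finset.mem_union_right _ (Finset.mem_union_left _ (Finset.mem_filter.2 ⟨by simp, h⟩))⟩

/-- The factors with real `α_j`, applied to `(X - e)^n`. -/
noncomputable def Qb (α : ℕ → ℂ) (e : Equiv.Perm ℕ) (En : ℕ → ℝ) (i : ℕ × ℕ) : ℂ[X] :=
  act (∏ j ∈ RN α i.2, sy (((bseq α i.1 * (α j).re : ℝ) : ℂ) / i.1))
    ((X - C ((eF α En i.1 (FN α e i.2) : ℝ) : ℂ)) ^ i.1)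

/-- The truncated Appell polynomial, up to the constant `C`. -/
noncomputable def AA (α : ℕ → ℂ) (e : Equiv.Perm ℕ) (En : ℕ → ℝ) (i : ℕ × ℕ) : ℂ[X] :=
  Pw i.1 (eF α En i.1 (FN α e i.2) : ℝ) (fun j => (bseq α i.1 : ℂ) * α j) (FN α e i.2)

theorem Qb_spec (En : ℕ → ℝ) (i : ℕ × ℕ) (hi : i.1 ≠ 0) :
    LH (Qb α e En i) ∧ (Qb α e En i).natDegree ≤ i.1 :=
  ⟨LH_act_prod hi _ _ (Xe_deg _ _).le (LH_Xe _ _), act_prod_deg _ _ _ (Xe_deg _ _).le⟩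

/-- The truncated polynomial as a product over conjugate pairs applied to the real factors. -/
theorem AA_eq (he : ∀ j, α (e j) = (starRingEnd ℂ) (α j)) (En : ℕ → ℝ) (i : ℕ × ℕ) :
    AA α e En i = BB i.1 (fun j => (bseq α i.1 : ℂ) * α j) (UN α i.2) (Qb α e En i) := by
  rw [AA, Pw, prod_FN he, mul_comm, act_mul, BB, Qb]
  refine congrArg₂ act ?_ (congrArg₂ act ?_ rfl)
  · refine Finset.prod_congr rfl fun j hj => ?_
    rw [he, map_mul, conj_ofReal]
  · refine Finset.prod_congr rfl fun j hj => ?_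
    have h1 := (Finset.mem_filter.1 hj).2
    congr 2
    apply Complex.ext <;> simp [h1]

/-- The polynomial with real parts, with its factors grouped as in `AA_eq`. -/
theorem Pre_eq (he : ∀ j, α (e j) = (starRingEnd ℂ) (α j)) (En : ℕ → ℝ) (i : ℕ × ℕ) :
    Pre α En i.1 (FN α e i.2) = TR i.1 (fun j => (bseq α i.1 : ℂ) * α j) (UN α i.2) (Qb α e En i) := by
  rw [Pre, Pw, prod_FN he, mul_comm, act_mul, TR, Qb]
  refine congrArg₂ act ?_ rfl
  refine Finset.prod_congr rfl fun j hj => ?_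
  rw [he, conj_re, re_ofReal_mul]

theorem BB_sdiff (n : ℕ) (x : ℕ → ℂ) {J U : Finset ℕ} (h : J ⊆ U) (q : ℂ[X]) :
    BB n x U q = BB n x J (BB n x (U \ J) q) := by
  rw [BB, ← Finset.prod_sdiff h, mul_comm, act_mul]; rfl

theorem TR_sdiff (n : ℕ) (x : ℕ → ℂ) {J U : Finset ℕ} (h : J ⊆ U) (q : ℂ[X]) :
    TR n x U q = TR n x J (TR n x (U \ J) q) := by
  rw [TR, ← Finset.prod_sdiff h, mul_comm, act_mul]; rfl

/-- The number of roots with `|Re (1/α_k)| < R`, including those on the imaginary axis, which `n_f`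
does not count. -/
theorem SD.card_large (h : SD α M a θ) (R : ℝ) (S : Finset ℕ) (hS : ∀ k ∈ S, α k ≠ 0 ∧ |rr α k| < R) :
    S.card ≤ nfAll α R + {j : ℕ | α j ≠ 0 ∧ |rr α j| < 1}.ncard := by
  have f1 : {j : ℕ | α j ≠ 0 ∧ 0 < (1 / α j).re ∧ (1 / α j).re < R}.Finite :=
    (h.fin_pos R).subset fun j hj => hj.2
  have f2 : {j : ℕ | α j ≠ 0 ∧ -R < (1 / α j).re ∧ (1 / α j).re < 0}.Finite :=
    (h.fin_neg R).subset fun j hj => ⟨by show 0 < -rr α j; rw [rr]; linarith [hj.2.2], by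
      show -rr α j < R; rw [rr]; linarith [hj.2.1]⟩
  have f3 := h.fin 1
  rw [nfAll, nfPlus, nfMinus, ← Set.ncard_coe_finset]
  refine le_trans (Set.ncard_le_ncard ?_ ((f1.union f2).union f3)) ((Set.ncard_union_le _ _).trans
    (Nat.add_le_add_right (Set.ncard_union_le _ _) _))
  intro k hk
  obtain ⟨h1, h2⟩ := hS k hk
  have h3 := abs_lt.1 h2
  rcases lt_trichotomy (rr α k) 0 with h4 | h4 | h4
  · exact Or.inl (Or.inr ⟨h1, h3.1, h4⟩)
  · exact Or.inr ⟨h1, by rw [h4]; simp⟩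
  · exact Or.inl (Or.inl ⟨h1, h4, h3.2⟩)

/-- The strip condition `|Im (1/α)| ≤ M` in terms of `α`. -/
theorem SD.im_le (h : SD α M a θ) (k : ℕ) : |(α k).im| ≤ M * ‖α k‖ ^ 2 := by
  by_cases h0 : α k = 0
  · simp [h0]
  have h1 := h.him k h0
  rw [one_div, inv_im, abs_div, abs_neg, normSq_eq_norm_sq, abs_of_nonneg (sq_nonneg ‖α k‖), div_le_iff₀ (by positivity)] at h1
  exact h1

theorem prod_exp_le (ρ : ℕ → ℝ) (hρ : ∀ k, 0 ≤ ρ k) (S : Finset ℕ) :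
    ∏ k ∈ S, (1 + ρ k) ≤ Real.exp (∑ k ∈ S, ρ k) := by
  rw [Real.exp_sum]
  refine Finset.prod_le_prod (fun k _ => by linarith [hρ k]) fun k _ => ?_
  rw [add_comm]; exact Real.add_one_le_exp _

/-- Finitely many conjugate pairs with `|x_k| → ∞` do not change the limit. -/
theorem QQ_BB {p : ℕ × ℕ → ℂ[X]} {G : ℂ → ℂ} {z0 : ℂ} {r g B : ℝ} (hg : 0 < g)
    (hG : ∀ z ∈ Metric.closedBall z0 r, g ≤ ‖G z‖ ∧ ‖G z‖ ≤ B)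
    (h : ∀ r' < r, QQ p G (Metric.closedBall z0 r')) {x : ℕ → ℕ → ℂ} (J : Finset ℕ)
    (hx : ∀ k ∈ J, Tendsto (fun n => ‖x n k‖) atTop atTop) :
    ∀ r' < r, QQ (fun i => BB i.1 (x i.1) J (p i)) G (Metric.closedBall z0 r') := by
  induction J using Finset.induction_on with
  | empty => simpa [BB, act_one] using h
  | insert k J hk ih =>
    have h1 := ih fun j hj => hx j (Finset.mem_insert_of_mem hj)
    have h2 := hx k (Finset.mem_insert_self _ _)
    have h3 := QQ.step hg hG h1 (x := fun n => (starRingEnd ℂ) (x n k)) (by simpa using h2)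
    have h4 := QQ.step hg hG h3 (x := fun n => x n k) h2
    convert h4 using 5 with r' hr' i
    rw [BB, Finset.prod_insert hk, act_mul, act_mul, act_sy, act_sy]; rfl

/-- If `G` maps the upper half-plane to the lower one and solves `R(G) + 1/G = z - E`, then the
logarithmic derivatives of the truncated polynomials converge to `G`, uniformly on compact sets. -/
theorem SD.QQ_AA (h : SD α M a θ) (he : ∀ j, α (e j) = (starRingEnd ℂ) (α j))
    {En : ℕ → ℝ} {E : ℝ} (hEn : Tendsto En atTop (𝓝 E)) {G : ℂ → ℂ}
    (hGim : ∀ z : ℂ, 0 < z.im → (G z).im < 0)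
    (hGe : ∀ z : ℂ, 0 < z.im → Rtrans 0 (stableLevy a θ) (G z) + 1 / G z = z - E)
    {K : Set ℂ} (hK : IsCompact K) (hKi : ∀ z ∈ K, 0 < z.im) : QQ (AA α e En) G K := by
  have hM := h.hM
  set x : ℕ → ℕ → ℂ := fun n j => (bseq α n : ℂ) * α j with hx
  have hb : ∀ᶠ n in atTop, 0 < bseq α n := h.b_tendsto.eventually_gt_atTop 0
  set p : ℕ × ℕ → ℂ[X] := fun i => Pre α En i.1 (FN α e i.2) with hp
  have hLH : ∀ i : ℕ × ℕ, i.1 ≠ 0 → LH (p i) ∧ (p i).natDegree ≤ i.1 := fun i hi =>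
    ⟨LH_Pw hi _ _ _, Pw_deg _ _ _ _⟩
  have hlim : ∀ z : ℂ, 0 < z.im → ∀ ε : ℝ, 0 < ε → ∀ᶠ i in lNN, ‖nq i.1 (p i) z - G z‖ ≤ ε :=
    fun z hz ε hε => ev_lNN.2 (h.nq_lim hEn (FN_tendsto he) (hGim z hz) hz (hGe z hz) hε)
  refine QQ.compact hK fun z0 hz0 => ?_
  set y0 := z0.im / 2 with hy0
  have hy : 0 < y0 := by have := hKi z0 hz0; positivity
  have hball : ∀ z ∈ Metric.closedBall z0 y0, y0 ≤ z.im := by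
    intro z hz
    rw [mem_closedBall_iff_norm] at hz
    have := (abs_im_le_norm (z - z0)).trans hz
    rw [sub_im] at this
    have := (abs_le.1 this).1
    linarith
  have hcpt : IsCompact (Metric.closedBall z0 y0) := isCompact_closedBall _ _
  have hz0b : z0 ∈ Metric.closedBall z0 y0 := Metric.mem_closedBall_self hy.le
  have hGc : ContinuousOn G (Metric.closedBall z0 y0) := by
    have : LipschitzOnWith (Real.toNNReal (1 / y0 ^ 2)) G (Metric.closedBall z0 y0) := by
      refine LipschitzOnWith.of_dist_le_mul fun z hz w hw => ?_
      rw [Real.coe_toNNReal _ (by positivity), dist_eq_norm, dist_eq_norm, one_div, inv_mul_eq_div]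
      exact lip_of_lim hLH hlim hy (hball w hw) (hball z hz)
    exact this.continuousOn
  obtain ⟨zm, hzm, hmin⟩ := hcpt.exists_isMinOn ⟨z0, hz0b⟩ hGc.norm
  obtain ⟨zM, hzM, hmax⟩ := hcpt.exists_isMaxOn ⟨z0, hz0b⟩ hGc.norm
  set g := ‖G zm‖ with hg
  have hg0 : 0 < g := norm_pos_iff.2 fun h0 => by
    have := hGim zm (hy.trans_le (hball zm hzm)); rw [h0] at this; simp at this
  have hGb : ∀ z ∈ Metric.closedBall z0 y0, g ≤ ‖G z‖ ∧ ‖G z‖ ≤ ‖G zM‖ := fun z hz => ⟨hmin hz, hmax hz⟩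
  -- the threshold separating moderate from large `|x_j|`
  obtain ⟨L, hL1, hL2, hL0⟩ : ∃ L : ℝ, 16 / g ≤ L ∧ L ^ (-a) ≤ g * y0 / 16 ∧ 0 < L := by
    have h1 := (tendsto_rpow_neg_atTop h.ha0).eventually_le_const (show (0:ℝ) < g * y0 / 16 by positivity)
    exact ((eventually_ge_atTop (16 / g)).and (h1.and (eventually_gt_atTop 0))).exists
  -- `κ |α_k|²` bounds the relative error from the `k`-th conjugate pair: the first entry of the
  -- maximum is for `|x_k| ≤ L`, the second for `|x_k| > L`
  set κ := max (M ^ 2 * L ^ 2 / y0 ^ 2) (16 * M ^ 2) with hκ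
  have hκ0 : 0 ≤ κ := le_max_of_le_right (by positivity)
  set ρ : ℕ → ℝ := fun k => κ * ‖α k‖ ^ 2 with hρ
  have hρ0 : ∀ k, 0 ≤ ρ k := fun k => by positivity
  -- finitely many pairs `J` are set aside, so that the other relative errors multiply to less
  -- than `3/2` and the other `α_k` satisfy `M |α_k| ≤ 1/4`
  obtain ⟨J1, hJ1⟩ := summable_iff_vanishing_norm.1 (h.hsum.mul_left κ) (Real.log (3 / 2)) (Real.log_pos (by norm_num))
  have hsm := h.small (show (0:ℝ) < 1 / (4 * (M + 1)) by positivity)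
  rw [eventually_cofinite] at hsm
  set J := (J1 ∪ hsm.toFinset).filter (fun j => 0 < (α j).im) with hJ
  have hJout : ∀ k, 0 < (α k).im → k ∉ J → k ∉ J1 ∧ M * ‖α k‖ ≤ 1 / 4 := by
    intro k hk hkJ
    simp only [hJ, Finset.mem_filter, Finset.mem_union, Set.Finite.mem_toFinset, Set.mem_ofPred_eq, not_and, not_or] at hkJ
    by_cases h1 : k ∈ J1 ∨ ¬ ‖α k‖ < 1 / (4 * (M + 1))
    · exact absurd hk (hkJ h1)
    · rw [not_or, not_not] at h1
      refine ⟨h1.1, ?_⟩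
      calc M * ‖α k‖ ≤ (M + 1) * (1 / (4 * (M + 1))) := by
            gcongr
            · linarith
            · exact h1.2.le
        _ = 1 / 4 := by field_simp
  set PJ : ℕ × ℕ → ℂ[X] := fun i => TR i.1 (x i.1) (UN α i.2 \ J) (Qb α e En i) with hPJ
  set AJ : ℕ × ℕ → ℂ[X] := fun i => BB i.1 (x i.1) (UN α i.2 \ J) (Qb α e En i) with hAJ
  have hJU : ∀ᶠ i in lNN, J ⊆ UN α i.2 := by
    refine ev_lNN.2 (Eventually.of_forall fun n => ?_)
    filter_upwards [eventually_gt_atTop (J.sup id)] with N hN k hk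
    exact Finset.mem_filter.2 ⟨Finset.mem_range.2 ((Finset.le_sup (f := id) hk).trans_lt hN), (Finset.mem_filter.1 hk).2⟩
  have hPLH : ∀ i : ℕ × ℕ, i.1 ≠ 0 → LH (PJ i) ∧ (PJ i).natDegree ≤ i.1 := fun i hi => by
    have := TR_nq hi (x i.1) (z := I) (by simp) (UN α i.2 \ J) (Qb_spec (α := α) (e := e) En i hi).1 (Qb_spec (α := α) (e := e) En i hi).2
    exact ⟨this.1, this.2.1⟩
  have hPlim : ∀ z : ℂ, 0 < z.im → ∀ ε : ℝ, 0 < ε → ∀ᶠ i in lNN, ‖nq i.1 (PJ i) z - G z‖ ≤ ε := by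
    intro z hz ε hε
    have h1 : ∀ᶠ n : ℕ in atTop, 2 * (J.card:ℝ) / z.im * (1 / n) ≤ ε / 2 := by
      have := (tendsto_one_div_atTop_nhds_zero_nat (𝕜 := ℝ)).const_mul (2 * (J.card:ℝ) / z.im)
      rw [mul_zero] at this
      exact this.eventually_le_const (by positivity)
    filter_upwards [hlim z hz (ε / 2) (by positivity), hJU, ev_fst h1, ev_fst (eventually_ne_atTop 0)] with i h2 h3 h4 hi
    have h5 := (TR_nq hi (x i.1) hz J (hPLH i hi).1 (hPLH i hi).2).2.2
    have h6 : p i = TR i.1 (x i.1) J (PJ i) := by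
      rw [hp, hPJ]; simp only; rw [Pre_eq he, TR_sdiff i.1 _ h3]
    rw [← h6] at h5
    have h7 : 2 * (J.card:ℝ) / (i.1 * z.im) = 2 * (J.card:ℝ) / z.im * (1 / i.1) := by field_simp
    rw [h7, norm_sub_rev] at h5
    have := norm_sub_le_norm_sub_add_norm_sub (nq i.1 (PJ i) z) (nq i.1 (p i) z) (G z)
    linarith
  have hQP : QQ PJ G (Metric.closedBall z0 y0) := QQ_of_lim hPLH hPlim hcpt hy hball
  -- about `n L^(-a)` of the `x_k` exceed `L`, few enough for the hypothesis of `pert_large`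
  have hcount : ∀ᶠ n : ℕ in atTop, 4 * ((nfAll α (bseq α n / L) : ℝ) +
      ({j : ℕ | α j ≠ 0 ∧ |rr α j| < 1}.ncard : ℝ)) / (n * y0) ≤ g / 2 := by
    have h1 := h.lim_all L hL0
    have h2 := (tendsto_one_div_atTop_nhds_zero_nat (𝕜 := ℝ)).const_mul ({j : ℕ | α j ≠ 0 ∧ |rr α j| < 1}.ncard : ℝ)
    have h3 := (h1.add h2).const_mul (4 / y0)
    have h4 : 4 / y0 * (L ^ (-a) + ({j : ℕ | α j ≠ 0 ∧ |rr α j| < 1}.ncard : ℝ) * 0) < g / 2 := by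
      rw [mul_zero, add_zero]
      calc 4 / y0 * L ^ (-a) ≤ 4 / y0 * (g * y0 / 16) := by gcongr
        _ = g / 4 := by field_simp; norm_num
        _ < g / 2 := by linarith
    filter_upwards [h3.eventually_le_const h4] with n hn
    refine le_trans (le_of_eq ?_) hn
    ring
  have hpert : ∀ᶠ i in lNN, ∀ z ∈ Metric.closedBall z0 y0,
      ‖(AJ i).eval z - (PJ i).eval z‖ ≤ 1 / 2 * ‖(PJ i).eval z‖ := by
    filter_upwards [hQP (g / 4) (by positivity), ev_fst hb, ev_fst (eventually_ne_atTop 0), ev_fst hcount] with i hQ hbi hi hc z hz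
    have hzy := hball z hz
    have hz0' : 0 < z.im := hy.trans_le hzy
    have hxn : ∀ k, ‖x i.1 k‖ = bseq α i.1 * ‖α k‖ := fun k => by
      rw [hx]; simp only; rw [norm_mul, norm_real, Real.norm_of_nonneg hbi.le]
    have hxim : ∀ k, (x i.1 k).im = bseq α i.1 * (α k).im := fun k => im_ofReal_mul _ _
    have hxre : ∀ k, (x i.1 k).re = bseq α i.1 * (α k).re := fun k => re_ofReal_mul _ _
    have him2 : ∀ k, (α k).im ^ 2 ≤ M ^ 2 * ‖α k‖ ^ 2 * ‖α k‖ ^ 2 := fun k => by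
      have := pow_le_pow_left₀ (abs_nonneg _) (h.im_le k) 2
      rw [sq_abs] at this
      linarith [this]
    set S := (UN α i.2 \ J).filter (fun k => L < ‖x i.1 k‖) with hS
    set S0 := (UN α i.2 \ J).filter (fun k => ¬ L < ‖x i.1 k‖) with hS0
    have hSS : S ∪ S0 = UN α i.2 \ J := Finset.filter_union_filter_not_eq _ _
    have hout : ∀ k ∈ UN α i.2 \ J, 0 < (α k).im ∧ k ∉ J1 ∧ M * ‖α k‖ ≤ 1 / 4 := fun k hk => by
      have h1 := Finset.mem_sdiff.1 hk
      have h2 := (Finset.mem_filter.1 h1.1).2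
      exact ⟨h2, hJout k h2 h1.2⟩
    have hScard : 4 * (S.card:ℝ) / (i.1 * z.im) ≤ g / 2 := by
      refine le_trans ?_ hc
      have : S.card ≤ _ := h.card_large (bseq α i.1 / L) S (by
        intro k hk
        have h1 := Finset.mem_filter.1 hk
        have h2 := (hout k h1.1).1
        have h0 : α k ≠ 0 := fun h0 => by rw [h0] at h2; simp at h2
        refine ⟨h0, (abs_re_le_norm _).trans_lt ?_⟩
        have h3 := h1.2
        rw [hxn] at h3
        have := norm_pos_iff.2 h0
        rw [norm_div, norm_one, div_lt_div_iff₀ this hL0, one_mul]; exact h3)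
      have h2 : (S.card:ℝ) ≤ (nfAll α (bseq α i.1 / L) : ℝ) + ({j : ℕ | α j ≠ 0 ∧ |rr α j| < 1}.ncard : ℝ) := by
        exact_mod_cast this
      have : (0:ℝ) < i.1 := by positivity
      gcongr
    have key := pert_large hi hz0' hρ0 (x := x i.1) (S0 := S0) (β := g / 4) ?_ (by positivity) S ?_ ?_ (Qb α e En i)
      (Or.inr (Qb_spec En i hi)) ?_
    · rw [hSS] at key
      refine key.trans (mul_le_mul_of_nonneg_right ?_ (norm_nonneg _))
      have h1 := prod_exp_le ρ hρ0 (UN α i.2 \ J)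
      have h2 := hJ1 (UN α i.2 \ J) (Finset.disjoint_left.2 fun k hk => (hout k hk).2.1)
      have h3 := (le_abs_self _).trans_lt h2
      have h4 := Real.exp_le_exp.2 h3.le
      rw [Real.exp_log (by norm_num)] at h4
      linarith
    -- for `|x_k| ≤ L`, `(Im x_k)² ≤ M² |α_k|² |x_k|² ≤ M² L² |α_k|²`
    · intro k hk
      have h1 := not_lt.1 (Finset.mem_filter.1 hk).2
      rw [hxn] at h1
      rw [hxim, mul_pow]
      have h2 : (bseq α i.1 * ‖α k‖) ^ 2 ≤ L ^ 2 := pow_le_pow_left₀ (by positivity) h1 2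
      calc _ ≤ bseq α i.1 ^ 2 * (M ^ 2 * ‖α k‖ ^ 2 * ‖α k‖ ^ 2) := by gcongr; exact him2 k
        _ = M ^ 2 * ‖α k‖ ^ 2 * (bseq α i.1 * ‖α k‖) ^ 2 := by ring
        _ ≤ M ^ 2 * ‖α k‖ ^ 2 * L ^ 2 := by gcongr
        _ = (M ^ 2 * L ^ 2 / y0 ^ 2) * ‖α k‖ ^ 2 * y0 ^ 2 := by field_simp
        _ ≤ κ * ‖α k‖ ^ 2 * z.im ^ 2 := by
          gcongr
          exact le_max_left _ _
    · intro k hk hk0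
      exact (Finset.mem_filter.1 hk0).2 (Finset.mem_filter.1 hk).2
    -- for `|x_k| > L`, `|Im α_k| ≤ |α_k|/4` and so `|Re x_k| ≥ |x_k|/2`
    · intro k hk
      have h1 := Finset.mem_filter.1 hk
      obtain ⟨-, -, h2⟩ := hout k h1.1
      have h3 := h1.2
      have h4 : ‖α k‖ / 2 ≤ |(α k).re| := by
        have := Complex.norm_le_abs_re_add_abs_im (α k)
        have h5 := h.im_le k
        have h6 : M * ‖α k‖ ^ 2 ≤ 1 / 4 * ‖α k‖ := by
          rw [pow_two, ← mul_assoc]; gcongr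
        have := norm_nonneg (α k)
        linarith
      rw [hxn] at h3
      rw [hxre, hxim, abs_mul, abs_of_pos hbi]
      constructor
      · calc (2:ℝ) = (16 / g) / 2 * (g / 4) := by field_simp; norm_num
          _ ≤ L / 2 * (g / 4) := by gcongr
          _ ≤ (bseq α i.1 * ‖α k‖) / 2 * (g / 4) := by gcongr
          _ = bseq α i.1 * (‖α k‖ / 2) * (g / 4) := by ring
          _ ≤ _ := by gcongr
      · have h5 : (‖α k‖ / 2) ^ 2 ≤ (α k).re ^ 2 := by
          rw [← sq_abs (α k).re]; exact pow_le_pow_left₀ (by positivity) h4 2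
        rw [mul_pow, mul_pow]
        calc _ ≤ 4 * (bseq α i.1 ^ 2 * (M ^ 2 * ‖α k‖ ^ 2 * ‖α k‖ ^ 2)) := by gcongr; exact him2 k
          _ = 16 * M ^ 2 * ‖α k‖ ^ 2 * (bseq α i.1 ^ 2 * (‖α k‖ / 2) ^ 2) := by ring
          _ ≤ κ * ‖α k‖ ^ 2 * (bseq α i.1 ^ 2 * (α k).re ^ 2) := by
            gcongr
            exact le_max_right _ _
    · right
      rw [hSS]
      have h1 := (hQ z hz).2
      have h2 := (hGb z hz).1
      have h3 := norm_sub_norm_le (G z) (nq i.1 (PJ i) z)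
      rw [norm_sub_rev] at h3
      have : 3 * g / 4 ≤ ‖nq i.1 (PJ i) z‖ := by linarith
      refine le_trans ?_ this
      linarith
  have hAQ := hQP.pert hpert
  -- the pairs in `J` are restored
  have hfin := QQ_BB hg0 hGb hAQ (x := x) J (by
    intro k hk
    have h2 := (Finset.mem_filter.1 hk).2
    have h0 : α k ≠ 0 := fun h0 => by rw [h0] at h2; simp at h2
    have h3 := h.b_tendsto.atTop_mul_const (norm_pos_iff.2 h0)
    refine h3.congr' ?_
    filter_upwards [hb] with n hn
    rw [hx]; simp only; rw [norm_mul, norm_real, Real.norm_of_nonneg hn.le])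
  refine ⟨y0 / 2, by positivity, (hfin (y0 / 2) (by linarith)).congr ?_⟩
  filter_upwards [hJU] with i hi
  rw [AA_eq he, BB_sdiff i.1 _ hi]
end

/-! ### Appell polynomials -/

section
/-- Leibniz' rule for the product with `1 - cz`. -/
theorem itd_mul {f : ℂ → ℂ} (hf : Differentiable ℂ f) (c : ℂ) (k : ℕ) :
    iteratedDeriv (k + 1) (fun z => (1 - c * z) * f z) =
      fun z => (1 - c * z) * iteratedDeriv (k + 1) f z - c * (k + 1) * iteratedDeriv k f z := by
  have hd : ∀ k z, HasDerivAt (iteratedDeriv k f) (iteratedDeriv (k + 1) f z) z := by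
    intro k z
    rw [iteratedDeriv_succ]
    exact ((hf.contDiff (n := ⊤)).differentiable_iteratedDeriv k
      (by exact_mod_cast WithTop.coe_lt_top _) z).hasDerivAt
  have hl : ∀ z, HasDerivAt (fun z => 1 - c * z) (-c) z := fun z =>
    (((hasDerivAt_id z).const_mul c).const_sub 1).congr_deriv (by simp)
  induction k with
  | zero =>
    rw [iteratedDeriv_succ, iteratedDeriv_zero]
    ext z
    have := ((hl z).mul (hd 0 z)).deriv
    simp only [iteratedDeriv_zero] at this
    refine Eq.trans this ?_
    simp; ring
  | succ k ih =>
    rw [iteratedDeriv_succ, ih]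
    ext z
    refine Eq.trans (((hl z).mul (hd (k+1) z)).sub ((hd k z).const_mul (c * (k+1)))).deriv ?_
    push_cast; ring

theorem appell_coeff (f : ℂ → ℂ) (n m : ℕ) : (appell f n).coeff m =
    if m ≤ n then iteratedDeriv (n - m) f 0 * (n.choose (n - m) : ℂ) else 0 := by
  rw [appell, finset_sum_coeff]
  simp only [coeff_C_mul, coeff_X_pow]
  split_ifs with h
  · rw [Finset.sum_eq_single (n - m)]
    · rw [if_pos (by omega), mul_one]
    · intro k hk hkm
      have := Finset.mem_range.1 hk
      rw [if_neg (by omega), mul_zero]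
    · intro hk; exact absurd (Finset.mem_range.2 (by omega)) hk
  · refine Finset.sum_eq_zero fun k _ => ?_
    rw [if_neg (by omega), mul_zero]

/-- Multiplying `f` by `1 - cz` applies `1 - c d/dz` to its Appell polynomials. -/
theorem appell_mul {f : ℂ → ℂ} (hf : Differentiable ℂ f) (c : ℂ) (n : ℕ) :
    appell (fun z => (1 - c * z) * f z) n = TT c (appell f n) := by
  ext m
  rw [TT, coeff_sub, coeff_C_mul, coeff_derivative, appell_coeff, appell_coeff, appell_coeff]
  by_cases hm : m ≤ n
  · rw [if_pos hm, if_pos hm]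
    rcases Nat.eq_zero_or_pos (n - m) with h0 | h0
    · rw [if_neg (by omega), h0]
      simp
    · obtain ⟨k, hk⟩ : ∃ k, n - m = k + 1 := ⟨n - m - 1, by omega⟩
      rw [if_pos (by omega), hk, itd_mul hf, show n - (m + 1) = k by omega]
      have h1 : ((n.choose (k+1) : ℂ)) * (k + 1) = n.choose k * (m + 1) := by
        have := Nat.choose_succ_right_eq n k
        rw [show n - k = m + 1 by omega] at this
        exact_mod_cast this
      simp only [mul_zero, sub_zero, one_mul]
      linear_combination (-c * iteratedDeriv k f 0) * h1
  · rw [if_neg hm, if_neg hm, if_neg (by omega)]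
    simp

theorem appell_exp (e : ℂ) (n : ℕ) : appell (fun z => exp (-e * z)) n = (X - C e) ^ n := by
  ext m
  rw [appell_coeff, iteratedDeriv_cexp_const_mul, sub_eq_add_neg, ← C_neg, coeff_X_add_C_pow]
  split_ifs with h
  · simp [Nat.choose_symm h]
  · rw [Nat.choose_eq_zero_of_lt (by omega)]; simp

theorem appell_const (c : ℂ) (f : ℂ → ℂ) (n : ℕ) :
    appell (fun z => c * f z) n = C c * appell f n := by
  ext m
  rw [coeff_C_mul, appell_coeff, appell_coeff, iteratedDeriv_const_mul_field]
  split_ifs <;> ring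

theorem appell_prod (n : ℕ) (e : ℂ) (x : ℕ → ℂ) (F : Finset ℕ) :
    appell (fun z => (∏ j ∈ F, (1 - x j / n * z)) * exp (-e * z)) n = Pw n e x F := by
  induction F using Finset.induction_on with
  | empty => rw [Pw_empty, ← appell_exp]; simp
  | insert j F hj ih =>
    rw [Pw_insert n e x hj, ← ih, ← appell_mul (by fun_prop)]
    refine congrArg₂ appell ?_ rfl
    ext z
    rw [Finset.prod_insert hj, mul_assoc]

theorem tlu_deriv {F : ℕ → ℂ → ℂ} {f : ℂ → ℂ} (h : TendstoLocallyUniformly F f atTop)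
    (hF : ∀ N, Differentiable ℂ (F N)) (k : ℕ) :
    TendstoLocallyUniformly (fun N => iteratedDeriv k (F N)) (iteratedDeriv k f) atTop := by
  induction k with
  | zero => simpa only [iteratedDeriv_zero] using h
  | succ k ih =>
    simp only [iteratedDeriv_succ]
    rw [← tendstoLocallyUniformlyOn_univ] at ih ⊢
    exact ih.deriv (Eventually.of_forall fun N =>
      (((hF N).contDiff (n := ⊤)).differentiable_iteratedDeriv k
      (by exact_mod_cast WithTop.coe_lt_top _)).differentiableOn) isOpen_univ

/-- At fixed `n`, Appell polynomials and their derivatives depend continuously on the entire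
function. -/
theorem appell_lim {F : ℕ → ℂ → ℂ} {f : ℂ → ℂ} (h : TendstoLocallyUniformly F f atTop)
    (hF : ∀ N, Differentiable ℂ (F N)) (n : ℕ) (z : ℂ) :
    Tendsto (fun N => (appell (F N) n).eval z) atTop (𝓝 ((appell f n).eval z)) ∧
    Tendsto (fun N => (derivative (appell (F N) n)).eval z) atTop
      (𝓝 ((derivative (appell f n)).eval z)) := by
  have hk : ∀ k, Tendsto (fun N => iteratedDeriv k (F N) 0) atTop (𝓝 (iteratedDeriv k f 0)) :=
    fun k => ((tendstoLocallyUniformlyOn_univ.2 (tlu_deriv h hF k))).tendsto_at (Set.mem_univ _)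
  constructor
  · simp only [appell, eval_finset_sum, eval_mul, eval_C, eval_pow, eval_X]
    exact tendsto_finsetSum _ fun k _ => ((hk k).mul_const _).mul_const _
  · simp only [appell, derivative_sum, derivative_C_mul, eval_finset_sum, eval_mul, eval_C]
    exact tendsto_finsetSum _ fun k _ => ((hk k).mul_const _).mul_const _

theorem appell_natDegree {f : ℂ → ℂ} (h0 : f 0 ≠ 0) (n : ℕ) : (appell f n).natDegree = n := by
  refine natDegree_eq_of_le_of_coeff_ne_zero ?_ ?_
  · rw [natDegree_le_iff_coeff_eq_zero]
    intro m hm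
    rw [appell_coeff, if_neg (by omega)]
  · rw [appell_coeff, if_pos le_rfl]; simpa using h0

end

/-! ### Passage to the limit in the truncation -/

section
variable {α : ℕ → ℂ} {M a θ : ℝ} {e : Equiv.Perm ℕ}

theorem factor_bound {w : ℂ} (hw : ‖w‖ ≤ 1) : ‖(1 - w) * exp w - 1‖ ≤ 3 * ‖w‖ ^ 2 := by
  have h1 := Complex.norm_exp_sub_one_le hw
  have h2 := Complex.norm_exp_sub_one_sub_id_le hw
  calc ‖(1 - w) * exp w - 1‖ = ‖(exp w - 1 - w) - w * (exp w - 1)‖ := by ring_nf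
    _ ≤ ‖exp w - 1 - w‖ + ‖w‖ * ‖exp w - 1‖ := by
      rw [← norm_mul]; exact norm_sub_le _ _
    _ ≤ ‖w‖ ^ 2 + ‖w‖ * (2 * ‖w‖) := by gcongr
    _ = _ := by ring

/-- The canonical product converges locally uniformly along all finite sets, not only along initial
segments. -/
theorem SD.prod_lu (h : SD α M a θ) :
    TendstoLocallyUniformlyOn (fun (F : Finset ℕ) z => ∏ j ∈ F, ((1 - α j * z) * exp (α j * z)))
      (fun z => ∏' j, ((1 - α j * z) * exp (α j * z))) atTop Set.univ := by
  have := hasProdLocallyUniformlyOn_of_forall_compact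
    (f := fun j z => 1 + ((1 - α j * z) * exp (α j * z) - 1))
    (g := fun z => ∏' j, (1 + ((1 - α j * z) * exp (α j * z) - 1))) isOpen_univ (by
    intro K _ hK
    obtain ⟨R, hR⟩ := hK.isBounded.exists_norm_le
    have hR' : ∀ z ∈ K, ‖z‖ ≤ |R| + 1 := fun z hz => by
      have := hR z hz; have := le_abs_self R; linarith
    refine Summable.hasProdUniformlyOn_one_add hK (u := fun j => 3 * (|R| + 1) ^ 2 * ‖α j‖ ^ 2)
      (h.hsum.mul_left _) ?_ (fun j => by fun_prop)
    filter_upwards [h.small (show (0:ℝ) < 1 / (|R| + 1) by positivity)] with j hj z hz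
    have h1 : ‖α j * z‖ ≤ 1 := by
      rw [norm_mul]
      calc ‖α j‖ * ‖z‖ ≤ 1 / (|R| + 1) * (|R| + 1) := by
            gcongr
            exact hR' z hz
        _ = 1 := by field_simp
    refine (factor_bound h1).trans ?_
    rw [norm_mul]
    calc _ ≤ 3 * (‖α j‖ * (|R| + 1)) ^ 2 := by
          gcongr
          exact hR' z hz
      _ = _ := by ring)
  rw [hasProdLocallyUniformlyOn_iff_tendstoLocallyUniformlyOn] at this
  simpa only [add_sub_cancel] using this

/-- The canonical product may be taken along the conjugation-invariant exhaustion. -/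
theorem SD.f_lu (h : SD α M a θ) (he : ∀ j, α (e j) = (starRingEnd ℂ) (α j)) {f : ℂ → ℂ} {Cc c : ℝ}
    (hfeq : TendstoLocallyUniformly
      (fun (N : ℕ) (z : ℂ) => (Cc : ℂ) * Complex.exp (-(c : ℂ) * z) *
          ∏ j ∈ Finset.range N, ((1 - α j * z) * Complex.exp (α j * z))) f atTop) :
    TendstoLocallyUniformly
      (fun (N : ℕ) (z : ℂ) => (Cc : ℂ) * Complex.exp (-(c : ℂ) * z) *
          ∏ j ∈ FN α e N, ((1 - α j * z) * Complex.exp (α j * z))) f atTop := by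
  have hP := h.prod_lu
  have hsub : ∀ {u : ℕ → Finset ℕ}, Tendsto u atTop atTop → TendstoLocallyUniformlyOn
      (fun (N : ℕ) z => ∏ j ∈ u N, ((1 - α j * z) * exp (α j * z)))
      (fun z => ∏' j, ((1 - α j * z) * exp (α j * z))) atTop Set.univ := fun hu v hv x hx => by
    obtain ⟨t, ht, h2⟩ := hP v hv x hx
    exact ⟨t, ht, hu.eventually h2⟩
  have hcont : Continuous fun z => ∏' j, ((1 - α j * z) * exp (α j * z)) := by
    rw [← continuousOn_univ]
    exact hP.continuousOn (Eventually.of_forall fun F => by fun_prop).frequently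
  have heq : f = fun z => (Cc : ℂ) * Complex.exp (-(c : ℂ) * z) *
      ∏' j, ((1 - α j * z) * exp (α j * z)) := by
    ext z
    refine tendsto_nhds_unique ((tendstoLocallyUniformlyOn_univ.2 hfeq).tendsto_at (Set.mem_univ z)) ?_
    exact ((hsub tendsto_finset_range).tendsto_at (Set.mem_univ z)).const_mul _
  rw [heq]
  refine TendstoLocallyUniformly.fun_mul₀ (F := fun _ z => (Cc : ℂ) * Complex.exp (-(c : ℂ) * z))
    ?_ (tendstoLocallyUniformlyOn_univ.1 (hsub (FN_tendsto he))) (by fun_prop) hcont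
  exact fun u hu x => ⟨Set.univ, univ_mem, Eventually.of_forall fun _ _ _ => refl_mem_uniformity hu⟩

/-- The centring sum is real, by conjugation symmetry. -/
theorem SD.kap_tsum (h : SD α M a θ) (he : ∀ j, α (e j) = (starRingEnd ℂ) (α j)) (b : ℝ) :
    ∑' j, kap (b * α j) = ((∑' j, (kap (b * α j)).re : ℝ) : ℂ) := by
  have h1 : (starRingEnd ℂ) (∑' j, kap (b * α j)) = ∑' j, kap (b * α j) := by
    rw [Complex.conj_tsum, ← e.tsum_eq (fun j => kap (b * α j))]
    refine tsum_congr fun j => ?_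
    rw [he, kap, kap]
    simp
  rw [← Complex.re_tsum (h.kap_summable b)]
  exact (Complex.conj_eq_iff_re.1 h1).symm

/-- The rescaled function `f_n`. -/
noncomputable def fsc (α : ℕ → ℂ) (c : ℝ) (En : ℕ → ℝ) (f : ℂ → ℂ) (n : ℕ) (z : ℂ) : ℂ :=
  Complex.exp (-((En n : ℂ) - (c : ℂ) * (bseq α n : ℂ) / (n : ℂ) +
      (1 / (n : ℂ)) * ∑' j : ℕ,
        ((bseq α n : ℂ) * α j) ^ 3 / (1 + ((bseq α n : ℂ) * α j) ^ 2)) * z) *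
    f ((bseq α n : ℂ) * z / (n : ℂ))

theorem sum_FN_re (he : ∀ j, α (e j) = (starRingEnd ℂ) (α j)) (N : ℕ) :
    ∑ j ∈ FN α e N, α j = ((∑ j ∈ FN α e N, (α j).re : ℝ) : ℂ) := by
  rw [sum_FN he, sum_FN he]
  push_cast
  refine congrArg₂ (· + ·) (Finset.sum_congr rfl fun j hj => ?_) (Finset.sum_congr rfl fun j hj => ?_)
  · have := (Finset.mem_filter.1 hj).2
    apply Complex.ext <;> simp [this]
  · rw [he]; apply Complex.ext <;> simp

/-- `A_{n,f_n}` and its derivative are the limits of the truncated polynomials and their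
derivatives. -/
theorem SD.appell_AA (h : SD α M a θ) (he : ∀ j, α (e j) = (starRingEnd ℂ) (α j)) {f : ℂ → ℂ} {Cc c : ℝ}
    (hfeq : TendstoLocallyUniformly
      (fun (N : ℕ) (z : ℂ) => (Cc : ℂ) * Complex.exp (-(c : ℂ) * z) *
          ∏ j ∈ Finset.range N, ((1 - α j * z) * Complex.exp (α j * z))) f atTop)
    (hf : Continuous f) (En : ℕ → ℝ) (n : ℕ) (z : ℂ) :
    Tendsto (fun N => (Cc:ℂ) * (AA α e En (n, N)).eval z) atTop
      (𝓝 ((appell (fsc α c En f n) n).eval z)) ∧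
    Tendsto (fun N => (Cc:ℂ) * (derivative (AA α e En (n, N))).eval z) atTop
      (𝓝 ((derivative (appell (fsc α c En f n) n)).eval z)) := by
  set g : ℕ → ℂ → ℂ := fun N z => (Cc : ℂ) * ((∏ j ∈ FN α e N, (1 - (bseq α n : ℂ) * α j / n * z)) *
    exp (-((eF α En n (FN α e N) : ℝ) : ℂ) * z)) with hg
  have hgA : ∀ N, appell (g N) n = C (Cc:ℂ) * AA α e En (n, N) := fun N => by
    rw [hg, appell_const, appell_prod n _ (fun j => (bseq α n : ℂ) * α j)]; rfl
  have hlu : TendstoLocallyUniformly g (fsc α c En f n) atTop := by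
    have h1 := (h.f_lu he hfeq).comp (fun z : ℂ => (bseq α n : ℂ) * z / (n : ℂ)) (by fun_prop)
    have h2 := TendstoLocallyUniformly.fun_mul₀ (F := fun (_:ℕ) z =>
      Complex.exp (-((En n : ℂ) - (c : ℂ) * (bseq α n : ℂ) / (n : ℂ) +
      (1 / (n : ℂ)) * ∑' j : ℕ,
        ((bseq α n : ℂ) * α j) ^ 3 / (1 + ((bseq α n : ℂ) * α j) ^ 2)) * z)) (f := fun z =>
      Complex.exp (-((En n : ℂ) - (c : ℂ) * (bseq α n : ℂ) / (n : ℂ) +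
      (1 / (n : ℂ)) * ∑' j : ℕ,
        ((bseq α n : ℂ) * α j) ^ 3 / (1 + ((bseq α n : ℂ) * α j) ^ 2)) * z))
      (fun u hu x => ⟨Set.univ, univ_mem, Eventually.of_forall fun _ _ _ => refl_mem_uniformity hu⟩)
      h1 (by fun_prop) (by fun_prop)
    refine h2.congr fun N z => ?_
    have hk : ∑' j : ℕ, ((bseq α n : ℂ) * α j) ^ 3 / (1 + ((bseq α n : ℂ) * α j) ^ 2) =
      ((∑' j, (kap (bseq α n * α j)).re : ℝ) : ℂ) := h.kap_tsum he (bseq α n)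
    simp only [hg, Function.comp]
    rw [hk, Finset.prod_mul_distrib, ← Complex.exp_sum, ← Finset.sum_mul, sum_FN_re he]
    have e1 : ∏ j ∈ FN α e N, (1 - α j * ((bseq α n : ℂ) * z / n)) =
        ∏ j ∈ FN α e N, (1 - (bseq α n : ℂ) * α j / n * z) :=
      Finset.prod_congr rfl fun j _ => by ring
    rw [e1]
    have e2 : ∀ p q r P K : ℂ, exp p * (K * exp q * (P * exp r)) = K * (P * exp (p + q + r)) := by
      intro p q r P K; rw [Complex.exp_add, Complex.exp_add]; ring
    rw [e2]
    refine congrArg (fun t => (Cc:ℂ) * (_ * exp t)) ?_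
    rw [eF, ← Finset.mul_sum]
    push_cast
    ring
  have := appell_lim hlu (fun N => by rw [hg]; fun_prop) n z
  simp only [hgA, derivative_C_mul, eval_mul, eval_C] at this
  exact this

theorem Pw_conj (n : ℕ) (E : ℂ) (x : ℕ → ℂ) (F : Finset ℕ) :
    (Pw n E x F).map (starRingEnd ℂ) =
      Pw n ((starRingEnd ℂ) E) (fun j => (starRingEnd ℂ) (x j)) F := by
  induction F using Finset.induction_on with
  | empty => simp [Pw_empty]
  | insert j F hj ih =>
    rw [Pw_insert _ _ _ hj, Pw_insert _ _ _ hj, ← ih, TT, TT, derivative_map]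
    simp

theorem AA_conj (he : ∀ j, α (e j) = (starRingEnd ℂ) (α j)) (En : ℕ → ℝ) (i : ℕ × ℕ) :
    (AA α e En i).map (starRingEnd ℂ) = AA α e En i := by
  have hee : ∀ j, α (e (e j)) = α j := fun j => by rw [he, he]; simp
  rw [AA, Pw_conj, conj_ofReal, Pw, Pw]
  refine congrArg₂ act ?_ rfl
  rw [prod_FN he, prod_FN he]
  simp only [map_mul, conj_ofReal, ← he, hee]
  refine congrArg₂ (· * ·) (Finset.prod_congr rfl fun j hj => ?_) (Finset.prod_congr rfl fun j hj => mul_comm _ _)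
  have h0 := (Finset.mem_filter.1 hj).2
  rw [he, Complex.conj_eq_iff_im.2 h0]

theorem AA_eval_conj (he : ∀ j, α (e j) = (starRingEnd ℂ) (α j)) (En : ℕ → ℝ) (i : ℕ × ℕ) (z : ℂ) :
    (AA α e En i).eval ((starRingEnd ℂ) z) = (starRingEnd ℂ) ((AA α e En i).eval z) := by
  conv_lhs => rw [← AA_conj he]
  exact eval_map_apply _ _

/-- If `|p'| ≤ B |p|` near `z1`, then `p` does not vanish at `z1`: at a zero of order `k ≥ 1` the
derivative vanishes only to order `k - 1`. -/
theorem ne_zero_of_deriv_le {p : ℂ[X]} (hp : p ≠ 0) {B : ℝ} {z1 : ℂ}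
    (h : ∀ᶠ z in 𝓝 z1, ‖(derivative p).eval z‖ ≤ B * ‖p.eval z‖) : p.eval z1 ≠ 0 := by
  intro h0
  obtain ⟨q, hq, hd⟩ := exists_eq_pow_rootMultiplicity_mul_and_not_dvd p hp z1
  have hm : 0 < p.rootMultiplicity z1 := (rootMultiplicity_pos hp).2 h0
  obtain ⟨m, hm⟩ : ∃ m, p.rootMultiplicity z1 = m + 1 := ⟨_, (Nat.succ_pred_eq_of_pos hm).symm⟩
  rw [hm] at hq
  have hq1 : q.eval z1 ≠ 0 := fun h => hd (dvd_iff_isRoot.2 h)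
  have h1 : ∀ᶠ z in 𝓝[≠] z1, ‖(m + 1 : ℂ) * q.eval z + (z - z1) * (derivative q).eval z‖ ≤
      B * (‖z - z1‖ * ‖q.eval z‖) := by
    filter_upwards [h.filter_mono nhdsWithin_le_nhds, self_mem_nhdsWithin] with z hz hne
    have hne : z - z1 ≠ 0 := sub_ne_zero.2 hne
    have hpos : 0 < ‖(z - z1) ^ m‖ := norm_pos_iff.2 (pow_ne_zero _ hne)
    rw [hq] at hz
    have e1 : (derivative ((X - C z1) ^ (m + 1) * q)).eval z =
        (z - z1) ^ m * ((m + 1 : ℂ) * q.eval z + (z - z1) * (derivative q).eval z) := by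
      simp [derivative_mul, derivative_pow]
      ring
    rw [e1, norm_mul, eval_mul, eval_pow, pow_succ] at hz
    simp only [eval_sub, eval_X, eval_C, norm_mul] at hz
    refine le_of_mul_le_mul_left (hz.trans_eq ?_) hpos
    ring
  have h2 := le_of_tendsto_of_tendsto (f := fun z => ‖(m + 1 : ℂ) * q.eval z + (z - z1) * (derivative q).eval z‖)
    (g := fun z => B * (‖z - z1‖ * ‖q.eval z‖)) (b := 𝓝[≠] z1)
    (((by fun_prop : Continuous _).tendsto z1).mono_left nhdsWithin_le_nhds)
    (((by fun_prop : Continuous _).tendsto z1).mono_left nhdsWithin_le_nhds) h1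
  simp only [sub_self, zero_mul, add_zero, norm_zero, mul_zero] at h2
  have h3 : ((m + 1 : ℕ) : ℂ) ≠ 0 := Nat.cast_ne_zero.2 (Nat.succ_ne_zero m)
  push_cast at h3
  exact mul_ne_zero h3 hq1 (norm_le_zero_iff.1 h2)

/-- The logarithmic derivatives of the polynomials `A_{n,f_n}` converge to `G`, uniformly on compact
subsets of the upper half-plane; the polynomials have exact degree `n` and conjugation-symmetric
roots. -/
theorem SD.appell_nq (h : SD α M a θ) {f : ℂ → ℂ} {Cc c : ℝ} (hC : Cc ≠ 0)
    (hfeq : TendstoLocallyUniformly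
      (fun (N : ℕ) (z : ℂ) => (Cc : ℂ) * Complex.exp (-(c : ℂ) * z) *
          ∏ j ∈ Finset.range N, ((1 - α j * z) * Complex.exp (α j * z))) f atTop)
    (hf : Continuous f) {En : ℕ → ℝ} {E : ℝ} (hEn : Tendsto En atTop (𝓝 E)) {G : ℂ → ℂ}
    (hGim : ∀ z : ℂ, 0 < z.im → (G z).im < 0) (hGb : ∀ z : ℂ, 0 < z.im → ‖G z‖ ≤ 1 / z.im)
    (hGe : ∀ z : ℂ, 0 < z.im → Rtrans 0 (stableLevy a θ) (G z) + 1 / G z = z - E) :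
    (∀ n, (appell (fsc α c En f n) n).natDegree = n) ∧
    (∀ n z, (appell (fsc α c En f n) n).eval z = 0 →
      (appell (fsc α c En f n) n).eval ((starRingEnd ℂ) z) = 0) ∧
    ∀ K : Set ℂ, IsCompact K → (∀ z ∈ K, 0 < z.im) → ∀ ε > 0, ∀ᶠ n : ℕ in atTop, ∀ z ∈ K,
      (appell (fsc α c En f n) n).eval z ≠ 0 ∧ ‖nq n (appell (fsc α c En f n) n) z - G z‖ ≤ ε := by
  obtain ⟨e, he⟩ := h.hconj
  have hL := fun n z => h.appell_AA he hfeq hf En n z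
  have hf0 : f 0 = Cc := by
    refine tendsto_nhds_unique ((tendstoLocallyUniformlyOn_univ.2 hfeq).tendsto_at (Set.mem_univ 0)) ?_
    simp
  have hne : ∀ n, fsc α c En f n 0 ≠ 0 := fun n => by
    simp [fsc, hf0, hC]
  have hdeg := fun n => appell_natDegree (hne n) n
  have hp0 : ∀ n, appell (fsc α c En f n) n ≠ 0 := fun n h0 => by
    have := appell_coeff (fsc α c En f n) n n
    rw [h0, coeff_zero, if_pos le_rfl, Nat.sub_self, iteratedDeriv_zero, Nat.choose_zero_right,
      Nat.cast_one, mul_one] at this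
    exact hne n this.symm
  refine ⟨hdeg, fun n z hz => ?_, ?_⟩
  · have h1 := (Complex.continuous_conj.tendsto _).comp (hL n z).1
    have h2 := tendsto_nhds_unique h1 ((hL n ((starRingEnd ℂ) z)).1.congr fun N => by
      simp [AA_eval_conj he])
    rw [← h2, hz, map_zero]
  · intro K hK hKi ε hε
    obtain ⟨K', hK', hKK, hK'i⟩ := exists_compact_between hK
      (isOpen_lt continuous_const Complex.continuous_im) (fun z hz => hKi z hz)
    have hQ := h.QQ_AA he hEn hGim hGe hK' (fun z hz => hK'i hz) ε hε
    rw [ev_lNN] at hQ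
    filter_upwards [hQ, eventually_ge_atTop 1] with n hn hn1
    have hn0 : (n:ℂ) ≠ 0 := Nat.cast_ne_zero.2 (by omega)
    -- the estimate passes to the limit in the truncation after clearing the denominator `p`
    have hb : ∀ z ∈ K', ‖(derivative (appell (fsc α c En f n) n)).eval z -
        n * G z * (appell (fsc α c En f n) n).eval z‖ ≤
        n * ε * ‖(appell (fsc α c En f n) n).eval z‖ := by
      intro z hz
      refine le_of_tendsto_of_tendsto ((hL n z).2.sub ((hL n z).1.const_mul _)).norm
        ((hL n z).1.norm.const_mul _) ?_
      filter_upwards [hn] with N hN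
      obtain ⟨h1, h2⟩ := hN z hz
      set p := AA α e En (n, N)
      have e1 : (Cc:ℂ) * (derivative p).eval z - n * G z * ((Cc:ℂ) * p.eval z) =
          n * ((Cc:ℂ) * p.eval z) * (nq n p z - G z) := by
        simp only [nq]; field_simp
      rw [e1, norm_mul, norm_mul, Complex.norm_natCast]
      calc _ ≤ (n:ℝ) * ‖(Cc:ℂ) * p.eval z‖ * ε := by gcongr
        _ = _ := by ring
    intro z hz
    have hzK := hKK hz
    have hnz : (appell (fsc α c En f n) n).eval z ≠ 0 := by
      refine ne_zero_of_deriv_le (hp0 n) (B := n * ε + n * (1 / (z.im / 2))) ?_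
      have hz0 := hKi z hz
      filter_upwards [mem_interior_iff_mem_nhds.1 hzK,
        (Complex.continuous_im.tendsto z).eventually_const_lt (show z.im / 2 < z.im by linarith)] with w hw hwi
      have h1 := hb w hw
      have h2 : ‖G w‖ ≤ 1 / (z.im / 2) := (hGb w (hK'i hw)).trans (by gcongr)
      calc _ ≤ ‖(derivative (appell (fsc α c En f n) n)).eval w -
            n * G w * (appell (fsc α c En f n) n).eval w‖ +
            ‖n * G w * (appell (fsc α c En f n) n).eval w‖ := by
            have := norm_add_le ((derivative (appell (fsc α c En f n) n)).eval w -
            n * G w * (appell (fsc α c En f n) n).eval w) (n * G w * (appell (fsc α c En f n) n).eval w)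
            simpa using this
        _ ≤ n * ε * ‖(appell (fsc α c En f n) n).eval w‖ +
            n * (1 / (z.im / 2)) * ‖(appell (fsc α c En f n) n).eval w‖ := by
            rw [norm_mul, norm_mul, Complex.norm_natCast]; gcongr
        _ = _ := by ring
    refine ⟨hnz, ?_⟩
    have h1 := hb z (interior_subset hzK)
    have hpos : 0 < n * ‖(appell (fsc α c En f n) n).eval z‖ :=
      mul_pos (by exact_mod_cast hn1) (norm_pos_iff.2 hnz)
    refine le_of_mul_le_mul_left (?_ : _ ≤ _ * ε) hpos
    calc _ = ‖(n:ℂ) * (appell (fsc α c En f n) n).eval z *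
          (nq n (appell (fsc α c En f n) n) z - G z)‖ := by
          rw [norm_mul, norm_mul, Complex.norm_natCast]
      _ = ‖(derivative (appell (fsc α c En f n) n)).eval z -
        n * G z * (appell (fsc α c En f n) n).eval z‖ := by
          congr 1; simp only [nq]; field_simp
      _ ≤ _ := h1
      _ = _ := by ring
end

/-! ### Poisson smoothing -/

section

theorem tail_tendsto {m : Measure ℝ} {w : ℝ → ℝ} (hw : Integrable w m) :
    Tendsto (fun L : ℝ => ∫ r in {r | L < |r|}, w r ∂m) atTop (𝓝 0) := by
  have h := tendsto_setIntegral_of_antitone (μ := m) (f := w) (s := fun L : ℝ => {r : ℝ | L < |r|})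
    (fun L => measurableSet_lt measurable_const measurable_norm)
    (fun L L' hL r (hr : L' < |r|) => lt_of_le_of_lt hL hr) ⟨0, hw.integrableOn⟩
  have he : ⋂ L : ℝ, {r : ℝ | L < |r|} = ∅ := by
    ext r
    simp only [Set.mem_iInter, Set.mem_empty_iff_false, iff_false, not_forall]
    exact ⟨|r|, fun h => lt_irrefl |r| h⟩
  rw [he] at h
  simpa using h

/-- The Poisson extension of `h` to height `s` above the point `u`. -/
noncomputable def Sm (h : ℝ → ℝ) (s u : ℝ) : ℝ :=
  (∫ r : ℝ, h (u + s * r) * (1 + r ^ 2)⁻¹) / Real.pi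

/-- The smoothing `t ↦ -(1/π) ∫ h(x) Im (1/(x+iy-t)) dx` of `h` at scale `y`, for complex `t`. -/
noncomputable def HH (h : ℝ → ℝ) (y : ℝ) (t : ℂ) : ℝ :=
  -(∫ x : ℝ, h x * (1 / ((x : ℂ) + y * I - t)).im) / Real.pi

theorem pk_im (x y : ℝ) (t : ℂ) : (1 / ((x : ℂ) + y * I - t)).im =
    -((y - t.im) / ((x - t.re) ^ 2 + (y - t.im) ^ 2)) := by
  rw [one_div, Complex.inv_im, Complex.normSq_apply]
  simp
  ring

theorem HH_zero (h : ℝ → ℝ) {y : ℝ} {t : ℂ} (hs : y - t.im = 0) : HH h y t = 0 := by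
  simp [HH, hs]

/-- For a point `t` below height `y` the smoothing is the Poisson extension to height `y - Im t`;
for a point above that height it comes with the opposite sign. -/
theorem HH_eq (h : ℝ → ℝ) {y : ℝ} {t : ℂ} (hs : y - t.im ≠ 0) :
    HH h y t = |y - t.im| / (y - t.im) * Sm h (y - t.im) t.re := by
  rw [HH]
  simp only [pk_im]
  set s := y - t.im
  set u := t.re
  have h1 := integral_add_left_eq_self (μ := volume) (fun x => h x * (s / ((x - u) ^ 2 + s ^ 2))) u
  have h2 := Measure.integral_comp_mul_left (fun x => h (u + x) * (s / ((u + x - u) ^ 2 + s ^ 2))) s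
  have h3 : ∫ r : ℝ, h (u + s * r) * (s / ((u + s * r - u) ^ 2 + s ^ 2)) =
      (∫ r : ℝ, h (u + s * r) * (1 + r ^ 2)⁻¹) / s := by
    rw [← integral_div]
    refine integral_congr_ae (Eventually.of_forall fun r => ?_)
    have : 1 + r ^ 2 ≠ 0 := by positivity
    have e1 : (u + s * r - u) ^ 2 + s ^ 2 = s ^ 2 * (1 + r ^ 2) := by ring
    simp only [e1]
    field_simp
  rw [h3, h1, abs_inv, smul_eq_mul] at h2
  have hs' : |s| ≠ 0 := abs_ne_zero.2 hs
  simp only [mul_neg, integral_neg, neg_neg]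
  have h4 : ∫ x : ℝ, h x * (s / ((x - u) ^ 2 + s ^ 2)) =
      |s| * ((∫ r : ℝ, h (u + s * r) * (1 + r ^ 2)⁻¹) / s) := by
    rw [h2, mul_inv_cancel_left₀ hs']
  rw [h4, Sm]; ring

theorem Sm_le {h : ℝ → ℝ} {Cb : ℝ} (hb : ∀ x, |h x| ≤ Cb) (s u : ℝ) : |Sm h s u| ≤ Cb := by
  rw [Sm, abs_div, abs_of_pos Real.pi_pos, div_le_iff₀ Real.pi_pos]
  have := norm_integral_le_of_norm_le (integrable_inv_one_add_sq.const_mul Cb)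
    (f := fun r : ℝ => h (u + s * r) * (1 + r ^ 2)⁻¹) (Eventually.of_forall fun r => by
      rw [norm_mul, Real.norm_eq_abs, Real.norm_of_nonneg (by positivity)]
      gcongr
      exact hb _)
  rwa [integral_const_mul, integral_univ_inv_one_add_sq] at this

theorem HH_le {h : ℝ → ℝ} {Cb : ℝ} (hb : ∀ x, |h x| ≤ Cb) (y : ℝ) (t : ℂ) : |HH h y t| ≤ Cb := by
  by_cases hs : y - t.im = 0
  · rw [HH_zero h hs, abs_zero]; exact (abs_nonneg _).trans (hb 0)
  · rw [HH_eq h hs, abs_mul, abs_div, abs_abs, div_self (abs_ne_zero.2 hs), one_mul]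
    exact Sm_le hb _ _

/-- The Poisson extension converges uniformly to a bounded uniformly continuous function as the
height tends to `0`. -/
theorem Sm_lim {h : ℝ → ℝ} {Cb : ℝ} (hb : ∀ x, |h x| ≤ Cb) (hu : UniformContinuous h)
    {ε : ℝ} (hε : 0 < ε) : ∃ s0 > 0, ∀ s, 0 < s → s ≤ s0 → ∀ u, |Sm h s u - h u| ≤ ε := by
  have hCb : 0 ≤ Cb := (abs_nonneg _).trans (hb 0)
  obtain ⟨η, hη, hmod⟩ := Metric.uniformContinuous_iff.1 hu (ε / 2) (by positivity)
  obtain ⟨L, hL, hL0⟩ := (((tail_tendsto integrable_inv_one_add_sq).eventually_lt_const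
    (show 0 < ε / 2 * Real.pi / (2 * Cb + 1) by have := Real.pi_pos; positivity)).and
      (eventually_gt_atTop 0)).exists
  refine ⟨η / (2 * L), by positivity, fun s hs hs0 u => ?_⟩
  have hintg : Integrable fun r : ℝ => h (u + s * r) * (1 + r ^ 2)⁻¹ := by
    refine (integrable_inv_one_add_sq.const_mul Cb).mono' ?_ (Eventually.of_forall fun r => ?_)
    · have := hu.continuous
      exact Continuous.aestronglyMeasurable (by
        refine (by fun_prop : Continuous fun r : ℝ => h (u + s * r)).mul
          (Continuous.inv₀ (by fun_prop) fun r => by positivity))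
    · rw [norm_mul, Real.norm_eq_abs, Real.norm_of_nonneg (by positivity)]
      gcongr
      exact hb _
  have e1 : Sm h s u - h u = (∫ r : ℝ, (h (u + s * r) - h u) * (1 + r ^ 2)⁻¹) / Real.pi := by
    simp only [sub_mul]
    rw [integral_sub hintg (integrable_inv_one_add_sq.const_mul _), integral_const_mul,
      integral_univ_inv_one_add_sq, sub_div, mul_div_cancel_right₀ _ Real.pi_ne_zero, Sm]
  rw [e1, abs_div, abs_of_pos Real.pi_pos, div_le_iff₀ Real.pi_pos]
  have hms : MeasurableSet {r : ℝ | L < |r|} := measurableSet_lt measurable_const measurable_norm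
  have hI2 : Integrable ({r : ℝ | L < |r|}.indicator fun r => 2 * Cb * (1 + r ^ 2)⁻¹) :=
    (integrable_inv_one_add_sq.const_mul (2 * Cb)).indicator hms
  have hI1 := integrable_inv_one_add_sq.const_mul (ε / 2)
  have := norm_integral_le_of_norm_le (hI1.add hI2)
    (f := fun r : ℝ => (h (u + s * r) - h u) * (1 + r ^ 2)⁻¹) (Eventually.of_forall fun r => by
      rw [norm_mul, Real.norm_eq_abs, Real.norm_of_nonneg (by positivity), Pi.add_apply]
      have hp : 0 ≤ (1 + r ^ 2)⁻¹ := by positivity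
      by_cases hr : L < |r|
      · rw [Set.indicator_of_mem (by exact hr)]
        have h1 : |h (u + s * r) - h u| ≤ 2 * Cb := by
          have := abs_sub (h (u + s * r)) (h u)
          have := hb (u + s * r); have := hb u; linarith
        have h2 : |h (u + s * r) - h u| * (1 + r ^ 2)⁻¹ ≤ 2 * Cb * (1 + r ^ 2)⁻¹ := by gcongr
        have h3 : 0 ≤ ε / 2 * (1 + r ^ 2)⁻¹ := by positivity
        linarith
      · rw [Set.indicator_of_notMem (by exact hr), add_zero]
        have h1 : dist (u + s * r) u < η := by
          rw [Real.dist_eq, add_sub_cancel_left, abs_mul, abs_of_pos hs]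
          calc s * |r| ≤ η / (2 * L) * L := by gcongr; exact not_lt.1 hr
            _ = η / 2 := by field_simp
            _ < η := by linarith
        have h2 := (hmod h1).le
        rw [Real.dist_eq] at h2
        gcongr)
  refine this.trans ?_
  simp only [Pi.add_apply]
  rw [integral_add hI1 hI2, integral_const_mul, integral_univ_inv_one_add_sq,
    integral_indicator hms, integral_const_mul]
  have h5 : 2 * Cb * ∫ r in {r : ℝ | L < |r|}, (1 + r ^ 2)⁻¹ ≤ ε / 2 * Real.pi := by
    calc _ ≤ 2 * Cb * (ε / 2 * Real.pi / (2 * Cb + 1)) := by gcongr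
      _ ≤ (2 * Cb + 1) * (ε / 2 * Real.pi / (2 * Cb + 1)) := by
        have := Real.pi_pos
        gcongr; linarith
      _ = _ := by field_simp
  linarith

/-- The bump cutting off `g` outside `[-R-1, R+1]`. -/
noncomputable def chi (R x : ℝ) : ℝ := max 0 (min 1 (R + 1 - |x|))

theorem chi_mem (R x : ℝ) : 0 ≤ chi R x ∧ chi R x ≤ 1 :=
  ⟨le_max_left _ _, max_le zero_le_one (min_le_left _ _)⟩

theorem chi_one {R x : ℝ} (hx : |x| ≤ R) : chi R x = 1 := by
  rw [chi, min_eq_left (by linarith), max_eq_right zero_le_one]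

theorem chi_zero {R x : ℝ} (hx : R + 1 ≤ |x|) : chi R x = 0 :=
  max_eq_left ((min_le_right _ _).trans (by linarith))

theorem chi_cont (R : ℝ) : Continuous (chi R) := by unfold chi; fun_prop

end

/-! ### Cauchy transforms and tightness -/

section

theorem sub_real_norm {z : ℂ} (t : ℝ) : |z.im| ≤ ‖z - t‖ := by
  have := Complex.abs_im_le_norm (z - t)
  simpa using this

theorem cauchy_norm {z : ℂ} (hz : 0 < z.im) (t : ℝ) : ‖1 / (z - t)‖ ≤ 1 / z.im := by
  have := sub_real_norm (z := z) t
  rw [abs_of_pos hz] at this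
  rw [norm_div, norm_one]; gcongr

variable {μ : Measure ℝ} [IsProbabilityMeasure μ]

theorem cauchy_integrable {z : ℂ} (hz : 0 < z.im) : Integrable (fun t : ℝ => 1 / (z - t)) μ :=
  (integrable_const (1 / z.im)).mono' (by
    refine Measurable.aestronglyMeasurable ?_
    fun_prop) (Eventually.of_forall fun t => cauchy_norm hz t)

theorem cauchyG_norm {z : ℂ} (hz : 0 < z.im) : ‖cauchyG μ z‖ ≤ 1 / z.im := by
  have := norm_integral_le_of_norm_le (integrable_const (1 / z.im)) (μ := μ)
    (Eventually.of_forall fun t => cauchy_norm hz t)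
  simpa [cauchyG] using this

theorem cauchyG_im {z : ℂ} : 0 < z.im → (cauchyG μ z).im = ∫ t : ℝ, (1 / (z - t)).im ∂μ := fun hz =>
  (Complex.imCLM.integral_comp_comm (cauchy_integrable hz)).symm

theorem cauchyG_im_neg {z : ℂ} (hz : 0 < z.im) : (cauchyG μ z).im < 0 := by
  rw [cauchyG_im hz, ← neg_pos, ← integral_neg]
  have hpos : ∀ t : ℝ, 0 < -(1 / (z - t)).im := fun t => by
    have h0 : z - t ≠ 0 := fun h => by
      have := congrArg Complex.im h; simp at this; linarith
    rw [one_div, Complex.inv_im, neg_div, neg_neg]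
    have := Complex.normSq_pos.2 h0
    simp only [sub_im, ofReal_im, sub_zero]
    positivity
  rw [integral_pos_iff_support_of_nonneg (fun t => (hpos t).le)]
  · rw [show Function.support (fun t : ℝ => -(1 / (z - t)).im) = Set.univ from
      Set.eq_univ_of_forall fun t => (hpos t).ne']
    simp
  · exact (Complex.imCLM.integrable_comp (cauchy_integrable (μ := μ) hz)).neg

/-- The Cauchy transform at `iY` recovers the total mass `1` as `Y → ∞`. -/
theorem cauchyG_lim : Tendsto (fun Y : ℝ => (Y * I) * cauchyG μ (Y * I)) atTop (𝓝 1) := by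
  have h : Tendsto (fun Y : ℝ => ∫ t : ℝ, (Y * I) * (1 / (Y * I - t)) ∂μ) atTop
      (𝓝 (∫ _ : ℝ, (1:ℂ) ∂μ)) := by
    refine tendsto_integral_filter_of_dominated_convergence (fun _ => 1) ?_ ?_ (integrable_const _) ?_
    · refine Eventually.of_forall fun Y => Measurable.aestronglyMeasurable ?_
      fun_prop
    · filter_upwards [eventually_gt_atTop 0] with Y hY
      refine Eventually.of_forall fun t => ?_
      rw [norm_mul]
      have hi : ((Y:ℂ) * I).im = Y := by simp
      have := cauchy_norm (z := Y * I) (by rw [hi]; exact hY) t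
      rw [hi] at this
      calc _ ≤ Y * (1 / Y) := by
            gcongr
            simp [abs_of_pos hY]
        _ = 1 := by field_simp
    · refine Eventually.of_forall fun t => ?_
      have h1 : Tendsto (fun Y : ℝ => (1 + (t:ℂ) * ((Y⁻¹ : ℝ) : ℂ) * I)⁻¹) atTop
          (𝓝 ((1 + (t:ℂ) * ((0:ℝ):ℂ) * I)⁻¹)) := by
        refine Tendsto.inv₀ ?_ (by simp)
        exact (((Complex.continuous_ofReal.tendsto 0).comp tendsto_inv_atTop_zero).const_mul
          _ |>.mul_const _).const_add _
      simp only [ofReal_zero, mul_zero, zero_mul, add_zero, inv_one] at h1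
      refine h1.congr' ?_
      filter_upwards [eventually_gt_atTop 0] with Y hY
      have hY0 : (Y:ℂ) ≠ 0 := ofReal_ne_zero.2 hY.ne'
      have h2 : (Y:ℂ) * I - t ≠ 0 := fun h => by
        have := congrArg Complex.im h; simp at this; linarith
      have h3 : 1 + (t:ℂ) * ((Y⁻¹ : ℝ) : ℂ) * I ≠ 0 := fun h => by
        apply h2
        have : (Y:ℂ) * I - t = Y * I * (1 + (t:ℂ) * ((Y⁻¹ : ℝ) : ℂ) * I) := by
          push_cast
          have := I_sq
          field_simp
          linear_combination -(t:ℂ) * I_sq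
        rw [this, h, mul_zero]
      rw [inv_eq_iff_eq_inv]
      push_cast
      have hI := I_ne_zero
      field_simp
      linear_combination (t:ℂ) * I_sq
  simp only [integral_const_mul] at h
  simpa [cauchyG] using h

/-- Finite multisets `s n` of `n` points, stable under conjugation, whose Stieltjes transforms
converge locally uniformly to that of `μ` in the upper half-plane. -/
structure WC (s : ℕ → Multiset ℂ) (μ : Measure ℝ) : Prop where
  card : ∀ n, (s n).card = n
  conj : ∀ n, ∀ t ∈ s n, (starRingEnd ℂ) t ∈ s n
  conv : ∀ K : Set ℂ, IsCompact K → (∀ z ∈ K, 0 < z.im) → ∀ ε > 0, ∀ᶠ n : ℕ in atTop, ∀ z ∈ K,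
    z ∉ s n ∧ ‖(1 / (n : ℂ)) * ((s n).map fun t => 1 / (z - t)).sum - cauchyG μ z‖ ≤ ε

variable {s : ℕ → Multiset ℂ}

/-- In any bounded region all points approach the real line: compact parts of the upper half-plane
are eventually free of them, and those of the lower one by conjugation. -/
theorem WC.near (h : WC s μ) (R : ℝ) {δ : ℝ} (hδ : 0 < δ) :
    ∀ᶠ n in atTop, ∀ t ∈ s n, R < ‖t‖ ∨ |t.im| < δ := by
  have hK : IsCompact (Metric.closedBall (0:ℂ) R ∩ {z | δ ≤ z.im}) :=
    (isCompact_closedBall _ _).inter_right (isClosed_le continuous_const Complex.continuous_im)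
  filter_upwards [h.conv _ hK (fun z hz => lt_of_lt_of_le hδ hz.2) 1 one_pos] with n hn t ht
  by_contra! hc
  obtain ⟨h1, h2⟩ := hc
  rcases le_abs.1 h2 with h2 | h2
  · exact (hn t ⟨by simpa using h1, h2⟩).1 ht
  · exact (hn _ ⟨by simpa using h1, by simpa using h2⟩).1 (h.conj n t ht)

open Classical in
/-- A sum bounded termwise by `a`, plus `b` on the points satisfying `p`. -/
theorem ms_le (s : Multiset ℂ) (φ : ℂ → ℝ) (a b : ℝ) (p : ℂ → Prop)
    (h : ∀ t ∈ s, φ t ≤ a + b * (if p t then 1 else 0)) :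
    (s.map φ).sum ≤ a * s.card + b * (s.filter p).card := by
  induction s using Multiset.induction_on with
  | empty => simp
  | cons t s ih =>
    have h1 := h t (Multiset.mem_cons_self _ _)
    have h2 := ih fun u hu => h u (Multiset.mem_cons_of_mem hu)
    rw [Multiset.map_cons, Multiset.sum_cons, Multiset.card_cons]
    by_cases hp : p t
    · rw [Multiset.filter_cons_of_pos _ hp, Multiset.card_cons]
      rw [if_pos hp] at h1
      push_cast; linarith
    · rw [Multiset.filter_cons_of_neg _ hp]
      rw [if_neg hp] at h1
      push_cast; linarith

theorem ms_re (s : Multiset ℂ) (φ : ℂ → ℂ) : (s.map φ).sum.re = (s.map fun t => (φ t).re).sum := by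
  induction s using Multiset.induction_on with
  | empty => simp
  | cons t s ih => simp [ih]

theorem ms_im (s : Multiset ℂ) (φ : ℂ → ℂ) : (s.map φ).sum.im = (s.map fun t => (φ t).im).sum := by
  induction s using Multiset.induction_on with
  | empty => simp
  | cons t s ih => simp [ih]

open Classical in
/-- Tightness: testing the Stieltjes transform at `iY` with `Y` large bounds the proportion of
points outside the disc of radius `3Y`. -/
theorem WC.tight (h : WC s μ) {ε : ℝ} (hε : 0 < ε) (hε1 : ε ≤ 1) :
    ∃ R > 0, μ.real {x | R < |x|} ≤ ε ∧
      ∀ᶠ n in atTop, ((((s n).filter fun t => R < ‖t‖).card : ℕ) : ℝ) ≤ ε * n := by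
  set η := ε / 6 with hη
  have hη0 : 0 < η := by positivity
  have hη1 : η ≤ 1 := by rw [hη]; linarith
  have ht := tail_tendsto (m := μ) (w := fun _ => 1) (integrable_const _)
  have ht3 := ht.comp (tendsto_id.const_mul_atTop (show (0:ℝ) < 3 by norm_num))
  obtain ⟨Y, ⟨hY1, hY2⟩, hY⟩ := (((ht3.eventually_lt_const hε).and
    ((cauchyG_lim (μ := μ)).eventually (Metric.ball_mem_nhds _ hη0))).and (eventually_gt_atTop 0)).exists
  refine ⟨3 * Y, by positivity, ?_, ?_⟩
  · have : ∫ r in {r : ℝ | 3 * Y < |r|}, (1:ℝ) ∂μ = μ.real {x | 3 * Y < |x|} := by simp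
    rw [← this]; exact hY1.le
  have hYi : 0 < ((Y:ℂ) * I).im := by simpa using hY
  have hδ : 0 < η * Y / 2 := by positivity
  filter_upwards [h.near (3 * Y) hδ, h.conv {(Y:ℂ) * I} isCompact_singleton (by simpa using hY)
    (η / Y) (by positivity), eventually_ge_atTop 1] with n hn hc hn1
  have hn0 : (0:ℝ) < n := by exact_mod_cast hn1
  have hc := (hc _ rfl).2
  set q := (1 / (n : ℂ)) * ((s n).map fun t => 1 / ((Y:ℂ) * I - t)).sum with hq
  have h1 : ‖(Y:ℂ) * I * q - 1‖ ≤ 2 * η := by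
    have e : (Y:ℂ) * I * q - 1 = (Y:ℂ) * I * (q - cauchyG μ (Y * I)) + ((Y:ℂ) * I * cauchyG μ (Y * I) - 1) := by
      ring
    rw [dist_eq_norm] at hY2
    rw [e]
    refine (norm_add_le _ _).trans ?_
    have : ‖(Y:ℂ) * I * (q - cauchyG μ (Y * I))‖ ≤ η := by
      rw [norm_mul]
      calc _ ≤ Y * (η / Y) := by
            gcongr
            simp [abs_of_pos hY]
        _ = η := by field_simp
    linarith
  have h2 : (1 - 2 * η) * n ≤ ((s n).map fun t => ((Y:ℂ) * I * (1 / ((Y:ℂ) * I - t))).re).sum := by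
    have e : ((s n).map fun t => ((Y:ℂ) * I * (1 / ((Y:ℂ) * I - t))).re).sum =
        n * ((Y:ℂ) * I * q).re := by
      rw [← ms_re, Multiset.sum_map_mul_left, hq]
      have : (n:ℂ) ≠ 0 := by exact_mod_cast hn0.ne'
      rw [← Complex.re_ofReal_mul]
      congr 1
      push_cast
      field_simp
    rw [e, mul_comm]
    gcongr
    have := (Complex.abs_re_le_norm _).trans h1
    have := (abs_le.1 this).1
    simp only [sub_re, one_re] at this
    linarith
  have h3 := ms_le (s n) (fun t => ((Y:ℂ) * I * (1 / ((Y:ℂ) * I - t))).re) (1 + η) (-1/2)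
    (fun t => 3 * Y < ‖t‖) (by
      intro t ht
      refine (Complex.re_le_norm _).trans ?_
      have hYn : ‖(Y:ℂ) * I‖ = Y := by simp [abs_of_pos hY]
      rw [norm_mul, norm_div, norm_one, hYn]
      by_cases hb : 3 * Y < ‖t‖
      · rw [if_pos hb]
        have h4 : 2 * Y ≤ ‖(Y:ℂ) * I - t‖ := by
          have := norm_sub_norm_le t ((Y:ℂ) * I)
          rw [norm_sub_rev, hYn] at this; linarith
        calc Y * (1 / ‖(Y:ℂ) * I - t‖) ≤ Y * (1 / (2 * Y)) := by gcongr
          _ = 1 / 2 := by field_simp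
          _ ≤ _ := by linarith
      · rw [if_neg hb]
        have h5 := (hn t ht).resolve_left hb
        have h4 : Y - η * Y / 2 ≤ ‖(Y:ℂ) * I - t‖ := by
          refine le_trans ?_ (Complex.abs_im_le_norm _)
          refine le_trans ?_ (le_abs_self _)
          simp
          have := (abs_lt.1 h5).2
          linarith
        have h6 : 0 < Y - η * Y / 2 := by nlinarith
        calc Y * (1 / ‖(Y:ℂ) * I - t‖) ≤ Y * (1 / (Y - η * Y / 2)) := by gcongr
          _ = Y / (Y - η * Y / 2) := by ring
          _ ≤ 1 + η := by
            rw [div_le_iff₀ h6]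
            nlinarith [mul_nonneg (mul_nonneg hη0.le hY.le) (sub_nonneg.2 hη1)]
          _ = _ := by ring)
  rw [h.card] at h3
  have h7 := h2.trans h3
  rw [show ε = 6 * η by rw [hη]; ring]
  linarith

theorem pk_integrable {h : ℝ → ℝ} (hintg : Integrable h) (y : ℝ) (t : ℂ) :
    Integrable fun x : ℝ => h x * (1 / ((x : ℂ) + y * I - t)).im := by
  by_cases hs : y - t.im = 0
  · refine (integrable_zero ℝ ℝ volume).congr (Eventually.of_forall fun x => ?_)
    simp only [pk_im, hs]; simp
  · refine hintg.mul_bdd (c := 1 / |y - t.im|) (Measurable.aestronglyMeasurable (by fun_prop))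
      (Eventually.of_forall fun x => ?_)
    refine (Complex.abs_im_le_norm _).trans ?_
    rw [norm_div, norm_one]
    gcongr
    have := Complex.abs_im_le_norm ((x:ℂ) + y * I - t)
    simpa using this

/-- The smoothing, summed over the points, in terms of their Stieltjes transform at height `y`. -/
theorem HH_sum {h : ℝ → ℝ} (hintg : Integrable h) (y : ℝ) (s : Multiset ℂ) :
    Integrable (fun x : ℝ => h x * ((s.map fun t => 1 / ((x : ℂ) + y * I - t)).sum).im) ∧
    (s.map (HH h y)).sum =
      -(∫ x : ℝ, h x * ((s.map fun t => 1 / ((x : ℂ) + y * I - t)).sum).im) / Real.pi := by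
  induction s using Multiset.induction_on with
  | empty => simp
  | cons t s ih =>
    simp only [Multiset.map_cons, Multiset.sum_cons, add_im, mul_add]
    refine ⟨(pk_integrable hintg y t).add ih.1, ?_⟩
    rw [integral_add (pk_integrable hintg y t) ih.1, ih.2, HH]
    ring

/-- The analogue of `HH_sum` for a measure, by Fubini. -/
theorem HH_fubini {h : ℝ → ℝ} (hintg : Integrable h) {y : ℝ} (hy : 0 < y) :
    Integrable (fun x : ℝ => h x * (cauchyG μ ((x : ℂ) + y * I)).im) ∧
    ∫ u : ℝ, HH h y u ∂μ = -(∫ x : ℝ, h x * (cauchyG μ ((x : ℂ) + y * I)).im) / Real.pi := by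
  have hF : Integrable (Function.uncurry fun (x u : ℝ) => h x * (1 / ((x : ℂ) + y * I - u)).im)
      (volume.prod μ) := by
    have h1 : Integrable (fun z : ℝ × ℝ => h z.1) (volume.prod μ) := by
      simpa using hintg.mul_prod (integrable_const (1:ℝ) (μ := μ))
    refine h1.mul_bdd (c := 1 / y) (Measurable.aestronglyMeasurable (by fun_prop))
      (Eventually.of_forall fun z => ?_)
    have := cauchy_norm (z := (z.1:ℂ) + y * I) (by simpa using hy) z.2
    refine (Complex.abs_im_le_norm _).trans ?_
    simpa using this
  have e : ∀ x : ℝ, ∫ u : ℝ, h x * (1 / ((x : ℂ) + y * I - u)).im ∂μ =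
      h x * (cauchyG μ ((x : ℂ) + y * I)).im := fun x => by
    rw [integral_const_mul, cauchyG_im (by simpa using hy)]
  refine ⟨?_, ?_⟩
  · have := hF.integral_prod_left
    simpa only [Function.uncurry, e] using this
  · have := integral_integral_swap hF
    simp only [e] at this
    rw [this]
    simp only [HH]
    rw [integral_div, integral_neg]
end

/-! ### Weak convergence -/

section
variable {μ : Measure ℝ} [IsProbabilityMeasure μ] {s : ℕ → Multiset ℂ}

/-- The averages of a smoothed compactly supported function converge, because they only involve the
Stieltjes transform on a compact segment at height `y`. -/
theorem WC.HH_lim (h : WC s μ) {k : ℝ → ℝ} (hc : Continuous k) {Cb : ℝ} (hb : ∀ x, |k x| ≤ Cb)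
    {R : ℝ} (hR : 0 < R) (hk : ∀ x, R ≤ |x| → k x = 0) {y : ℝ} (hy : 0 < y) {ε : ℝ} (hε : 0 < ε) :
    ∀ᶠ n : ℕ in atTop, |((s n).map (HH k y)).sum / n - ∫ u : ℝ, HH k y u ∂μ| ≤ ε := by
  have hCb : 0 ≤ Cb := (abs_nonneg _).trans (hb 0)
  have hpi := Real.pi_pos
  have hintg : Integrable k := hc.integrable_of_hasCompactSupport
    (HasCompactSupport.intro (isCompact_Icc (a := -R) (b := R)) fun x hx => hk x (by
      by_contra! hlt
      exact hx ⟨(abs_lt.1 hlt).1.le, (abs_lt.1 hlt).2.le⟩))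
  set κ := ε * Real.pi / ((Cb + 1) * (2 * R)) with hκ
  have hK : IsCompact ((fun x : ℝ => (x:ℂ) + y * I) '' Set.Icc (-R) R) :=
    isCompact_Icc.image (by fun_prop)
  filter_upwards [h.conv _ hK (by rintro _ ⟨x, -, rfl⟩; simpa using hy) κ (by positivity),
    eventually_ge_atTop 1] with n hn hn1
  have hn0 : (n:ℝ) ≠ 0 := by positivity
  obtain ⟨i1, e1⟩ := HH_sum hintg y (s n)
  obtain ⟨i2, e2⟩ := HH_fubini (μ := μ) hintg hy
  have e3 : ((s n).map (HH k y)).sum / n - ∫ u : ℝ, HH k y u ∂μ =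
      -(∫ x : ℝ, k x * ((1 / (n:ℂ)) * ((s n).map fun t => 1 / ((x : ℂ) + y * I - t)).sum -
        cauchyG μ ((x : ℂ) + y * I)).im) / Real.pi := by
    have e4 : ∀ x : ℝ, k x * ((1 / (n:ℂ)) * ((s n).map fun t => 1 / ((x : ℂ) + y * I - t)).sum -
        cauchyG μ ((x : ℂ) + y * I)).im = (1 / n) * (k x *
          ((s n).map fun t => 1 / ((x : ℂ) + y * I - t)).sum.im) -
          k x * (cauchyG μ ((x : ℂ) + y * I)).im := fun x => by
      have : (1 / (n:ℂ)) = ((1 / n : ℝ) : ℂ) := by push_cast; rfl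
      rw [sub_im, this, Complex.im_ofReal_mul]; ring
    simp only [e4]
    rw [integral_sub (i1.const_mul _) i2, integral_const_mul, e1, e2]
    ring
  rw [e3, abs_div, abs_of_pos hpi, abs_neg, div_le_iff₀ hpi,
    ← setIntegral_eq_integral_of_forall_compl_eq_zero (s := Set.Icc (-R) R)]
  · have := norm_setIntegral_le_of_norm_le_const (μ := volume) (s := Set.Icc (-R) R) (C := Cb * κ)
      (f := fun x : ℝ => k x * ((1 / (n:ℂ)) * ((s n).map fun t => 1 / ((x : ℂ) + y * I - t)).sum -
        cauchyG μ ((x : ℂ) + y * I)).im) measure_Icc_lt_top (fun x hx => by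
        rw [norm_mul]
        gcongr
        · exact hb x
        · exact (Complex.abs_im_le_norm _).trans (hn _ ⟨x, hx, rfl⟩).2)
    refine this.trans ?_
    rw [Real.volume_real_Icc_of_le (by linarith), hκ]
    calc _ = Cb / (Cb + 1) * (ε * Real.pi) := by field_simp; ring
      _ ≤ 1 * (ε * Real.pi) := by
        gcongr
        rw [div_le_one (by positivity)]; linarith
      _ = _ := one_mul _
  · intro x hx
    rw [hk x, zero_mul]
    by_contra! hlt
    exact hx ⟨(abs_lt.1 hlt).1.le, (abs_lt.1 hlt).2.le⟩

open Classical in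
/-- Locally uniform convergence of Stieltjes transforms in the upper half-plane implies weak
convergence, also for conjugation-invariant families of complex points. -/
theorem WC.weak (h : WC s μ) {g : ℂ → ℝ} (hg : Continuous g) {Cb : ℝ} (hgb : ∀ x, |g x| ≤ Cb) :
    Tendsto (fun n : ℕ => ((s n).map g).sum / n) atTop (𝓝 (∫ x : ℝ, g x ∂μ)) := by
  have hCb : 0 ≤ Cb := (abs_nonneg _).trans (hgb 0)
  rw [Metric.tendsto_atTop']
  suffices hs : ∀ ε : ℝ, 0 < ε → ε ≤ 1 → ∀ᶠ n : ℕ in atTop,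
      |((s n).map g).sum / n - ∫ x : ℝ, g x ∂μ| ≤ (4 * Cb + 4) * ε by
    intro ε hε
    have h0 : 0 < min 1 (ε / (2 * (4 * Cb + 4))) := by positivity
    obtain ⟨N, hN⟩ := eventually_atTop.1 (hs _ h0 (min_le_left _ _))
    refine ⟨N, fun n hn => ?_⟩
    rw [Real.dist_eq]
    refine (hN n hn.le).trans_lt ?_
    calc _ ≤ (4 * Cb + 4) * (ε / (2 * (4 * Cb + 4))) := by gcongr; exact min_le_right _ _
      _ = ε / 2 := by field_simp
      _ < ε := by linarith
  intro ε hε hε1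
  obtain ⟨R, hR, hμR, htight⟩ := h.tight hε hε1
  -- cut `g` off outside a large interval
  set k : ℝ → ℝ := fun x => chi R x * g x with hkdef
  have hkc : Continuous k := (chi_cont R).mul (hg.comp Complex.continuous_ofReal)
  have hkb : ∀ x, |k x| ≤ Cb := fun x => by
    rw [hkdef]; simp only
    rw [abs_mul, abs_of_nonneg (chi_mem R x).1]
    calc _ ≤ 1 * Cb := by
          gcongr
          · exact (chi_mem R x).2
          · exact hgb _
      _ = Cb := one_mul _
  have hk0 : ∀ x, R + 1 ≤ |x| → k x = 0 := fun x hx => by simp [hkdef, chi_zero hx]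
  have hkg : ∀ x : ℝ, |x| ≤ R → k x = g x := fun x hx => by simp [hkdef, chi_one hx]
  have hku : UniformContinuous k := HasCompactSupport.uniformContinuous_of_continuous
    (HasCompactSupport.intro (isCompact_Icc (a := -(R+1)) (b := R+1)) fun x hx => hk0 x (by
      by_contra! hlt
      exact hx ⟨(abs_lt.1 hlt).1.le, (abs_lt.1 hlt).2.le⟩)) hkc
  obtain ⟨s0, hs0, hSm⟩ := Sm_lim hkb hku hε
  have hgu := (isCompact_closedBall (0:ℂ) R).uniformContinuousOn_of_continuous hg.continuousOn
  obtain ⟨δ0, hδ0, hgu⟩ := Metric.uniformContinuousOn_iff.1 hgu ε hε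
  -- the smoothing scale exceeds the height of the good points
  set y := s0 / 2 with hy
  have hy0 : 0 < y := by positivity
  set δ := min (y / 2) δ0 with hδ
  have hδp : 0 < δ := by positivity
  have hHr : ∀ u : ℝ, |HH k y u - k u| ≤ ε := fun u => by
    rw [HH_eq k (by simpa using hy0.ne')]
    simp only [ofReal_im, sub_zero, ofReal_re]
    rw [abs_of_pos hy0, div_self hy0.ne', one_mul]
    exact hSm y hy0 (by linarith) u
  have hintg1 : Integrable (fun u : ℝ => HH k y u) μ := by
    refine (integrable_const Cb).mono' ?_ (Eventually.of_forall fun u => HH_le hkb y u)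
    have hI : Integrable k := hkc.integrable_of_hasCompactSupport
      (HasCompactSupport.intro (isCompact_Icc (a := -(R+1)) (b := R+1)) fun x hx => hk0 x (by
        by_contra! hlt
        exact hx ⟨(abs_lt.1 hlt).1.le, (abs_lt.1 hlt).2.le⟩))
    have hm : StronglyMeasurable (Function.uncurry fun (u x : ℝ) =>
        k x * (1 / ((x : ℂ) + y * I - u)).im) := by
      refine Measurable.stronglyMeasurable ?_
      have := hkc.measurable
      fun_prop
    exact ((hm.integral_prod_right (ν := volume)).neg.measurable.div_const _).aestronglyMeasurable
  have hintg2 : Integrable k μ := (integrable_const Cb).mono' hkc.aestronglyMeasurable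
    (Eventually.of_forall hkb)
  have hintg3 : Integrable (fun x : ℝ => g x) μ := (integrable_const Cb).mono'
    (hg.comp Complex.continuous_ofReal).aestronglyMeasurable (Eventually.of_forall fun x => hgb x)
  have hI1 : |(∫ u : ℝ, HH k y u ∂μ) - ∫ u, k u ∂μ| ≤ ε := by
    rw [← integral_sub hintg1 hintg2]
    have := norm_integral_le_of_norm_le (integrable_const ε) (μ := μ)
      (f := fun u : ℝ => HH k y u - k u)
      (Eventually.of_forall fun u => by simpa [Real.norm_eq_abs] using hHr u)
    simpa using this
  have hI2 : |(∫ u, k u ∂μ) - ∫ x : ℝ, g x ∂μ| ≤ 2 * Cb * ε := by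
    rw [← integral_sub hintg2 hintg3]
    have hms : MeasurableSet {x : ℝ | R < |x|} := measurableSet_lt measurable_const measurable_norm
    have := norm_integral_le_of_norm_le ((integrable_const (2 * Cb)).indicator hms) (μ := μ)
      (f := fun x : ℝ => k x - g x) (Eventually.of_forall fun x => by
        by_cases hx : R < |x|
        · rw [Set.indicator_of_mem (by exact hx)]
          have h1 := abs_sub (k x) (g x)
          have := hkb x; have := hgb x
          rw [Real.norm_eq_abs]; linarith
        · rw [Set.indicator_of_notMem (by exact hx), hkg x (not_lt.1 hx)]; simp)
    rw [integral_indicator hms, setIntegral_const, smul_eq_mul] at this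
    refine this.trans ?_
    rw [mul_comm]; gcongr
  filter_upwards [htight, h.near R hδp, h.HH_lim hkc hkb (by linarith) hk0 hy0 hε,
    eventually_ge_atTop 1] with n hbad hgood hlim hn1
  have hn0 : (0:ℝ) < n := by exact_mod_cast hn1
  have hpt : ∀ t ∈ s n, |g t - HH k y t| ≤ 2 * ε + 2 * Cb * (if R < ‖t‖ then 1 else 0) := by
    intro t ht
    by_cases hb : R < ‖t‖
    · rw [if_pos hb]
      have h1 := abs_sub (g t) (HH k y t)
      have := HH_le hkb y t; have := hgb t
      linarith
    · rw [if_neg hb]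
      have him := (hgood t ht).resolve_left hb
      have hb' := not_lt.1 hb
      have h1 : y / 2 ≤ y - t.im := by
        have := (abs_lt.1 him).2
        have := min_le_left (y / 2) δ0
        linarith
      have h2 : y - t.im ≤ s0 := by
        have := (abs_lt.1 him).1
        have := min_le_left (y / 2) δ0
        linarith
      have h3 : 0 < y - t.im := by linarith
      have h4 : |HH k y t - k t.re| ≤ ε := by
        rw [HH_eq k h3.ne', abs_of_pos h3, div_self h3.ne', one_mul]
        exact hSm _ h3 h2 _
      have hre : |t.re| ≤ R := (Complex.abs_re_le_norm t).trans hb'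
      rw [hkg _ hre] at h4
      have h5 := hgu t (by simpa using hb') (t.re : ℂ) (by simpa using hre) (by
        rw [dist_eq_norm]
        have : t - (t.re : ℂ) = t.im * I := by apply Complex.ext <;> simp
        rw [this]
        simp only [norm_mul, norm_real, norm_I, mul_one, Real.norm_eq_abs]
        exact him.trans_le (min_le_right _ _))
      rw [Real.dist_eq] at h5
      have h6 := abs_sub_le (g t) (g t.re) (HH k y t)
      rw [abs_sub_comm (g t.re)] at h6
      linarith
  have hsum : |((s n).map g).sum / n - ((s n).map (HH k y)).sum / n| ≤ 2 * ε + 2 * Cb * ε := by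
    rw [← sub_div, ← Multiset.sum_map_sub, abs_div, abs_of_pos hn0, div_le_iff₀ hn0]
    have hu := ms_le (s n) (fun t => g t - HH k y t) (2 * ε) (2 * Cb) (fun t => R < ‖t‖)
      (fun t ht => (le_abs_self _).trans (hpt t ht))
    have hl := ms_le (s n) (fun t => -(g t - HH k y t)) (2 * ε) (2 * Cb) (fun t => R < ‖t‖)
      (fun t ht => (neg_le_abs _).trans (hpt t ht))
    have hneg : ((s n).map fun t => -(g t - HH k y t)).sum =
        -((s n).map fun t => g t - HH k y t).sum := Multiset.sum_map_neg
    rw [hneg, h.card] at hl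
    rw [h.card] at hu
    have hbd : 2 * ε * n + 2 * Cb * (((s n).filter fun t => R < ‖t‖).card : ℝ) ≤
        (2 * ε + 2 * Cb * ε) * n := by
      have : 2 * Cb * (((s n).filter fun t => R < ‖t‖).card : ℝ) ≤ 2 * Cb * (ε * n) := by gcongr
      linarith
    exact abs_le.2 ⟨by linarith, by linarith⟩
  have t1 := abs_sub_le (((s n).map g).sum / n) (((s n).map (HH k y)).sum / n) (∫ x : ℝ, g x ∂μ)
  have t2 := abs_sub_le (((s n).map (HH k y)).sum / n) (∫ u : ℝ, HH k y u ∂μ) (∫ x : ℝ, g x ∂μ)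
  have t3 := abs_sub_le (∫ u : ℝ, HH k y u ∂μ) (∫ u, k u ∂μ) (∫ x : ℝ, g x ∂μ)
  linarith
end

/-! ### The free stable limit -/

/-- Translating the measure translates its Cauchy transform. -/
theorem cauchyG_map_add (ν : Measure ℝ) (E : ℝ) (z : ℂ) :
    cauchyG (ν.map fun x => x + E) z = cauchyG ν (z - E) := by
  unfold cauchyG
  rw [integral_map (φ := fun x : ℝ => x + E) (measurable_id.add_const E).aemeasurable]
  · refine integral_congr_ae (Eventually.of_forall fun x => ?_)
    simp only [ofReal_add]
    rw [sub_sub, add_comm (E : ℂ)]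
  · refine Measurable.aestronglyMeasurable ?_
    fun_prop

/-- Locally uniform convergence of the logarithmic derivatives `p_n'/(n p_n)` to a Cauchy transform
is convergence of the Stieltjes transforms of the root multisets. -/
theorem WC.of_nq {p : ℕ → ℂ[X]} {μ : Measure ℝ} (hdeg : ∀ n, (p n).natDegree = n)
    (hcj : ∀ n z, (p n).eval z = 0 → (p n).eval ((starRingEnd ℂ) z) = 0)
    (hconv : ∀ K : Set ℂ, IsCompact K → (∀ z ∈ K, 0 < z.im) → ∀ ε > 0, ∀ᶠ n : ℕ in atTop, ∀ z ∈ K,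
      (p n).eval z ≠ 0 ∧ ‖nq n (p n) z - cauchyG μ z‖ ≤ ε) :
    WC (fun n => (p n).roots) μ where
  card n := by
    rw [Polynomial.splits_iff_card_roots.1 (IsAlgClosed.splits (p n)), hdeg]
  conj n t ht := by
    have h0 := (mem_roots'.1 ht)
    exact mem_roots'.2 ⟨h0.1, hcj n t h0.2⟩
  conv K hK hKi ε hε := by
    filter_upwards [hconv K hK hKi ε hε] with n hn z hz
    obtain ⟨h1, h2⟩ := hn z hz
    refine ⟨fun hm => h1 (mem_roots'.1 hm).2, ?_⟩
    rw [← Polynomial.Splits.eval_derivative_div_eval_of_ne_zero (IsAlgClosed.splits (p n)) h1]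
    have : (1 / (n : ℂ)) * ((p n).derivative.eval z / (p n).eval z) = nq n (p n) z := by
      rw [nq, div_mul_div_comm, one_mul]
    rw [this]
    exact h2

/-- **Free stable limits.** Let `f` be of strip type with `m = 0`, `σ = 0`, infinitely many
nonzero `α_j`, `n_f` regularly varying of index `α ∈ (0,2)` and `n_{f,+}/n_f → θ`. With
`b_n = inf{b > 0 : n_f(b) ≥ n}`, `E_n → E`,
`a_n = E_n − c·b_n/n + (1/n)·∑_j (b_nα_j)³/(1+(b_nα_j)²)` and
`f_n(z) = e^{−a_n z}·f(b_n z/n)`, the empirical root distributions of `A_{n,f_n}` converge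
weakly to the translate by `E` of the free infinitely divisible measure `ν` with Lévy pair
`(0, Σ_{α,θ})` (the free `α`-stable law). -/
theorem appell_free_stable_limit
    (M : ℝ) (hM : 0 ≤ M) (f : ℂ → ℂ) (hf : Differentiable ℂ f)
    (C c : ℝ) (α : ℕ → ℂ)
    (hC : C ≠ 0)
    (hconj : ∃ e : Equiv.Perm ℕ, ∀ j, α (e j) = (starRingEnd ℂ) (α j))
    (hsum : Summable fun j => ‖α j‖ ^ 2)
    (him : ∀ j, α j ≠ 0 → |(1 / α j).im| ≤ M)
    (hfeq : TendstoLocallyUniformly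
      (fun (N : ℕ) (z : ℂ) => (C : ℂ) * Complex.exp (-(c : ℂ) * z) *
          ∏ j ∈ Finset.range N, ((1 - α j * z) * Complex.exp (α j * z)))
      f atTop)
    (hinf : {j : ℕ | α j ≠ 0}.Infinite)
    (a θ : ℝ) (ha0 : 0 < a) (ha2 : a < 2) (hθ0 : 0 ≤ θ) (hθ1 : θ ≤ 1)
    (hreg : ∀ x : ℝ, 0 < x →
      Tendsto (fun r : ℝ => (nfAll α (x * r) : ℝ) / (nfAll α r : ℝ)) atTop (𝓝 (x ^ a)))
    (hθ : Tendsto (fun r : ℝ => (nfPlus α r : ℝ) / (nfAll α r : ℝ)) atTop (𝓝 θ))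
    (E : ℝ) (En : ℕ → ℝ) (hEn : Tendsto En atTop (𝓝 E))
    (ν : Measure ℝ) [IsProbabilityMeasure ν]
    (hν : ∀ z : ℂ, 0 < z.im →
      Rtrans 0 (stableLevy a θ) (cauchyG ν z) + 1 / cauchyG ν z = z)
    (g : ℂ → ℝ) (hg : Continuous g) (hgb : ∃ Cb : ℝ, ∀ x : ℂ, |g x| ≤ Cb) :
    Tendsto (fun n : ℕ =>
        (((appell
            (fun z : ℂ =>
              Complex.exp (-((En n : ℂ) - (c : ℂ) * (bseq α n : ℂ) / (n : ℂ) +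
                  (1 / (n : ℂ)) * ∑' j : ℕ,
                    ((bseq α n : ℂ) * α j) ^ 3 / (1 + ((bseq α n : ℂ) * α j) ^ 2)) * z) *
                f ((bseq α n : ℂ) * z / (n : ℂ)))
            n).roots.map g).sum) /
          ((appell
            (fun z : ℂ =>
              Complex.exp (-((En n : ℂ) - (c : ℂ) * (bseq α n : ℂ) / (n : ℂ) +
                  (1 / (n : ℂ)) * ∑' j : ℕ,
                    ((bseq α n : ℂ) * α j) ^ 3 / (1 + ((bseq α n : ℂ) * α j) ^ 2)) * z) *
                f ((bseq α n : ℂ) * z / (n : ℂ)))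
            n).natDegree : ℝ))
      atTop (𝓝 (∫ x : ℝ, g (((x + E : ℝ) : ℂ)) ∂ν)) := by
  obtain ⟨Cb, hCb⟩ := hgb
  have h : SD α M a θ := ⟨hM, hconj, hsum, him, hinf, ha0, ha2, hθ0, hθ1, hreg, hθ⟩
  have : IsProbabilityMeasure (ν.map fun x => x + E) :=
    Measure.isProbabilityMeasure_map (measurable_id.add_const E).aemeasurable
  obtain ⟨hdeg, hcj, hconv⟩ := h.appell_nq hC hfeq hf.continuous hEn
    (G := cauchyG (ν.map fun x => x + E)) (fun z hz => cauchyG_im_neg hz)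
    (fun z hz => cauchyG_norm hz) (fun z hz => by
      rw [cauchyG_map_add]
      exact hν (z - E) (by simpa using hz))
  have hw := (WC.of_nq hdeg hcj hconv).weak hg hCb
  rw [integral_map (φ := fun x : ℝ => x + E) (f := fun x : ℝ => g x)
    (measurable_id.add_const E).aemeasurable (hg.comp Complex.continuous_ofReal).aestronglyMeasurable] at hw
  refine hw.congr fun n => ?_
  have hd := hdeg n
  unfold fsc at hd
  unfold fsc
  rw [hd]
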